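/- arXiv:1012.2793 — 2 statements merged into one kernel-verified Lean document; each statement's English description precedes it below -/
import Mathlib

section
/- There exist real constants δ > 0 and c > 0 such that for every prime p and every subset A of SL₂(𝔽_p) that generates SL₂(𝔽_p) as a group, the triple product set A·A·A = {abc : a, b, c ∈ A} satisfies |A·A·A| ≥ c · min(|SL₂(𝔽_p)|, |A|^{1+δ}). -/
open scoped Pointwise

/-
Suppose `|A³| ≤ K |A|`, and let `S` be the symmetrization of `A` with `1` adjoined, so that `S`
grows by a factor polynomial in `K` under a bounded number of products.

An element of `SL₂` is determined, up to two choices, by its trace and the traces of its products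
with two elements in general position, so the number `τ` of traces occurring in a power of `S`
satisfies `|S| ≪ τ³`. Conversely, a conjugacy class meeting `S` in few points leaves many elements
in the centralizer torus of one of its members `h` (orbit-stabilizer). For a set `C` in a torus and
generic `a`, `b`, the map `(x, y, z) ↦ x a y b z` on `C³` has bounded fibres, so `|C|³ ≪ |S¹⁰|`.
Together these force every torus containing one regular element of a small power of `S` to contain
about `|S|^(1/3)` elements of `S²`. This property propagates from a torus to its conjugates by
elements of `S`, hence to all conjugates, and counting over all of them gives `|SL₂(F)| ≪ |S|` up to
powers of `K`, unless `|S|` is itself bounded by a power of `K`.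

In the remaining dense range, Gowers' quasirandomness applies: nontrivial complex representations of
`SL₂(F)` have dimension at least about `|F| / 2`, so either `|A A| ≥ |SL₂(F)| / 2`, or `|F|`, and
with it `|A| ≤ |F|⁴`, is bounded by a power of `K`.
-/

open scoped MatrixGroups Finset

namespace Helfgott

section Group

variable {G : Type*} [Group G]

lemma exists_mem_notMem_of_closure_eq_top {S : Set G} (hS : Subgroup.closure S = ⊤)
    {H : Subgroup G} (hH : H ≠ ⊤) : ∃ g ∈ S, g ∉ H := by
  by_contra! h
  exact hH (top_le_iff.1 (hS ▸ (Subgroup.closure_le H).2 h))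

lemma exists_mem_mul_notMem_notMem_of_closure_eq_top {S : Set G} (hS : Subgroup.closure S = ⊤)
    (h1 : 1 ∈ S) {H K : Subgroup G} (hH : H ≠ ⊤) (hK : K ≠ ⊤) :
    ∃ g ∈ S * S, g ∉ H ∧ g ∉ K := by
  obtain ⟨s, hs, hsH⟩ := exists_mem_notMem_of_closure_eq_top hS hH
  obtain ⟨t, ht, htK⟩ := exists_mem_notMem_of_closure_eq_top hS hK
  by_cases hsK : s ∈ K
  · by_cases htH : t ∈ H
    · exact ⟨s * t, Set.mul_mem_mul hs ht, fun h ↦ hsH ((H.mul_mem_cancel_right htH).1 h),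
        fun h ↦ htK ((K.mul_mem_cancel_left hsK).1 h)⟩
    · exact ⟨t, ⟨t, ht, 1, h1, mul_one t⟩, htH, htK⟩
  · exact ⟨s, ⟨s, hs, 1, h1, mul_one s⟩, hsH, hsK⟩

variable [DecidableEq G]

lemma card_filter_conj_eq_le (S : Finset G) (h b : G) :
    #{s ∈ S | s * h * s⁻¹ = b} ≤ #{y ∈ S⁻¹ * S | y * h = h * y} := by
  rcases Finset.eq_empty_or_nonempty {s ∈ S | s * h * s⁻¹ = b} with hE | ⟨t, ht⟩
  · simp [hE]
  obtain ⟨htS, htb⟩ := Finset.mem_filter.1 ht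
  refine Finset.card_le_card_of_injOn (t⁻¹ * ·) (fun s hs ↦ ?_) (mul_right_injective _).injOn
  obtain ⟨hsS, hsb⟩ := Finset.mem_filter.1 hs
  refine Finset.mem_filter.2 ⟨Finset.mul_mem_mul (Finset.inv_mem_inv htS) hsS, ?_⟩
  calc t⁻¹ * s * h = t⁻¹ * (s * h * s⁻¹) * s := by group
    _ = t⁻¹ * (t * h * t⁻¹) * s := by rw [hsb, htb]
    _ = h * (t⁻¹ * s) := by group

lemma card_le_card_filter_commute_mul_card {S T : Finset G} {h : G}
    (hT : ∀ s ∈ S, s * h * s⁻¹ ∈ T) :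
    #S ≤ #{y ∈ S⁻¹ * S | y * h = h * y} * #T :=
  Finset.card_le_mul_card_image_of_maps_to hT _ fun b _ ↦ card_filter_conj_eq_le S h b

lemma card_pow_union_inv_le {A : Finset G} {K : ℝ} (hA : #(A ^ 3) ≤ K * #A) {m : ℕ} (hm : 3 ≤ m) :
    #((A ∪ A⁻¹) ^ m) ≤ 2 ^ m * K ^ (3 * (m - 2)) * #A := by
  let sign (b : Bool) : ℤ := if b then 1 else -1
  let word (ε : Fin m → Bool) : Finset G := ((List.finRange m).map fun i ↦ A ^ sign (ε i)).prod
  have hcover : (A ∪ A⁻¹) ^ m ⊆ Finset.univ.biUnion word := by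
    intro x hx
    obtain ⟨f, rfl⟩ := Finset.mem_pow.1 hx
    have hf : ∀ i, ∃ b, (f i : G) ∈ A ^ sign b := by
      intro i
      rcases Finset.mem_union.1 (f i).2 with h | h
      · exact ⟨true, by simpa [sign] using h⟩
      · exact ⟨false, by simpa [sign] using h⟩
    choose ε hε using hf
    refine Finset.mem_biUnion.2 ⟨ε, Finset.mem_univ _, ?_⟩
    simp only [word, ← List.ofFn_eq_map]
    exact Finset.mem_prod_list_ofFn.2 ⟨fun i ↦ ⟨f i, hε i⟩, rfl⟩
  have hword (ε : Fin m → Bool) : (#(word ε) : ℝ) ≤ K ^ (3 * (m - 2)) * #A :=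
    Finset.small_alternating_pow_of_small_tripling hm hA _ fun i ↦ by
      cases ε i <;> simp [sign]
  calc (#((A ∪ A⁻¹) ^ m) : ℝ) ≤ ∑ ε, (#(word ε) : ℝ) := by
        exact_mod_cast (Finset.card_le_card hcover).trans Finset.card_biUnion_le
    _ ≤ ∑ _ : Fin m → Bool, K ^ (3 * (m - 2)) * #A := Finset.sum_le_sum fun ε _ ↦ hword ε
    _ = 2 ^ m * K ^ (3 * (m - 2)) * #A := by simp [mul_assoc]

lemma exists_mem_pow_of_mem_insert_one_pow {B : Finset G} {n : ℕ} {x : G}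
    (hx : x ∈ (insert 1 B) ^ n) : ∃ k ≤ n, x ∈ B ^ k := by
  induction n generalizing x with
  | zero => exact ⟨0, le_rfl, hx⟩
  | succ n ih =>
    rw [pow_succ] at hx
    obtain ⟨y, hy, b, hb, rfl⟩ := Finset.mem_mul.1 hx
    obtain ⟨k, hk, hyk⟩ := ih hy
    rcases Finset.mem_insert.1 hb with rfl | hb
    · exact ⟨k, hk.trans n.le_succ, by rwa [mul_one]⟩
    · exact ⟨k + 1, Nat.succ_le_succ hk, by rw [pow_succ]; exact Finset.mul_mem_mul hyk hb⟩

lemma card_insert_one_pow_le {B : Finset G} (hB : B.Nonempty) (n : ℕ) :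
    #((insert 1 B) ^ n) ≤ (n + 1) * #(B ^ n) := by
  have hcover : (insert 1 B) ^ n ⊆ (Finset.range (n + 1)).biUnion (B ^ ·) := fun x hx ↦ by
    obtain ⟨k, hk, hxk⟩ := exists_mem_pow_of_mem_insert_one_pow hx
    exact Finset.mem_biUnion.2 ⟨k, Finset.mem_range_succ_iff.2 hk, hxk⟩
  have hmono (k : ℕ) (hk : k ∈ Finset.range (n + 1)) : #(B ^ k) ≤ #(B ^ n) := by
    rw [← Nat.sub_add_cancel (Finset.mem_range_succ_iff.1 hk), pow_add]
    exact Finset.card_le_card_mul_left hB.pow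
  calc #((insert 1 B) ^ n) ≤ ∑ k ∈ Finset.range (n + 1), #(B ^ k) :=
        (Finset.card_le_card hcover).trans Finset.card_biUnion_le
    _ ≤ ∑ _ ∈ Finset.range (n + 1), #(B ^ n) := Finset.sum_le_sum hmono
    _ = (n + 1) * #(B ^ n) := by simp

end Group

section Roots

open Polynomial

variable {K ι : Type*} [Field K] {s : Finset ι} {f : ι → K}

lemma card_le_natDegree_of_injOn {p : K[X]} (hp : p ≠ 0) (hf : Set.InjOn f s)
    (h : ∀ i ∈ s, p.IsRoot (f i)) : #s ≤ p.natDegree := by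
  classical
  rw [← Finset.card_image_of_injOn hf]
  refine card_le_degree_of_subset_roots fun x hx ↦ ?_
  obtain ⟨i, hi, rfl⟩ := Finset.mem_image.1 hx
  exact (mem_roots hp).2 (h i hi)

lemma card_le_two_of_quadratic (hf : Set.InjOn f s) {a b c : K} (ha : a ≠ 0)
    (h : ∀ i ∈ s, a * f i ^ 2 + b * f i + c = 0) : #s ≤ 2 := by
  have hd : (C a * X ^ 2 + C b * X + C c).natDegree = 2 := natDegree_quadratic ha
  rw [← hd]
  refine card_le_natDegree_of_injOn (ne_zero_of_natDegree_gt (hd.symm ▸ two_pos)) hf fun i hi ↦ ?_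
  simpa [IsRoot] using h i hi

lemma card_le_four_of_biquadratic (hf : Set.InjOn f s) {a b c : K} (ha : a ≠ 0)
    (h : ∀ i ∈ s, a * f i ^ 4 + b * f i ^ 2 + c = 0) : #s ≤ 4 := by
  have hd : (C a * X ^ 4 + C b * X ^ 2 + C c).natDegree = 4 := by compute_degree!
  rw [← hd]
  refine card_le_natDegree_of_injOn (ne_zero_of_natDegree_gt (hd.symm ▸ four_pos)) hf fun i hi ↦ ?_
  simpa [IsRoot] using h i hi

end Roots

section Trace

variable {F : Type*} [Field F]

lemma mul_apply_eq (g h : SL(2, F)) (i j : Fin 2) :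
    (g * h) i j = g i 0 * h 0 j + g i 1 * h 1 j := by
  rw [Matrix.SpecialLinearGroup.coe_mul, Matrix.mul_apply, Fin.sum_univ_two]

lemma apply_mul_apply_sub (g : SL(2, F)) : g 0 0 * g 1 1 - g 0 1 * g 1 0 = 1 := by
  rw [← Matrix.det_fin_two, g.det_coe]

/-- The trace of an element of `SL₂`. -/
def tr (g : SL(2, F)) : F := g.1.trace

lemma tr_eq (g : SL(2, F)) : tr g = g 0 0 + g 1 1 := Matrix.trace_fin_two _

lemma tr_mul_comm (g h : SL(2, F)) : tr (g * h) = tr (h * g) := Matrix.trace_mul_comm _ _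

lemma tr_conj (g h : SL(2, F)) : tr (g * h * g⁻¹) = tr h := by
  rw [tr_mul_comm, inv_mul_cancel_left]

/-- The determinant of the additive commutator of `a` and `b`. It vanishes exactly when `a` and `b`
have a common eigenvector over the algebraic closure, so it measures the irreducibility of the
pair. -/
def commDet (a b : SL(2, F)) : F := (a.1 * b.1 - b.1 * a.1).det

lemma eq_smul_commutator_of_trace_eq_zero {a b y : Matrix (Fin 2) (Fin 2) F}
    (hab : (a * b - b * a).det ≠ 0) (hy : y.trace = 0) (hay : (a * y).trace = 0)
    (hby : (b * y).trace = 0) : ∃ s : F, y = s • (a * b - b * a) := by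
  set n := a * b - b * a with hn
  simp only [Matrix.trace_fin_two, Matrix.mul_apply, Fin.sum_univ_two] at hy hay hby
  have hy₁₁ : y 1 1 = -y 0 0 := by linear_combination hy
  have h₀₀ : n 0 0 = a 0 1 * b 1 0 - b 0 1 * a 1 0 := by
    simp only [hn, Matrix.sub_apply, Matrix.mul_apply, Fin.sum_univ_two]; ring
  have h₀₁ : n 0 1 = (a 0 0 - a 1 1) * b 0 1 - (b 0 0 - b 1 1) * a 0 1 := by
    simp only [hn, Matrix.sub_apply, Matrix.mul_apply, Fin.sum_univ_two]; ring
  have h₁₀ : n 1 0 = (b 0 0 - b 1 1) * a 1 0 - (a 0 0 - a 1 1) * b 1 0 := by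
    simp only [hn, Matrix.sub_apply, Matrix.mul_apply, Fin.sum_univ_two]; ring
  have h₁₁ : n 1 1 = -n 0 0 := by
    simp only [hn, Matrix.sub_apply, Matrix.mul_apply, Fin.sum_univ_two]; ring
  rw [hy₁₁] at hay hby
  -- `y` and `n` are both orthogonal to `1`, `a`, `b` for the trace form, hence proportional.
  have c₁ : y 0 0 * n 0 1 = y 0 1 * n 0 0 := by
    rw [h₀₀, h₀₁]; linear_combination b 0 1 * hay - a 0 1 * hby
  have c₂ : y 0 0 * n 1 0 = y 1 0 * n 0 0 := by
    rw [h₀₀, h₁₀]; linear_combination a 1 0 * hby - b 1 0 * hay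
  have c₃ : y 0 1 * n 1 0 = y 1 0 * n 0 1 := by
    rw [h₀₁, h₁₀]; linear_combination (b 0 0 - b 1 1) * hay - (a 0 0 - a 1 1) * hby
  have hdet : n.det = -(n 0 0 ^ 2 + n 0 1 * n 1 0) := by rw [Matrix.det_fin_two, h₁₁]; ring
  refine ⟨-(y 0 0 * n 0 0 + y 0 1 * n 1 0) / n.det, ?_⟩
  ext i j
  rw [Matrix.smul_apply, smul_eq_mul, div_mul_eq_mul_div, eq_div_iff hab, hdet]
  fin_cases i <;> fin_cases j
  · change y 0 0 * _ = _ * n 0 0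
    linear_combination (-n 1 0) * c₁
  · change y 0 1 * _ = _ * n 0 1
    linear_combination n 0 0 * c₁
  · change y 1 0 * _ = _ * n 1 0
    linear_combination n 0 0 * c₂ + n 1 0 * c₃
  · change y 1 1 * _ = _ * n 1 1
    rw [hy₁₁, h₁₁]
    linear_combination n 1 0 * c₁

/-- Two elements with the same three traces differ by a multiple of the commutator matrix `n` of `a`
and `b`, and `det (x + s • n) = 1` is quadratic in `s` with leading coefficient `det n`. -/
lemma card_filter_three_traces_le_two [DecidableEq F] {a b : SL(2, F)} (hab : commDet a b ≠ 0)
    (X : Finset SL(2, F)) (t u v : F) :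
    #{x ∈ X | tr x = t ∧ tr (a * x) = u ∧ tr (b * x) = v} ≤ 2 := by
  set T := {x ∈ X | tr x = t ∧ tr (a * x) = u ∧ tr (b * x) = v} with hT
  rcases T.eq_empty_or_nonempty with hE | ⟨x₀, hx₀⟩
  · simp [hE]
  have hline : ∀ x ∈ T, ∃ s : F, x.1 = x₀.1 + s • (a.1 * b.1 - b.1 * a.1) := by
    intro x hx
    obtain ⟨-, h₁, h₂, h₃⟩ := Finset.mem_filter.1 hx
    obtain ⟨-, k₁, k₂, k₃⟩ := Finset.mem_filter.1 hx₀
    obtain ⟨s, hs⟩ := eq_smul_commutator_of_trace_eq_zero (y := x.1 - x₀.1) hab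
      (by rw [Matrix.trace_sub, sub_eq_zero]; exact h₁.trans k₁.symm)
      (by rw [mul_sub, Matrix.trace_sub, sub_eq_zero]; exact h₂.trans k₂.symm)
      (by rw [mul_sub, Matrix.trace_sub, sub_eq_zero]; exact h₃.trans k₃.symm)
    exact ⟨s, by rw [← hs, add_sub_cancel]⟩
  choose! s hs using hline
  have hinj : Set.InjOn s T := fun x hx y hy h ↦
    Subtype.ext ((hs x hx).trans (h ▸ (hs y hy).symm))
  obtain ⟨n, hn⟩ : ∃ n, n = a.1 * b.1 - b.1 * a.1 := ⟨_, rfl⟩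
  rw [commDet, ← hn] at hab
  refine card_le_two_of_quadratic (b := x₀ 0 0 * n 1 1 + x₀ 1 1 * n 0 0 - x₀ 0 1 * n 1 0
    - x₀ 1 0 * n 0 1) (c := 0) hinj hab fun x hx ↦ ?_
  have hdet : (x₀.1 + s x • n).det = 1 := by rw [hn, ← hs x hx, x.det_coe]
  rw [Matrix.det_fin_two] at hdet ⊢
  simp only [Matrix.add_apply, Matrix.smul_apply, smul_eq_mul] at hdet
  linear_combination hdet - apply_mul_apply_sub x₀

lemma card_filter_tr_le [DecidableEq F] {a b : SL(2, F)} (hab : commDet a b ≠ 0)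
    {X Y : Finset SL(2, F)} (ha : ∀ x ∈ X, a * x ∈ Y) (hb : ∀ x ∈ X, b * x ∈ Y) (t : F) :
    #{x ∈ X | tr x = t} ≤ 2 * #(Y.image tr) ^ 2 := by
  rw [sq, ← Finset.card_product]
  refine Finset.card_le_mul_card_image_of_maps_to (f := fun x ↦ (tr (a * x), tr (b * x)))
    (fun x hx ↦ ?_) 2 fun ⟨u, v⟩ _ ↦ ?_
  · have hxX := (Finset.mem_filter.1 hx).1
    exact Finset.mem_product.2 ⟨Finset.mem_image_of_mem _ (ha x hxX),
      Finset.mem_image_of_mem _ (hb x hxX)⟩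
  · simpa only [Finset.filter_filter, Prod.mk.injEq] using
      card_filter_three_traces_le_two hab X t u v

lemma card_le_two_mul_card_image_tr_pow_three [DecidableEq F] {a b : SL(2, F)}
    (hab : commDet a b ≠ 0) {X Y : Finset SL(2, F)} (hXY : X ⊆ Y) (ha : ∀ x ∈ X, a * x ∈ Y)
    (hb : ∀ x ∈ X, b * x ∈ Y) : #X ≤ 2 * #(Y.image tr) ^ 3 :=
  calc #X ≤ 2 * #(Y.image tr) ^ 2 * #(Y.image tr) :=
        Finset.card_le_mul_card_image_of_maps_to
          (fun _ hx ↦ Finset.mem_image_of_mem tr (hXY hx)) _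
          fun t _ ↦ card_filter_tr_le hab ha hb t
    _ = 2 * #(Y.image tr) ^ 3 := by ring

end Trace

section Torus

variable {K : Type*} [Field K]

lemma isDiag_iff {g : SL(2, K)} : g.1.IsDiag ↔ g 0 1 = 0 ∧ g 1 0 = 0 := by
  refine ⟨fun h ↦ ⟨h zero_ne_one, h one_ne_zero⟩, fun h i j hij ↦ ?_⟩
  fin_cases i <;> fin_cases j
  exacts [absurd rfl hij, h.1, h.2, absurd rfl hij]

lemma apply_mul_apply_of_isDiag {g : SL(2, K)} (hg : g.1.IsDiag) : g 0 0 * g 1 1 = 1 := by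
  have hdet := apply_mul_apply_sub g
  rwa [(isDiag_iff.1 hg).1, zero_mul, sub_zero] at hdet

lemma apply_zero_ne_zero_of_isDiag {g : SL(2, K)} (hg : g.1.IsDiag) : g 0 0 ≠ 0 :=
  left_ne_zero_of_mul_eq_one (apply_mul_apply_of_isDiag hg)

lemma injOn_apply_zero_of_isDiag {B : Set SL(2, K)} (hB : ∀ x ∈ B, x.1.IsDiag) :
    Set.InjOn (fun g : SL(2, K) ↦ g 0 0) B := by
  intro g hg h hh (e : g 0 0 = h 0 0)
  have hg' := isDiag_iff.1 (hB g hg)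
  have hh' := isDiag_iff.1 (hB h hh)
  have e₁ : g 1 1 = h 1 1 := mul_left_cancel₀ (apply_zero_ne_zero_of_isDiag (hB h hh)) <| by
    rw [apply_mul_apply_of_isDiag (hB h hh), ← e, apply_mul_apply_of_isDiag (hB g hg)]
  ext i j
  fin_cases i <;> fin_cases j
  exacts [e, hg'.1.trans hh'.1.symm, hg'.2.trans hh'.2.symm, e₁]

lemma mul_mul_apply_of_isDiag {x z : SL(2, K)} (hx : x.1.IsDiag) (hz : z.1.IsDiag)
    (m : SL(2, K)) (i j : Fin 2) : (x * m * z) i j = x i i * m i j * z j j := by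
  obtain ⟨hx₀, hx₁⟩ := isDiag_iff.1 hx
  obtain ⟨hz₀, hz₁⟩ := isDiag_iff.1 hz
  fin_cases i <;> fin_cases j <;> simp [mul_apply_eq, hx₀, hx₁, hz₀, hz₁]

lemma apply_mul_apply_mul_mul_of_isDiag {x z : SL(2, K)} (hx : x.1.IsDiag) (hz : z.1.IsDiag)
    (m : SL(2, K)) : (x * m * z) 0 0 * (x * m * z) 1 1 = m 0 0 * m 1 1 := by
  rw [mul_mul_apply_of_isDiag hx hz, mul_mul_apply_of_isDiag hx hz]
  linear_combination m 0 0 * m 1 1 * (z 0 0 * z 1 1 * apply_mul_apply_of_isDiag hx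
    + apply_mul_apply_of_isDiag hz)

lemma mul_mul_apply_of_isDiag_mid {y : SL(2, K)} (hy : y.1.IsDiag) (a b : SL(2, K))
    (i j : Fin 2) : (a * y * b) i j = a i 0 * b 0 j * y 0 0 + a i 1 * b 1 j * y 1 1 := by
  obtain ⟨hy₀, hy₁⟩ := isDiag_iff.1 hy
  simp only [mul_apply_eq, hy₀, hy₁]
  ring

variable [DecidableEq K] {B : Finset SL(2, K)} {a b : SL(2, K)}

lemma card_filter_mul_mul_apply_eq_zero_le (hB : ∀ x ∈ B, x.1.IsDiag) {i j : Fin 2}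
    (ha : a i 0 ≠ 0) (hb : b 0 j ≠ 0) : #{y ∈ B | (a * y * b) i j = 0} ≤ 2 := by
  refine card_le_two_of_quadratic (f := fun y : SL(2, K) ↦ y 0 0) (b := 0) (c := a i 1 * b 1 j)
    ((injOn_apply_zero_of_isDiag hB).mono (Finset.filter_subset _ _)) (mul_ne_zero ha hb)
    fun y hy ↦ ?_
  obtain ⟨hyB, h⟩ := Finset.mem_filter.1 hy
  rw [mul_mul_apply_of_isDiag_mid (hB y hyB)] at h
  linear_combination y 0 0 * h - a i 1 * b 1 j * apply_mul_apply_of_isDiag (hB y hyB)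

lemma card_filter_apply_mul_apply_eq_le (hB : ∀ x ∈ B, x.1.IsDiag) (ha₀ : a 0 0 ≠ 0)
    (ha₁ : a 1 0 ≠ 0) (hb₀ : b 0 0 ≠ 0) (hb₁ : b 0 1 ≠ 0) (r : K) :
    #{y ∈ B | (a * y * b) 0 0 * (a * y * b) 1 1 = r} ≤ 4 := by
  refine card_le_four_of_biquadratic (f := fun y : SL(2, K) ↦ y 0 0)
    (a := a 0 0 * b 0 0 * (a 1 0 * b 0 1))
    (b := a 0 0 * b 0 0 * (a 1 1 * b 1 1) + a 0 1 * b 1 0 * (a 1 0 * b 0 1) - r)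
    (c := a 0 1 * b 1 0 * (a 1 1 * b 1 1))
    ((injOn_apply_zero_of_isDiag hB).mono (Finset.filter_subset _ _))
    (mul_ne_zero (mul_ne_zero ha₀ hb₀) (mul_ne_zero ha₁ hb₁)) fun y hy ↦ ?_
  obtain ⟨hyB, h⟩ := Finset.mem_filter.1 hy
  rw [mul_mul_apply_of_isDiag_mid (hB y hyB), mul_mul_apply_of_isDiag_mid (hB y hyB)] at h
  have hinv : y 1 1 = (y 0 0)⁻¹ :=
    eq_inv_of_mul_eq_one_right (apply_mul_apply_of_isDiag (hB y hyB))
  have hy₀ := apply_zero_ne_zero_of_isDiag (hB y hyB)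
  rw [hinv] at h
  rw [← h]
  field_simp
  ring

lemma card_filter_mul_mul_eq_le (hB : ∀ x ∈ B, x.1.IsDiag) {m : SL(2, K)} (hm₀ : m 0 0 ≠ 0)
    (hm₁ : m 0 1 ≠ 0) (g : SL(2, K)) : #{p ∈ B ×ˢ B | p.1 * m * p.2 = g} ≤ 2 := by
  have hmem : ∀ p ∈ ({p ∈ B ×ˢ B | p.1 * m * p.2 = g} : Finset _),
      p.1 ∈ B ∧ p.2 ∈ B ∧ p.1 * m * p.2 = g := fun p hp ↦ by
    simpa only [Finset.mem_filter, Finset.mem_product, and_assoc] using hp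
  have hinj : Set.InjOn (fun p : SL(2, K) × SL(2, K) ↦ p.1 0 0)
      ({p ∈ B ×ˢ B | p.1 * m * p.2 = g} : Finset _) := fun p hp q hq e ↦ by
    obtain ⟨hp₁, -, hpg⟩ := hmem p hp
    obtain ⟨hq₁, -, hqg⟩ := hmem q hq
    have e₁ : p.1 = q.1 := injOn_apply_zero_of_isDiag hB hp₁ hq₁ e
    rw [← hqg, e₁] at hpg
    exact Prod.ext e₁ (mul_left_cancel hpg)
  refine card_le_two_of_quadratic (b := 0) (c := -(g 0 0 * g 0 1)) hinj (mul_ne_zero hm₀ hm₁)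
    fun p hp ↦ ?_
  obtain ⟨hp₁, hp₂, rfl⟩ := hmem p hp
  rw [mul_mul_apply_of_isDiag (hB _ hp₁) (hB _ hp₂), mul_mul_apply_of_isDiag (hB _ hp₁) (hB _ hp₂)]
  linear_combination (-(p.1 0 0) ^ 2 * m 0 0 * m 0 1) * apply_mul_apply_of_isDiag (hB _ hp₂)

lemma card_filter_mul_mul_mul_mul_eq_le (hB : ∀ x ∈ B, x.1.IsDiag) (ha₀ : a 0 0 ≠ 0)
    (ha₁ : a 1 0 ≠ 0) (hb₀ : b 0 0 ≠ 0) (hb₁ : b 0 1 ≠ 0) {C : Finset SL(2, K)} (hCB : C ⊆ B)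
    (hC : ∀ y ∈ C, (a * y * b) 0 0 ≠ 0 ∧ (a * y * b) 0 1 ≠ 0) (g : SL(2, K)) :
    #{w ∈ C ×ˢ (B ×ˢ B) | w.2.1 * (a * w.1 * b) * w.2.2 = g} ≤ 8 := by
  have hfst : ∀ w ∈ ({w ∈ C ×ˢ (B ×ˢ B) | w.2.1 * (a * w.1 * b) * w.2.2 = g} : Finset _),
      w.1 ∈ ({y ∈ C | (a * y * b) 0 0 * (a * y * b) 1 1 = g 0 0 * g 1 1} : Finset _) := by
    intro w hw
    simp only [Finset.mem_filter, Finset.mem_product] at hw ⊢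
    obtain ⟨⟨hC, hx, hz⟩, rfl⟩ := hw
    exact ⟨hC, (apply_mul_apply_mul_mul_of_isDiag (hB _ hx) (hB _ hz) _).symm⟩
  calc _ ≤ 2 * #{y ∈ C | (a * y * b) 0 0 * (a * y * b) 1 1 = g 0 0 * g 1 1} := by
        refine Finset.card_le_mul_card_image_of_maps_to hfst 2 fun y hy ↦ ?_
        obtain ⟨h₀, h₁⟩ := hC y (Finset.mem_filter.1 hy).1
        refine le_trans (Finset.card_le_card_of_injOn Prod.snd (fun w hw ↦ ?_)
          fun w hw w' hw' e ↦ ?_) (card_filter_mul_mul_eq_le hB h₀ h₁ g)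
        · simp only [Finset.coe_filter, Finset.mem_filter, Finset.mem_product,
            Set.mem_ofPred_eq] at hw ⊢
          obtain ⟨⟨⟨-, h⟩, hg⟩, rfl⟩ := hw
          exact ⟨h, hg⟩
        · exact Prod.ext ((Finset.mem_filter.1 hw).2.trans (Finset.mem_filter.1 hw').2.symm) e
    _ ≤ 2 * 4 := by
        gcongr
        exact card_filter_apply_mul_apply_eq_le (fun x hx ↦ hB x (hCB hx)) ha₀ ha₁ hb₀ hb₁ _

omit [DecidableEq K] in
lemma card_sub_four_mul_card_sq_le (hB : ∀ x ∈ B, x.1.IsDiag) (ha₀ : a 0 0 ≠ 0)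
    (ha₁ : a 1 0 ≠ 0) (hb₀ : b 0 0 ≠ 0) (hb₁ : b 0 1 ≠ 0) {Y : Finset SL(2, K)}
    (hY : ∀ x ∈ B, ∀ y ∈ B, ∀ z ∈ B, x * (a * y * b) * z ∈ Y) :
    (#B - 4) * (#B * #B) ≤ 8 * #Y := by
  classical
  obtain ⟨C, hC⟩ : ∃ C, C = {y ∈ B | (a * y * b) 0 0 ≠ 0 ∧ (a * y * b) 0 1 ≠ 0} := ⟨_, rfl⟩
  have hCB : C ⊆ B := hC ▸ Finset.filter_subset _ _
  have hcard : #B - 4 ≤ #C := by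
    have hsub : B ⊆ C ∪ ({y ∈ B | (a * y * b) 0 0 = 0} ∪ {y ∈ B | (a * y * b) 0 1 = 0}) := by
      intro y hy
      simp only [hC, Finset.mem_union, Finset.mem_filter]
      tauto
    have := (Finset.card_le_card hsub).trans (Finset.card_union_le _ _)
    have := Finset.card_union_le {y ∈ B | (a * y * b) 0 0 = 0} {y ∈ B | (a * y * b) 0 1 = 0}
    have := card_filter_mul_mul_apply_eq_zero_le hB ha₀ hb₀
    have := card_filter_mul_mul_apply_eq_zero_le hB ha₀ hb₁
    omega
  have hmaps : ∀ w ∈ C ×ˢ (B ×ˢ B), w.2.1 * (a * w.1 * b) * w.2.2 ∈ Y := fun w hw ↦ by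
    simp only [Finset.mem_product] at hw
    exact hY _ hw.2.1 _ (hCB hw.1) _ hw.2.2
  have hne : ∀ y ∈ C, (a * y * b) 0 0 ≠ 0 ∧ (a * y * b) 0 1 ≠ 0 := fun y hy ↦ by
    rw [hC] at hy
    exact (Finset.mem_filter.1 hy).2
  calc (#B - 4) * (#B * #B) ≤ #C * (#B * #B) := Nat.mul_le_mul_right _ hcard
    _ = #(C ×ˢ (B ×ˢ B)) := by rw [Finset.card_product, Finset.card_product]
    _ ≤ 8 * #Y := Finset.card_le_mul_card_image_of_maps_to hmaps 8 fun g _ ↦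
        card_filter_mul_mul_mul_mul_eq_le hB ha₀ ha₁ hb₀ hb₁ hCB hne g

end Torus

section Escape

variable {F : Type*} [Field F]

lemma commDet_eq_two_sub_tr (a b : SL(2, F)) : commDet a b = 2 - tr (a * b * a⁻¹ * b⁻¹) := by
  have hcomm : (a * b * a⁻¹ * b⁻¹).1 * (b * a).1 = a.1 * b.1 :=
    congrArg Subtype.val (by group : a * b * a⁻¹ * b⁻¹ * (b * a) = a * b)
  have hfactor : a.1 * b.1 - b.1 * a.1 = ((a * b * a⁻¹ * b⁻¹).1 - 1) * (b * a).1 := by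
    rw [sub_mul, one_mul, hcomm]; rfl
  rw [commDet, hfactor, Matrix.det_mul, (b * a).det_coe, mul_one, Matrix.det_fin_two, tr_eq]
  simp only [Matrix.sub_apply, Matrix.one_apply_eq, Matrix.one_apply_ne, ne_eq, zero_ne_one,
    one_ne_zero, not_false_eq_true, sub_zero]
  linear_combination apply_mul_apply_sub (a * b * a⁻¹ * b⁻¹)

lemma commDet_of_apply_one_zero {a b : SL(2, F)} (ha : a 1 0 = 0) :
    commDet a b = b 1 0 * ((a 0 0 - a 1 1) * ((a 0 0 - a 1 1) * b 0 1 - (b 0 0 - b 1 1) * a 0 1)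
      - a 0 1 ^ 2 * b 1 0) := by
  simp only [commDet, Matrix.det_fin_two, Matrix.sub_apply, Matrix.mul_apply, Fin.sum_univ_two, ha]
  ring

lemma commDet_eq_zero_of_apply_eq_zero {a b : SL(2, F)} {i j : Fin 2} (hij : i ≠ j)
    (ha : a i j = 0) (hb : b i j = 0) : commDet a b = 0 := by
  simp only [commDet, Matrix.det_fin_two, Matrix.sub_apply, Matrix.mul_apply, Fin.sum_univ_two]
  fin_cases i <;> fin_cases j
  · exact absurd rfl hij
  · change a 0 1 = 0 at ha
    change b 0 1 = 0 at hb
    rw [ha, hb]; ring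
  · change a 1 0 = 0 at ha
    change b 1 0 = 0 at hb
    rw [ha, hb]; ring
  · exact absurd rfl hij

lemma inv_apply_zero_zero (g : SL(2, F)) : g⁻¹ 0 0 = g 1 1 := by
  rw [Matrix.SpecialLinearGroup.SL2_inv_expl]; rfl

lemma inv_apply_zero_one (g : SL(2, F)) : g⁻¹ 0 1 = -g 0 1 := by
  rw [Matrix.SpecialLinearGroup.SL2_inv_expl]; rfl

lemma inv_apply_one_zero (g : SL(2, F)) : g⁻¹ 1 0 = -g 1 0 := by
  rw [Matrix.SpecialLinearGroup.SL2_inv_expl]; rfl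

lemma inv_apply_one_one (g : SL(2, F)) : g⁻¹ 1 1 = g 0 0 := by
  rw [Matrix.SpecialLinearGroup.SL2_inv_expl]; rfl

lemma exists_commDet_ne_zero (F : Type*) [Field F] : ∃ a b : SL(2, F), commDet a b ≠ 0 := by
  refine ⟨.transvection zero_ne_one 1, .transvection one_ne_zero 1, ?_⟩
  rw [commDet_of_apply_one_zero] <;>
    simp [Matrix.SpecialLinearGroup.transvection, Matrix.transvection]

/-- The Borel subgroup of `SL₂` stabilising a coordinate line. -/
def borel {i j : Fin 2} (hij : i ≠ j) : Subgroup SL(2, F) where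
  carrier := {g | g i j = 0}
  one_mem' := by simp [hij]
  mul_mem' {g h} (hg : g i j = 0) (hh : h i j = 0) := by
    change (g * h) i j = 0
    rw [mul_apply_eq]
    fin_cases i <;> fin_cases j <;> simp_all
  inv_mem' {g} (hg : g i j = 0) := by
    change g⁻¹ i j = 0
    fin_cases i <;> fin_cases j <;> simp_all [inv_apply_zero_one, inv_apply_one_zero]

lemma mem_borel {i j : Fin 2} {hij : i ≠ j} {g : SL(2, F)} : g ∈ borel hij ↔ g i j = 0 := Iff.rfl

/-- The group of monomial matrices in `SL₂`, the normaliser of the diagonal torus. -/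
def monomial (F : Type*) [Field F] : Subgroup SL(2, F) where
  carrier := {g | (g 0 1 = 0 ∧ g 1 0 = 0) ∨ (g 0 0 = 0 ∧ g 1 1 = 0)}
  one_mem' := by simp
  mul_mem' {g h} hg hh := by
    simp only [Set.mem_ofPred_eq, mul_apply_eq] at hg hh ⊢
    rcases hg with ⟨h₁, h₂⟩ | ⟨h₁, h₂⟩ <;> rcases hh with ⟨h₃, h₄⟩ | ⟨h₃, h₄⟩ <;>
      simp [h₁, h₂, h₃, h₄]
  inv_mem' {g} hg := by
    simp only [Set.mem_ofPred_eq, inv_apply_zero_zero, inv_apply_zero_one, inv_apply_one_zero,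
      inv_apply_one_one] at hg ⊢
    rcases hg with ⟨h₁, h₂⟩ | ⟨h₁, h₂⟩ <;> simp [h₁, h₂]

lemma mem_monomial {g : SL(2, F)} :
    g ∈ monomial F ↔ (g 0 1 = 0 ∧ g 1 0 = 0) ∨ (g 0 0 = 0 ∧ g 1 1 = 0) := Iff.rfl

lemma commutator_monomial_le_borel :
    ⁅monomial F, monomial F⁆ ≤ borel (one_ne_zero : (1 : Fin 2) ≠ 0) := by
  refine Subgroup.commutator_le.2 fun g hg h hh ↦ ?_
  rw [mem_monomial] at hg hh
  rw [mem_borel, commutatorElement_def]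
  simp only [mul_apply_eq, inv_apply_zero_zero, inv_apply_zero_one, inv_apply_one_zero,
    inv_apply_one_one]
  rcases hg with ⟨h₁, h₂⟩ | ⟨h₁, h₂⟩ <;> rcases hh with ⟨h₃, h₄⟩ | ⟨h₃, h₄⟩ <;>
    simp [h₁, h₂, h₃, h₄]

lemma exists_ne_zero_sq_ne_one (hF : 4 ≤ Nat.card F) : ∃ a : F, a ≠ 0 ∧ a ^ 2 ≠ 1 := by
  classical
  have : Finite F := Nat.finite_of_card_ne_zero (by omega)
  have : Fintype F := Fintype.ofFinite F
  obtain ⟨a, ha⟩ : ∃ a, a ∉ ({0, 1, -1} : Finset F) := by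
    by_contra! h
    have := Finset.card_le_three (a := (0 : F)) (b := 1) (c := -1)
    rw [Finset.eq_univ_iff_forall.2 h, Finset.card_univ, ← Nat.card_eq_fintype_card] at this
    omega
  simp only [Finset.mem_insert, Finset.mem_singleton, not_or] at ha
  exact ⟨a, ha.1, fun h ↦ not_or.2 ha.2 (sq_eq_one_iff.1 h)⟩

variable {K : Type*} [Field K] [Algebra F K]

/-- The embedding `g ↦ P⁻¹ g P` of `SL₂(F)` into `SL₂(K)` for an extension `K` of `F`: the columns
of `P` are the basis in which `g` is written. -/
noncomputable def conjMap (P : SL(2, K)) : SL(2, F) →* SL(2, K) :=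
  (MulAut.conj P⁻¹).toMonoidHom.comp (Matrix.SpecialLinearGroup.map (algebraMap F K))

lemma conjMap_apply (P : SL(2, K)) (g : SL(2, F)) :
    conjMap P g = P⁻¹ * Matrix.SpecialLinearGroup.map (algebraMap F K) g * P := by
  simp [conjMap]

lemma conjMap_mul_apply (P Q : SL(2, K)) (g : SL(2, F)) :
    conjMap (P * Q) g = Q⁻¹ * conjMap P g * Q := by
  rw [conjMap_apply, conjMap_apply]; group

lemma conjMap_injective (P : SL(2, K)) : Function.Injective (conjMap P : SL(2, F) →* SL(2, K)) := by
  refine (MulAut.conj P⁻¹).injective.comp fun g h e ↦ ?_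
  ext i j
  exact (algebraMap F K).injective (congrArg (fun x : SL(2, K) ↦ x i j) e)

lemma tr_conjMap (P : SL(2, K)) (g : SL(2, F)) : tr (conjMap P g) = algebraMap F K (tr g) := by
  rw [conjMap_apply, tr_mul_comm, mul_inv_cancel_left, tr_eq, tr_eq, map_add]
  rfl

lemma commDet_conjMap (P : SL(2, K)) (a b : SL(2, F)) :
    commDet (conjMap P a) (conjMap P b) = algebraMap F K (commDet a b) := by
  rw [commDet_eq_two_sub_tr, commDet_eq_two_sub_tr, ← map_inv, ← map_inv, ← map_mul, ← map_mul,
    ← map_mul, tr_conjMap, map_sub, map_ofNat]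

lemma commDet_ne_zero_of_conjMap {P : SL(2, K)} {a b : SL(2, F)}
    (h : commDet (conjMap P a) (conjMap P b) ≠ 0) : commDet a b ≠ 0 := by
  rw [commDet_conjMap] at h
  exact fun e ↦ h (by rw [e, map_zero])

lemma comap_borel_ne_top (P : SL(2, K)) {i j : Fin 2} (hij : i ≠ j) :
    (borel hij).comap (conjMap P : SL(2, F) →* SL(2, K)) ≠ ⊤ := by
  intro htop
  have hall (g : SL(2, F)) : conjMap P g i j = 0 :=
    (htop ▸ Subgroup.mem_top g : g ∈ (borel hij).comap (conjMap P))
  obtain ⟨a, b, hab⟩ := exists_commDet_ne_zero F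
  refine hab ((algebraMap F K).injective ?_)
  rw [← commDet_conjMap P, commDet_eq_zero_of_apply_eq_zero hij (hall a) (hall b), map_zero]

lemma comap_monomial_ne_top (hF : 4 ≤ Nat.card F) (P : SL(2, K)) :
    (monomial K).comap (conjMap P : SL(2, F) →* SL(2, K)) ≠ ⊤ := by
  intro htop
  obtain ⟨a, ha, ha'⟩ := exists_ne_zero_sq_ne_one hF
  refine comap_borel_ne_top (F := F) P (one_ne_zero : (1 : Fin 2) ≠ 0) (top_le_iff.1 ?_)
  rw [← Matrix.SL2.commutator_eq_top ha ha', commutator_def, ← htop]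
  exact Subgroup.commutator_le.2 fun g hg h hh ↦ by
    rw [Subgroup.mem_comap, map_commutatorElement]
    exact commutator_monomial_le_borel (Subgroup.commutator_mem_commutator hg hh)

lemma mul_first_column_ne_zero {u v : SL(2, K)} (hu : u 0 0 = 0) (hv : v ∉ monomial K)
    (hv' : ¬(v 0 0 ≠ 0 ∧ v 1 0 ≠ 0)) : (v * u) 0 0 ≠ 0 ∧ (v * u) 1 0 ≠ 0 := by
  have hu₁ : u 1 0 ≠ 0 := fun h ↦ by
    have hdet := apply_mul_apply_sub u
    rw [hu, h, zero_mul, mul_zero, sub_zero] at hdet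
    exact zero_ne_one hdet
  have hdet := apply_mul_apply_sub v
  obtain ⟨hv₀₁, hv₁₁⟩ : v 0 1 ≠ 0 ∧ v 1 1 ≠ 0 := by
    rw [mem_monomial] at hv
    constructor
    · intro h
      simp only [h, zero_mul, sub_zero] at hdet
      exact hv (.inl ⟨h, by_contra fun h' ↦ hv' ⟨left_ne_zero_of_mul_eq_one hdet, h'⟩⟩)
    · intro h
      simp only [h, mul_zero, zero_sub] at hdet
      refine hv (.inr ⟨by_contra fun h' ↦ hv' ⟨h', fun h₁₀ ↦ ?_⟩, h⟩)
      rw [h₁₀, mul_zero, neg_zero] at hdet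
      exact zero_ne_one hdet
  simp only [mul_apply_eq, hu, mul_zero, zero_add]
  exact ⟨mul_ne_zero hv₀₁ hu₁, mul_ne_zero hv₁₁ hu₁⟩

lemma exists_mem_mul_first_column_ne_zero (hF : 4 ≤ Nat.card F) {S : Set SL(2, F)}
    (hS : Subgroup.closure S = ⊤) (h1 : 1 ∈ S) (P : SL(2, K)) :
    ∃ g ∈ S * S, conjMap P g 0 0 ≠ 0 ∧ conjMap P g 1 0 ≠ 0 := by
  obtain ⟨s, hs, hs'⟩ := exists_mem_notMem_of_closure_eq_top hS
    (comap_borel_ne_top P (one_ne_zero : (1 : Fin 2) ≠ 0))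
  obtain ⟨t, ht, ht'⟩ := exists_mem_notMem_of_closure_eq_top hS (comap_monomial_ne_top hF P)
  have hsub : S ⊆ S * S := Set.subset_mul_left S h1
  by_cases hs₀ : conjMap P s 0 0 = 0
  · by_cases htc : conjMap P t 0 0 ≠ 0 ∧ conjMap P t 1 0 ≠ 0
    · exact ⟨t, hsub ht, htc⟩
    · refine ⟨t * s, Set.mul_mem_mul ht hs, ?_⟩
      rw [map_mul]
      exact mul_first_column_ne_zero hs₀ ht' htc
  · exact ⟨s, hsub hs, hs₀, hs'⟩

/-- Conjugating by the Weyl element turns the first column of `g` into the first row of `g⁻¹`. -/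
lemma exists_mem_mul_first_row_ne_zero (hF : 4 ≤ Nat.card F) {S : Set SL(2, F)}
    (hS : Subgroup.closure S = ⊤) (h1 : 1 ∈ S) (hinv : S⁻¹ = S) (P : SL(2, K)) :
    ∃ g ∈ S * S, conjMap P g 0 0 ≠ 0 ∧ conjMap P g 0 1 ≠ 0 := by
  obtain ⟨w, w₀₀, w₀₁, w₁₀, w₁₁⟩ : ∃ w : SL(2, K), w 0 0 = 0 ∧ w 0 1 = -1 ∧ w 1 0 = 1 ∧ w 1 1 = 0 :=
    ⟨⟨!![0, -1; 1, 0], by simp⟩, rfl, rfl, rfl, rfl⟩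
  obtain ⟨g, hg, h₀, h₁⟩ := exists_mem_mul_first_column_ne_zero hF hS h1 (P * w)
  simp only [conjMap_mul_apply, mul_apply_eq, inv_apply_zero_zero, inv_apply_zero_one,
    inv_apply_one_zero, inv_apply_one_one, w₀₀, w₀₁, w₁₀, w₁₁] at h₀ h₁
  refine ⟨g⁻¹, ?_, ?_, ?_⟩
  · rw [← hinv, ← mul_inv_rev]
    exact Set.inv_mem_inv.2 hg
  · rw [map_inv, inv_apply_zero_zero]
    simpa using h₀
  · rw [map_inv, inv_apply_zero_one]
    simpa using h₁

end Escape

section Diagonalization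

variable {F K : Type*} [Field F] [Field K] [Algebra F K]

lemma exists_conj_apply_one_zero_eq_zero [IsAlgClosed K] (h : SL(2, K)) :
    ∃ P : SL(2, K), (P⁻¹ * h * P) 1 0 = 0 := by
  rcases eq_or_ne (h 1 0) 0 with h₁₀ | h₁₀
  · exact ⟨1, by simpa using h₁₀⟩
  obtain ⟨l, hl⟩ := IsAlgClosed.exists_root h.1.charpoly
    (by rw [Matrix.charpoly_degree_eq_dim]; exact two_ne_zero)
  rw [Polynomial.IsRoot, Matrix.charpoly_fin_two, h.det_coe, Matrix.trace_fin_two] at hl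
  simp only [Polynomial.eval_add, Polynomial.eval_sub, Polynomial.eval_pow, Polynomial.eval_X,
    Polynomial.eval_mul, Polynomial.eval_C] at hl
  -- The first column of `P` is an eigenvector for the eigenvalue `l`.
  obtain ⟨P, P₀₀, P₁₀⟩ : ∃ P : SL(2, K), P 0 0 = l - h 1 1 ∧ P 1 0 = h 1 0 :=
    ⟨⟨!![l - h 1 1, -(h 1 0)⁻¹; h 1 0, 0], by simp [h₁₀]⟩, rfl, rfl⟩
  refine ⟨P, ?_⟩
  simp only [mul_apply_eq, inv_apply_one_zero, inv_apply_one_one, P₀₀, P₁₀]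
  linear_combination h 1 0 * hl + h 1 0 * apply_mul_apply_sub h

lemma exists_conj_isDiag_of_apply_one_zero {h : SL(2, K)} (h₁₀ : h 1 0 = 0)
    (hne : h 0 0 ≠ h 1 1) : ∃ P : SL(2, K), (P⁻¹ * h * P).1.IsDiag := by
  obtain ⟨P, P₀₀, P₀₁, P₁₀, P₁₁⟩ : ∃ P : SL(2, K), P 0 0 = 1 ∧ P 0 1 = h 0 1 / (h 1 1 - h 0 0) ∧
      P 1 0 = 0 ∧ P 1 1 = 1 :=
    ⟨⟨!![1, h 0 1 / (h 1 1 - h 0 0); 0, 1], by simp⟩, rfl, rfl, rfl, rfl⟩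
  refine ⟨P, isDiag_iff.2 ?_⟩
  simp only [mul_apply_eq, inv_apply_zero_zero, inv_apply_zero_one, inv_apply_one_zero,
    inv_apply_one_one, P₀₀, P₀₁, P₁₀, P₁₁, h₁₀]
  have := sub_ne_zero.2 hne.symm
  constructor
  · field_simp
    ring
  · ring

/-- An element of `SL₂` is regular (semisimple) if its eigenvalues `l` and `l⁻¹` are distinct, that
is, if its trace is not `±2`. -/
def IsRegular (h : SL(2, F)) : Prop := tr h ≠ 2 ∧ tr h ≠ -2

instance [DecidableEq F] : DecidablePred (IsRegular : SL(2, F) → Prop) :=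
  fun _ ↦ inferInstanceAs (Decidable (_ ∧ _))

lemma IsRegular.apply_zero_ne_apply_one {h : SL(2, F)} (hh : IsRegular h) {P : SL(2, K)}
    (h₁₀ : conjMap P h 1 0 = 0) : conjMap P h 0 0 ≠ conjMap P h 1 1 := by
  intro heq
  have htr := tr_conjMap P h
  have hdet := apply_mul_apply_sub (conjMap P h)
  rw [tr_eq, heq] at htr
  rw [heq, h₁₀, mul_zero, sub_zero] at hdet
  rcases mul_self_eq_one_iff.1 hdet with h' | h' <;> rw [h'] at htr
  · refine hh.1 ((algebraMap F K).injective ?_)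
    rw [← htr, map_ofNat]
    norm_num
  · refine hh.2 ((algebraMap F K).injective ?_)
    rw [← htr, map_neg, map_ofNat]
    norm_num

lemma IsRegular.exists_conjMap_isDiag [IsAlgClosed K] {h : SL(2, F)} (hh : IsRegular h) :
    ∃ P : SL(2, K), (conjMap P h).1.IsDiag := by
  obtain ⟨P, hP⟩ :=
    exists_conj_apply_one_zero_eq_zero (Matrix.SpecialLinearGroup.map (algebraMap F K) h)
  rw [← conjMap_apply] at hP
  obtain ⟨Q, hQ⟩ := exists_conj_isDiag_of_apply_one_zero hP (hh.apply_zero_ne_apply_one hP)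
  exact ⟨P * Q, by rwa [conjMap_mul_apply]⟩

lemma commute_iff_isDiag {h y : SL(2, K)} (hdiag : h.1.IsDiag) (hne : h 0 0 ≠ h 1 1) :
    y * h = h * y ↔ y.1.IsDiag := by
  obtain ⟨h₀₁, h₁₀⟩ := isDiag_iff.1 hdiag
  have hentry (i j : Fin 2) : (y * h) i j = y i j * h j j ∧ (h * y) i j = h i i * y i j := by
    fin_cases i <;> fin_cases j <;> simp [mul_apply_eq, h₀₁, h₁₀]
  constructor
  · intro hcomm
    have hy (i j : Fin 2) : y i j * h j j = h i i * y i j := by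
      rw [← (hentry i j).1, ← (hentry i j).2, hcomm]
    refine isDiag_iff.2 ⟨?_, ?_⟩
    · exact (mul_eq_zero.1 (by linear_combination -hy 0 1 :
        (h 0 0 - h 1 1) * y 0 1 = 0)).resolve_left (sub_ne_zero.2 hne)
    · exact (mul_eq_zero.1 (by linear_combination hy 1 0 :
        (h 0 0 - h 1 1) * y 1 0 = 0)).resolve_left (sub_ne_zero.2 hne)
  · intro hy
    ext i j
    rw [(hentry i j).1, (hentry i j).2]
    rcases eq_or_ne i j with rfl | hij
    · exact mul_comm _ _
    · rw [hy hij, zero_mul, mul_zero]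

lemma IsRegular.commute_iff {h : SL(2, F)} (hh : IsRegular h) {P : SL(2, K)}
    (hP : (conjMap P h).1.IsDiag) (y : SL(2, F)) : y * h = h * y ↔ (conjMap P y).1.IsDiag := by
  rw [← commute_iff_isDiag hP (hh.apply_zero_ne_apply_one (isDiag_iff.1 hP).2), ← map_mul,
    ← map_mul, (conjMap_injective P).eq_iff]

lemma apply_zero_one_ne_zero_of_conjMap {a : SL(2, F)} (ha : a 1 0 ≠ 0) {P : SL(2, K)}
    (h₁₀ : conjMap P a 1 0 = 0) (heq : conjMap P a 0 0 = conjMap P a 1 1) :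
    conjMap P a 0 1 ≠ 0 := by
  intro h₀₁
  have hcomm : conjMap P a * P⁻¹ = P⁻¹ * conjMap P a := by
    ext i j
    fin_cases i <;> fin_cases j <;> simp [mul_apply_eq, h₁₀, h₀₁, heq, mul_comm]
  have hmap : conjMap P a = Matrix.SpecialLinearGroup.map (algebraMap F K) a := by
    rw [← mul_left_cancel_iff (a := P⁻¹), ← hcomm, conjMap_apply, mul_inv_cancel_right]
  rw [hmap] at h₁₀
  exact ha ((algebraMap F K).injective (h₁₀.trans (map_zero _).symm))

lemma exists_commDet_ne_zero_of_closure_eq_top {S : Set SL(2, F)}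
    (hS : Subgroup.closure S = ⊤) (h1 : 1 ∈ S) : ∃ a ∈ S, ∃ b ∈ S * S, commDet a b ≠ 0 := by
  obtain ⟨a, ha, ha₁₀⟩ := exists_mem_notMem_of_closure_eq_top hS
    (comap_borel_ne_top (1 : SL(2, F)) (one_ne_zero : (1 : Fin 2) ≠ 0))
  replace ha₁₀ : a 1 0 ≠ 0 := by
    simpa [mem_borel, conjMap_apply] using ha₁₀
  refine ⟨a, ha, ?_⟩
  obtain ⟨P, hP⟩ := exists_conj_apply_one_zero_eq_zero
    (Matrix.SpecialLinearGroup.map (algebraMap F (AlgebraicClosure F)) a)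
  rw [← conjMap_apply] at hP
  by_cases heq : conjMap P a 0 0 = conjMap P a 1 1
  · obtain ⟨b, hb, hb₁₀⟩ := exists_mem_notMem_of_closure_eq_top hS
      (comap_borel_ne_top P (one_ne_zero : (1 : Fin 2) ≠ 0))
    refine ⟨b, Set.subset_mul_left S h1 hb, commDet_ne_zero_of_conjMap (P := P) ?_⟩
    rw [commDet_of_apply_one_zero hP, heq, sub_self, zero_mul, zero_sub]
    have ha₀₁ := apply_zero_one_ne_zero_of_conjMap ha₁₀ hP heq
    exact mul_ne_zero hb₁₀ (neg_ne_zero.2 (mul_ne_zero (pow_ne_zero 2 ha₀₁) hb₁₀))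
  · obtain ⟨Q, hQ⟩ := exists_conj_isDiag_of_apply_one_zero hP heq
    rw [← conjMap_mul_apply] at hQ
    obtain ⟨hQ₀₁, hQ₁₀⟩ := isDiag_iff.1 hQ
    obtain ⟨b, hb, hb₀₁, hb₁₀⟩ := exists_mem_mul_notMem_notMem_of_closure_eq_top hS h1
      (comap_borel_ne_top (P * Q) (zero_ne_one : (0 : Fin 2) ≠ 1))
      (comap_borel_ne_top (P * Q) (one_ne_zero : (1 : Fin 2) ≠ 0))
    refine ⟨b, hb, commDet_ne_zero_of_conjMap (P := P * Q) ?_⟩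
    have hne : conjMap (P * Q) a 0 0 - conjMap (P * Q) a 1 1 ≠ 0 :=
      sub_ne_zero.2 fun h ↦ apply_zero_one_ne_zero_of_conjMap ha₁₀ hQ₁₀ h hQ₀₁
    rw [commDet_of_apply_one_zero hQ₁₀, hQ₀₁, mul_zero, sub_zero, zero_pow two_ne_zero, zero_mul,
      sub_zero]
    exact mul_ne_zero hb₁₀ (mul_ne_zero hne (mul_ne_zero hne hb₀₁))

end Diagonalization

section Powers

variable {G : Type*} [Group G]

lemma commute_conj_iff (s x y : G) :
    y * (s * x * s⁻¹) = s * x * s⁻¹ * y ↔ s⁻¹ * y * s * x = x * (s⁻¹ * y * s) := by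
  have h := Commute.conj_iff (a := s⁻¹ * y * s) (b := x) s
  rwa [show s * (s⁻¹ * y * s) * s⁻¹ = y by group] at h

variable [DecidableEq G] {S : Finset G} {x y : G} {m n k : ℕ}

lemma mul_mem_pow_of_add_le (h1 : 1 ∈ S) (hx : x ∈ S ^ m) (hy : y ∈ S ^ n) (h : m + n ≤ k) :
    x * y ∈ S ^ k :=
  Finset.pow_subset_pow_right h1 h (pow_add S m n ▸ Finset.mul_mem_mul hx hy)

lemma conj_mem_pow_add_two (hS : S⁻¹ = S) (hx : x ∈ S) (hy : y ∈ S ^ m) :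
    x * y * x⁻¹ ∈ S ^ (m + 2) := by
  have hx' : x⁻¹ ∈ S := hS ▸ Finset.inv_mem_inv hx
  rw [pow_succ, pow_succ']
  exact Finset.mul_mem_mul (Finset.mul_mem_mul hx hy) hx'

end Powers

section Centralizers

variable {F : Type*} [Field F] {h : SL(2, F)}

lemma IsRegular.conj (hh : IsRegular h) (g : SL(2, F)) : IsRegular (g * h * g⁻¹) := by
  rwa [IsRegular, tr_conj]

lemma IsRegular.commute_iff_of_commute {x y : SL(2, F)} (hx : IsRegular x) (hy : IsRegular y)
    (hxy : y * x = x * y) (z : SL(2, F)) : z * y = y * z ↔ z * x = x * z := by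
  obtain ⟨P, hP⟩ := hx.exists_conjMap_isDiag (K := AlgebraicClosure F)
  rw [hx.commute_iff hP, hy.commute_iff ((hx.commute_iff hP y).1 hxy)]

variable [DecidableEq F]

lemma IsRegular.card_filter_commute_and_tr_eq_le (hh : IsRegular h) (X : Finset SL(2, F)) (t : F) :
    #{y ∈ X | y * h = h * y ∧ tr y = t} ≤ 2 := by
  obtain ⟨P, hP⟩ := hh.exists_conjMap_isDiag (K := AlgebraicClosure F)
  have hdiag : ∀ y ∈ ({y ∈ X | y * h = h * y ∧ tr y = t} : Finset SL(2, F)),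
      (conjMap P y).1.IsDiag ∧ tr (conjMap P y) = algebraMap F _ t := fun y hy ↦ by
    obtain ⟨-, hcomm, htr⟩ := Finset.mem_filter.1 hy
    exact ⟨(hh.commute_iff hP y).1 hcomm, by rw [tr_conjMap, htr]⟩
  refine card_le_two_of_quadratic (f := fun y ↦ conjMap P y 0 0) (a := 1)
    (b := -algebraMap F _ t) (c := 1) (fun y hy z hz e ↦ conjMap_injective P ?_) one_ne_zero
    fun y hy ↦ ?_
  · refine injOn_apply_zero_of_isDiag (B := {g | g.1.IsDiag}) (fun g hg ↦ hg) ?_ ?_ e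
    exacts [(hdiag y hy).1, (hdiag z hz).1]
  · rw [← (hdiag y hy).2, tr_eq]
    linear_combination -apply_mul_apply_of_isDiag (hdiag y hy).1

lemma IsRegular.card_sub_four_le_card_filter_isRegular (hh : IsRegular h)
    (X : Finset SL(2, F)) :
    #{y ∈ X | y * h = h * y} - 4 ≤ #{y ∈ X | IsRegular y ∧ y * h = h * y} := by
  have hcover : ({y ∈ X | y * h = h * y} : Finset SL(2, F)) ⊆
      {y ∈ X | IsRegular y ∧ y * h = h * y} ∪
      ({y ∈ X | y * h = h * y ∧ tr y = 2} ∪ {y ∈ X | y * h = h * y ∧ tr y = -2}) := by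
    intro y hy
    simp only [Finset.mem_union, Finset.mem_filter] at hy ⊢
    rw [IsRegular]
    tauto
  have := (Finset.card_le_card hcover).trans (Finset.card_union_le _ _)
  have := Finset.card_union_le {y ∈ X | y * h = h * y ∧ tr y = 2}
    {y ∈ X | y * h = h * y ∧ tr y = -2}
  have := hh.card_filter_commute_and_tr_eq_le X 2
  have := hh.card_filter_commute_and_tr_eq_le X (-2)
  omega

lemma IsRegular.card_filter_commute_le [Fintype F] (hh : IsRegular h) (X : Finset SL(2, F)) :
    #{y ∈ X | y * h = h * y} ≤ 2 * Fintype.card F := by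
  rw [← Finset.card_univ]
  refine Finset.card_le_mul_card_image_of_maps_to (f := tr) (fun _ _ ↦ Finset.mem_univ _) 2
    fun t _ ↦ ?_
  rw [Finset.filter_filter]
  exact hh.card_filter_commute_and_tr_eq_le X t

lemma card_filter_commute_conj_le [Fintype F] {x : SL(2, F)} (hx : IsRegular x)
    (hh : IsRegular h) :
    #{g : SL(2, F) | x * (g * h * g⁻¹) = g * h * g⁻¹ * x} ≤ 2 * Fintype.card F * 2 := by
  refine (card_le_card_filter_commute_mul_card
    (T := {y : SL(2, F) | y * x = x * y ∧ tr y = tr h}) (h := h) fun g hg ↦ ?_).trans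
    (Nat.mul_le_mul (hh.card_filter_commute_le _) (hx.card_filter_commute_and_tr_eq_le _ _))
  rw [Finset.mem_filter] at hg ⊢
  exact ⟨Finset.mem_univ _, hg.2.symm, tr_conj g h⟩

end Centralizers

section Counting

variable {F : Type*} [Field F] [DecidableEq F] {S : Finset SL(2, F)} {h : SL(2, F)}

lemma card_le_card_filter_commute_mul_card_filter_tr (hS : S⁻¹ = S) {m : ℕ} (hh : h ∈ S ^ m) :
    #S ≤ #{y ∈ S ^ 2 | y * h = h * y} * #{x ∈ S ^ (m + 2) | tr x = tr h} := by
  have := card_le_card_filter_commute_mul_card (S := S) (h := h)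
    (T := {x ∈ S ^ (m + 2) | tr x = tr h})
    fun s hs ↦ Finset.mem_filter.2 ⟨conj_mem_pow_add_two hS hs hh, tr_conj s h⟩
  rwa [hS, ← sq] at this

lemma pow_three_le_of_sub_four_mul_sq_le {c n : ℕ} (hc : (c - 4) * (c * c) ≤ 8 * n) (hn : 1 ≤ n) :
    c ^ 3 ≤ 512 * n := by
  rcases le_or_gt c 8 with h | h
  · calc c ^ 3 ≤ 8 ^ 3 := Nat.pow_le_pow_left h 3
      _ ≤ 512 * n := by omega
  · calc c ^ 3 = c * (c * c) := by ring
      _ ≤ 2 * (c - 4) * (c * c) := Nat.mul_le_mul_right _ (by omega)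
      _ = 2 * ((c - 4) * (c * c)) := by ring
      _ ≤ 512 * n := by omega

lemma IsRegular.card_filter_commute_pow_three_le (hF : 4 ≤ Nat.card F) (h1 : 1 ∈ S)
    (hS : S⁻¹ = S) (hgen : Subgroup.closure (S : Set SL(2, F)) = ⊤) (hh : IsRegular h) :
    #{y ∈ S ^ 2 | y * h = h * y} ^ 3 ≤ 512 * #(S ^ 10) := by
  classical
  obtain ⟨P, hP⟩ := hh.exists_conjMap_isDiag (K := AlgebraicClosure F)
  obtain ⟨a, ha, ha₀, ha₁⟩ := exists_mem_mul_first_column_ne_zero hF hgen h1 P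
  obtain ⟨b, hb, hb₀, hb₁⟩ := exists_mem_mul_first_row_ne_zero hF hgen h1
    (by rw [← Finset.coe_inv, hS]) P
  rw [← Finset.coe_mul, Finset.mem_coe, ← sq] at ha hb
  obtain ⟨C, hC⟩ : ∃ C : Finset SL(2, F), C = {y ∈ S ^ 2 | y * h = h * y} := ⟨_, rfl⟩
  have hdiag : ∀ x ∈ C.image (conjMap P), x.1.IsDiag := by
    simp only [hC, Finset.mem_image, Finset.mem_filter]
    rintro _ ⟨y, ⟨-, hy⟩, rfl⟩
    exact (hh.commute_iff hP y).1 hy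
  have hmaps : ∀ x ∈ C.image (conjMap P), ∀ y ∈ C.image (conjMap P), ∀ z ∈ C.image (conjMap P),
      x * (conjMap P a * y * conjMap P b) * z ∈ (S ^ 10).image (conjMap P) := by
    simp only [hC, Finset.mem_image, Finset.mem_filter]
    rintro _ ⟨x, ⟨hx, -⟩, rfl⟩ _ ⟨y, ⟨hy, -⟩, rfl⟩ _ ⟨z, ⟨hz, -⟩, rfl⟩
    refine ⟨x * (a * y * b) * z, ?_, by simp only [map_mul]⟩
    have hayb : a * y * b ∈ S ^ 6 := by
      rw [show (6 : ℕ) = 2 + 2 + 2 from rfl, pow_add, pow_add]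
      exact Finset.mul_mem_mul (Finset.mul_mem_mul ha hy) hb
    rw [show (10 : ℕ) = 2 + 6 + 2 from rfl, pow_add, pow_add]
    exact Finset.mul_mem_mul (Finset.mul_mem_mul hx hayb) hz
  have hcard := card_sub_four_mul_card_sq_le hdiag ha₀ ha₁ hb₀ hb₁ hmaps
  rw [Finset.card_image_of_injective _ (conjMap_injective P),
    Finset.card_image_of_injective _ (conjMap_injective P), hC] at hcard
  have hpos : 1 ≤ #(S ^ 10) := Finset.card_pos.2 ⟨1, Finset.one_mem_pow h1⟩
  exact pow_three_le_of_sub_four_mul_sq_le hcard hpos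

lemma exists_isRegular_card_sub_two_mul_card_le (h1 : 1 ∈ S) {m : ℕ}
    (hm : 2 < #((S ^ m).image tr)) :
    ∃ h ∈ S ^ m, IsRegular h ∧
      (#((S ^ m).image tr) - 2) * #{x ∈ S ^ (m + 2) | tr x = tr h} ≤ #(S ^ (m + 2)) := by
  obtain ⟨T, hT⟩ : ∃ T, T = (S ^ m).image tr \ {2, -2} := ⟨_, rfl⟩
  have hcard : #((S ^ m).image tr) - 2 ≤ #T := by
    have := Finset.le_card_sdiff {2, -2} ((S ^ m).image tr)
    rw [← hT] at this
    have : #({2, -2} : Finset F) ≤ 2 := Finset.card_le_two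
    omega
  have hTsub : T ⊆ (S ^ (m + 2)).image tr := by
    rw [hT]
    exact Finset.sdiff_subset.trans
      (Finset.image_subset_image (Finset.pow_subset_pow_right h1 (by omega)))
  obtain ⟨t, ht, hmin⟩ := Finset.exists_min_image T (fun t ↦ #{x ∈ S ^ (m + 2) | tr x = t})
    (Finset.card_pos.1 (by omega))
  rw [hT, Finset.mem_sdiff, Finset.mem_insert, Finset.mem_singleton, not_or] at ht
  obtain ⟨h, hh, rfl⟩ := Finset.mem_image.1 ht.1
  refine ⟨h, hh, ht.2, ?_⟩
  calc (#((S ^ m).image tr) - 2) * #{x ∈ S ^ (m + 2) | tr x = tr h}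
      ≤ #T * #{x ∈ S ^ (m + 2) | tr x = tr h} := Nat.mul_le_mul_right _ hcard
    _ ≤ ∑ t ∈ T, #{x ∈ S ^ (m + 2) | tr x = t} := by
        simpa only [smul_eq_mul] using Finset.card_nsmul_le_sum T _ _ hmin
    _ ≤ ∑ t ∈ (S ^ (m + 2)).image tr, #{x ∈ S ^ (m + 2) | tr x = t} :=
        Finset.sum_le_sum_of_subset hTsub
    _ = #(S ^ (m + 2)) := (Finset.card_eq_sum_card_image _ _).symm

end Counting

section Dichotomy

variable {F : Type*} [Field F] [DecidableEq F] {S : Finset SL(2, F)}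

lemma exists_isRegular_commute_iff_commute_conj (hS : S⁻¹ = S)
    (hgen : Subgroup.closure (S : Set SL(2, F)) = ⊤)
    (hlarge : ∀ h ∈ S ^ 4, IsRegular h → 5 ≤ #{y ∈ S ^ 2 | y * h = h * y}) {h : SL(2, F)}
    (hh : h ∈ S ^ 4) (hreg : IsRegular h) (g : SL(2, F)) :
    ∃ x ∈ S ^ 4, IsRegular x ∧ ∀ y, y * x = x * y ↔ y * (g * h * g⁻¹) = g * h * g⁻¹ * y := by
  have hstep : ∀ s ∈ S, ∀ g : SL(2, F),
      (∃ x ∈ S ^ 4, IsRegular x ∧ ∀ y, y * x = x * y ↔ y * (g * h * g⁻¹) = g * h * g⁻¹ * y) →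
      ∃ x ∈ S ^ 4, IsRegular x ∧
        ∀ y, y * x = x * y ↔ y * (s * g * h * (s * g)⁻¹) = s * g * h * (s * g)⁻¹ * y := by
    rintro s hs g ⟨x, hx, hxreg, hxg⟩
    -- The torus of `x` also contains a regular element of `S ^ 2`, whose conjugate by `s` is short.
    have hpos : 0 < #{y ∈ S ^ 2 | IsRegular y ∧ y * x = x * y} := by
      have := hxreg.card_sub_four_le_card_filter_isRegular (S ^ 2)
      have := hlarge x hx hxreg
      omega
    obtain ⟨z, hz⟩ := Finset.card_pos.1 hpos
    obtain ⟨hzS, hzreg, hzx⟩ := Finset.mem_filter.1 hz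
    refine ⟨s * z * s⁻¹, conj_mem_pow_add_two hS hs hzS, hzreg.conj s, fun y ↦ ?_⟩
    rw [commute_conj_iff, hxreg.commute_iff_of_commute hzreg hzx, hxg, ← commute_conj_iff,
      show s * (g * h * g⁻¹) * s⁻¹ = s * g * h * (s * g)⁻¹ by group]
  have hg : g ∈ Subgroup.closure (S : Set SL(2, F)) := hgen ▸ Subgroup.mem_top g
  induction hg using Subgroup.closure_induction_left with
  | one => exact ⟨h, hh, hreg, by simp⟩
  | mul_left s hs g _ ih => exact hstep s hs g ih
  | inv_mul_cancel s hs g _ ih => exact hstep s⁻¹ (hS ▸ Finset.inv_mem_inv hs) g ih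

/-- Every conjugate of the torus of `h` is met by `S ^ 2` in at least `β` points, so double counting
the pairs `(g, x)` with `x ∈ S ^ 2` regular in the torus of `g h g⁻¹` bounds the order of the
group. -/
lemma card_mul_sub_four_le [Fintype F] (hS : S⁻¹ = S)
    (hgen : Subgroup.closure (S : Set SL(2, F)) = ⊤) {β : ℕ} (h5 : 5 ≤ β)
    (hβ : ∀ h ∈ S ^ 4, IsRegular h → β ≤ #{y ∈ S ^ 2 | y * h = h * y}) {h : SL(2, F)}
    (hh : h ∈ S ^ 4) (hreg : IsRegular h) :
    Fintype.card SL(2, F) * (β - 4) ≤ #(S ^ 2) * (2 * Fintype.card F * 2) := by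
  have hmany (g : SL(2, F)) :
      β - 4 ≤ #{x ∈ {x ∈ S ^ 2 | IsRegular x} | x * (g * h * g⁻¹) = g * h * g⁻¹ * x} := by
    obtain ⟨x, hx, hxreg, hxg⟩ := exists_isRegular_commute_iff_commute_conj hS hgen
      (fun h hh hreg ↦ h5.trans (hβ h hh hreg)) hh hreg g
    have hβx := hβ x hx hxreg
    simp only [hxg] at hβx
    rw [Finset.filter_filter]
    exact (Nat.sub_le_sub_right hβx 4).trans
      ((hreg.conj g).card_sub_four_le_card_filter_isRegular (S ^ 2))
  have hfew : ∀ x ∈ ({x ∈ S ^ 2 | IsRegular x} : Finset SL(2, F)),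
      #{g : SL(2, F) | x * (g * h * g⁻¹) = g * h * g⁻¹ * x} ≤ 2 * Fintype.card F * 2 :=
    fun x hx ↦ card_filter_commute_conj_le (Finset.mem_filter.1 hx).2 hreg
  calc Fintype.card SL(2, F) * (β - 4)
      ≤ #{x ∈ S ^ 2 | IsRegular x} * (2 * Fintype.card F * 2) :=
        Finset.card_mul_le_card_mul _ (fun g _ ↦ hmany g) hfew
    _ ≤ #(S ^ 2) * (2 * Fintype.card F * 2) :=
        Nat.mul_le_mul_right _ (Finset.card_le_card (Finset.filter_subset _ _))

variable {L : ℝ}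

lemma card_image_tr_pow_three_le (hF : 4 ≤ Nat.card F) (h1 : 1 ∈ S) (hS : S⁻¹ = S)
    (hgen : Subgroup.closure (S : Set SL(2, F)) = ⊤) (hL : #(S ^ 10) ≤ L * #S)
    (h4 : 4 ≤ #((S ^ 8).image tr)) :
    (#((S ^ 8).image tr) : ℝ) ^ 3 ≤ 4096 * L ^ 4 * #S := by
  obtain ⟨h, hh, hreg, hfiber⟩ := exists_isRegular_card_sub_two_mul_card_le h1 (m := 8) (by omega)
  have horbit := card_le_card_filter_commute_mul_card_filter_tr hS hh
  have htorus := hreg.card_filter_commute_pow_three_le hF h1 hS hgen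
  have hs : (0 : ℝ) < #S := by exact_mod_cast Finset.card_pos.2 ⟨1, h1⟩
  generalize #((S ^ 8).image tr) = τ at *
  generalize #{x ∈ S ^ (8 + 2) | tr x = tr h} = k at *
  generalize #{y ∈ S ^ 2 | y * h = h * y} = c at *
  have hτ : (τ : ℝ) ≤ 2 * L * c := by
    refine le_of_mul_le_mul_right ?_ hs
    calc (τ : ℝ) * #S ≤ (2 * (τ - 2 : ℕ)) * (c * k) := by
          exact_mod_cast Nat.mul_le_mul (by omega : τ ≤ 2 * (τ - 2)) horbit
      _ = 2 * c * ((τ - 2 : ℕ) * k) := by ring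
      _ ≤ 2 * c * (L * #S) :=
          mul_le_mul_of_nonneg_left (le_trans (by exact_mod_cast hfiber) hL) (by positivity)
      _ = 2 * L * c * #S := by ring
  have hL₀ : 0 ≤ L := nonneg_of_mul_nonneg_left ((Nat.cast_nonneg _).trans hL) hs
  calc (τ : ℝ) ^ 3 ≤ (2 * L * c) ^ 3 := by gcongr
    _ = 8 * L ^ 3 * c ^ 3 := by ring
    _ ≤ 8 * L ^ 3 * (512 * (L * #S)) :=
        mul_le_mul_of_nonneg_left (le_trans (by exact_mod_cast htorus)
          (mul_le_mul_of_nonneg_left hL (by norm_num))) (by positivity)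
    _ = 4096 * L ^ 4 * #S := by ring

lemma card_le_mul_card_filter_commute_pow_three (hS : S⁻¹ = S) (h1 : 1 ∈ S)
    {a b : SL(2, F)} (ha : a ∈ S) (hb : b ∈ S ^ 2) (hab : commDet a b ≠ 0)
    (hτ : (#((S ^ 8).image tr) : ℝ) ^ 3 ≤ 4096 * L ^ 4 * #S) {h : SL(2, F)} (hh : h ∈ S ^ 4) :
    #S ≤ 2 ^ 27 * L ^ 8 * (#{y ∈ S ^ 2 | y * h = h * y} : ℝ) ^ 3 := by
  have horbit := card_le_card_filter_commute_mul_card_filter_tr hS hh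
  have hfiber := card_filter_tr_le hab (X := S ^ (4 + 2)) (Y := S ^ 8)
    (fun x hx ↦ mul_mem_pow_of_add_le h1 (m := 1) (by rwa [pow_one]) hx (by norm_num))
    (fun x hx ↦ mul_mem_pow_of_add_le h1 hb hx (by norm_num)) (tr h)
  have hs : (0 : ℝ) < #S := by exact_mod_cast Finset.card_pos.2 ⟨1, h1⟩
  generalize #((S ^ 8).image tr) = τ at *
  generalize #{y ∈ S ^ 2 | y * h = h * y} = c at *
  have hcτ : (#S : ℝ) ≤ (c : ℝ) * (2 * (τ : ℝ) ^ 2) := by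
    exact_mod_cast horbit.trans (Nat.mul_le_mul_left c hfiber)
  refine le_of_mul_le_mul_right ?_ (pow_pos hs 2)
  calc (#S : ℝ) * #S ^ 2 = #S ^ 3 := by ring
    _ ≤ ((c : ℝ) * (2 * (τ : ℝ) ^ 2)) ^ 3 := by gcongr
    _ = 8 * (c : ℝ) ^ 3 * ((τ : ℝ) ^ 3) ^ 2 := by ring
    _ ≤ 8 * c ^ 3 * (4096 * L ^ 4 * #S) ^ 2 := by gcongr
    _ = 2 ^ 27 * L ^ 8 * c ^ 3 * #S ^ 2 := by ring

lemma card_sub_one_mul_card_sq_le (F : Type*) [Field F] [Fintype F] [DecidableEq F] :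
    (Fintype.card F - 1) * Fintype.card F ^ 2 ≤ Fintype.card SL(2, F) := by
  let matrixOf (w : Fˣ × F × F) : SL(2, F) :=
    ⟨!![(w.1 : F), w.2.1; w.2.2, (w.1⁻¹ : Fˣ) * (1 + w.2.1 * w.2.2)], by
      rw [Matrix.det_fin_two_of, ← mul_assoc, Units.mul_inv]; ring⟩
  have hinj : Function.Injective matrixOf := fun w w' e ↦ by
    have hentry (i j : Fin 2) : matrixOf w i j = matrixOf w' i j := by rw [e]
    exact Prod.ext (Units.ext (hentry 0 0)) (Prod.ext (hentry 0 1) (hentry 1 0))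
  have := Fintype.card_le_of_injective matrixOf hinj
  rwa [Fintype.card_prod, Fintype.card_prod, Fintype.card_units, ← sq] at this

lemma card_le_card_pow_four (F : Type*) [Field F] [Fintype F] [DecidableEq F] :
    Fintype.card SL(2, F) ≤ Fintype.card F ^ 4 := by
  calc Fintype.card SL(2, F) ≤ Fintype.card (Fin 2 → Fin 2 → F) :=
        Fintype.card_le_of_injective (Subtype.val : SL(2, F) → Matrix (Fin 2) (Fin 2) F)
          Subtype.val_injective
    _ = Fintype.card F ^ 4 := by simp [← pow_mul]

lemma le_of_mul_sub_four_le {n q β k s : ℕ} (hβ : 8 ≤ β) (hq : 2 ≤ q) (hs : 0 < s)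
    (hn : (q - 1) * q ^ 2 ≤ n) (hcount : n * (β - 4) ≤ k * (2 * q * 2)) (hL : 1 ≤ L)
    (hk : k ≤ L * s) (hsβ : s ≤ 2 ^ 27 * L ^ 8 * (β : ℝ) ^ 3) :
    n ≤ 2 ^ 19 * L ^ 6 * s := by
  have hqn : (q : ℝ) ^ 3 ≤ 2 * n := by
    have : q ^ 3 ≤ 2 * n :=
      calc q ^ 3 = q * q ^ 2 := by ring
        _ ≤ 2 * (q - 1) * q ^ 2 := Nat.mul_le_mul_right _ (by omega)
        _ ≤ 2 * n := by rw [mul_assoc]; exact Nat.mul_le_mul_left 2 hn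
    exact_mod_cast this
  have hn₀ : (0 : ℝ) < n :=
    pos_of_mul_pos_right (lt_of_lt_of_le (by positivity) hqn) (zero_le_two (α := ℝ))
  have hs₀ : (0 : ℝ) < s := by exact_mod_cast hs
  have hnβ : (n : ℝ) * β ≤ 8 * q * (L * s) :=
    calc (n : ℝ) * β ≤ 2 * (n * (β - 4 : ℕ)) := by
          exact_mod_cast (Nat.mul_le_mul_left n (by omega : β ≤ 2 * (β - 4))).trans_eq
            (mul_left_comm _ _ _)
      _ ≤ 2 * (k * (2 * q * 2)) := by exact_mod_cast Nat.mul_le_mul_left 2 hcount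
      _ = 8 * q * k := by ring
      _ ≤ 8 * q * (L * s) := by gcongr
  refine le_of_sq_le_sq ?_ (by positivity)
  refine le_of_mul_le_mul_right ?_ (mul_pos hn₀ hs₀)
  calc (n : ℝ) ^ 2 * (n * s) = n ^ 3 * s := by ring
    _ ≤ n ^ 3 * (2 ^ 27 * L ^ 8 * β ^ 3) := by gcongr
    _ = 2 ^ 27 * L ^ 8 * (n * β) ^ 3 := by ring
    _ ≤ 2 ^ 27 * L ^ 8 * (8 * q * (L * s)) ^ 3 := by gcongr
    _ = 2 ^ 36 * L ^ 11 * s ^ 3 * q ^ 3 := by ring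
    _ ≤ 2 ^ 36 * L ^ 11 * s ^ 3 * (2 * n) := by gcongr
    _ = 2 ^ 37 * L ^ 11 * (s ^ 3 * n) := by ring
    _ ≤ 2 ^ 38 * L ^ 12 * (s ^ 3 * n) := by gcongr <;> norm_num
    _ = (2 ^ 19 * L ^ 6 * s) ^ 2 * (n * s) := by ring

lemma four_le_card_image_tr (h1 : 1 ∈ S) {a b : SL(2, F)} (ha : a ∈ S) (hb : b ∈ S ^ 2)
    (hab : commDet a b ≠ 0) (hs : 54 < #S) : 4 ≤ #((S ^ 3).image tr) := by
  have hcard := card_le_two_mul_card_image_tr_pow_three hab (X := S) (Y := S ^ 3)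
    (Finset.subset_pow h1 three_ne_zero)
    (fun x hx ↦ mul_mem_pow_of_add_le h1 (m := 1) (n := 1) (by rwa [pow_one])
      (by rwa [pow_one]) (by norm_num))
    (fun x hx ↦ mul_mem_pow_of_add_le h1 hb (n := 1) (by rwa [pow_one]) le_rfl)
  by_contra! h
  have := Nat.pow_le_pow_left (Nat.le_of_lt_succ h) 3
  omega

lemma card_le_or_card_le [Fintype F] (hF : 4 ≤ Fintype.card F) (h1 : 1 ∈ S) (hS : S⁻¹ = S)
    (hgen : Subgroup.closure (S : Set SL(2, F)) = ⊤) (hL₁ : 1 ≤ L) (hL : #(S ^ 10) ≤ L * #S) :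
    (#S : ℝ) ≤ 2 ^ 40 * L ^ 8 ∨ (Fintype.card SL(2, F) : ℝ) ≤ 2 ^ 19 * L ^ 6 * #S := by
  refine or_iff_not_imp_left.2 fun hlarge ↦ ?_
  rw [not_le] at hlarge
  have hL₈ : 1 ≤ L ^ 8 := one_le_pow₀ hL₁
  have hs : 54 < #S := by
    have : (54 : ℝ) < #S := by linarith
    exact_mod_cast this
  obtain ⟨a, ha, b, hb, hab⟩ := exists_commDet_ne_zero_of_closure_eq_top hgen h1
  rw [← Finset.coe_mul, Finset.mem_coe, ← sq] at hb
  have htr₃ := four_le_card_image_tr h1 ha hb hab hs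
  have htr₈ : 4 ≤ #((S ^ 8).image tr) := htr₃.trans <| Finset.card_le_card <|
    Finset.image_subset_image <| Finset.pow_subset_pow_right h1 (by norm_num)
  have hτ := card_image_tr_pow_three_le (by rwa [Nat.card_eq_fintype_card]) h1 hS hgen hL htr₈
  obtain ⟨h, hh, hreg, -⟩ := exists_isRegular_card_sub_two_mul_card_le h1 (m := 3) (by omega)
  replace hh : h ∈ S ^ 4 := Finset.pow_subset_pow_right h1 (by norm_num) hh
  obtain ⟨g, hg, hmin⟩ := Finset.exists_min_image {h ∈ S ^ 4 | IsRegular h}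
    (fun h ↦ #{y ∈ S ^ 2 | y * h = h * y}) ⟨h, Finset.mem_filter.2 ⟨hh, hreg⟩⟩
  have hsβ := card_le_mul_card_filter_commute_pow_three hS h1 ha hb hab hτ
    (Finset.mem_filter.1 hg).1
  have hβ : 8 ≤ #{y ∈ S ^ 2 | y * g = g * y} := by
    by_contra! hβ
    have hβ' : (#{y ∈ S ^ 2 | y * g = g * y} : ℝ) ≤ 7 := by exact_mod_cast Nat.le_of_lt_succ hβ
    have : 2 ^ 27 * L ^ 8 * (#{y ∈ S ^ 2 | y * g = g * y} : ℝ) ^ 3 ≤ 2 ^ 27 * L ^ 8 * 7 ^ 3 := by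
      gcongr
    linarith
  have hcount := card_mul_sub_four_le hS hgen (by omega : 5 ≤ #{y ∈ S ^ 2 | y * g = g * y})
    (fun h hh hreg ↦ hmin h (Finset.mem_filter.2 ⟨hh, hreg⟩)) hh hreg
  have hS₂ : (#(S ^ 2) : ℝ) ≤ L * #S := le_trans
    (by exact_mod_cast Finset.card_le_card (Finset.pow_subset_pow_right h1 (by norm_num))) hL
  exact le_of_mul_sub_four_le hβ (by omega) (by omega) (card_sub_one_mul_card_sq_le F) hcount
    hL₁ hS₂ hsβ

end Dichotomy

section Fourier

open Multiplicative

variable {H W : Type*} [AddCommGroup H] [Fintype H] [AddCommGroup W] [Module ℂ W]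

/-- The (unnormalized) projection of a representation of a finite abelian group onto its
`ψ`-isotypic component. -/
noncomputable def weightProj (ρ : Representation ℂ (Multiplicative H) W) (ψ : AddChar H ℂ) :
    Module.End ℂ W :=
  ∑ t, ψ (-t) • ρ (ofAdd t)

variable (ρ : Representation ℂ (Multiplicative H) W)

lemma weightProj_apply (ψ : AddChar H ℂ) (f : W) :
    weightProj ρ ψ f = ∑ t, ψ (-t) • ρ (ofAdd t) f := by
  simp [weightProj]

lemma apply_weightProj (ψ : AddChar H ℂ) (t : H) (f : W) :
    ρ (ofAdd t) (weightProj ρ ψ f) = ψ t • weightProj ρ ψ f := by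
  simp only [weightProj_apply, map_sum, map_smul, Finset.smul_sum, smul_smul]
  refine Fintype.sum_equiv (Equiv.addLeft t) _ _ fun s ↦ ?_
  rw [Equiv.coe_addLeft, ← AddChar.map_add_eq_mul, neg_add, add_neg_cancel_left, ofAdd_add, map_mul,
    Module.End.mul_apply]

lemma weightProj_apply_of_weight [DecidableEq (AddChar H ℂ)] {χ : AddChar H ℂ} {w : W}
    (hw : ∀ t, ρ (ofAdd t) w = χ t • w) (ψ : AddChar H ℂ) :
    weightProj ρ ψ w = if χ = ψ then (Fintype.card H : ℂ) • w else 0 := by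
  have orthogonality := AddChar.sum_eq_ite (χ - ψ)
  simp only [AddChar.sub_apply', sub_eq_zero] at orthogonality
  simp only [weightProj_apply, hw, smul_smul, ← Finset.sum_smul, AddChar.map_neg_eq_inv,
    ← div_eq_inv_mul]
  rw [orthogonality, ite_smul, zero_smul]

omit [Fintype H] in
lemma linearIndependent_of_weight [Finite H] {ι : Type*} {χ : ι → AddChar H ℂ}
    (hχ : Function.Injective χ) {w : ι → W} (hw : ∀ i t, ρ (ofAdd t) (w i) = χ i t • w i)
    (hw₀ : ∀ i, w i ≠ 0) : LinearIndependent ℂ w := by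
  classical
  have := Fintype.ofFinite H
  refine linearIndependent_iff'.2 fun s a ha j hj ↦ ?_
  have hproj := congrArg (weightProj ρ (χ j)) ha
  simp only [map_sum, map_smul, map_zero, weightProj_apply_of_weight ρ (hw _), hχ.eq_iff, smul_ite,
    smul_zero, Finset.sum_ite_eq', if_pos hj] at hproj
  simpa [hw₀ j] using hproj

lemma sum_weightProj (f : W) : ∑ ψ, weightProj ρ ψ f = (Fintype.card H : ℂ) • f := by
  classical
  simp only [weightProj_apply]
  rw [Finset.sum_comm]
  simp only [← Finset.sum_smul, AddChar.sum_apply_eq_ite, neg_eq_zero, ite_smul, zero_smul,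
    Finset.sum_ite_eq', Finset.mem_univ, if_true, ofAdd_zero, map_one, Module.End.one_apply]

lemma exists_weightProj_ne_zero {t : H} {f : W} (hf : ρ (ofAdd t) f ≠ f) :
    ∃ ψ ≠ 0, weightProj ρ ψ f ≠ 0 := by
  by_contra! htriv
  have hsum := sum_weightProj ρ f
  rw [Finset.sum_eq_single_of_mem 0 (Finset.mem_univ _) fun ψ _ ↦ htriv ψ] at hsum
  have hfix := apply_weightProj ρ 0 t f
  rw [hsum, map_smul, AddChar.zero_apply, one_smul] at hfix
  exact hf (smul_right_injective W (Nat.cast_ne_zero.2 Fintype.card_ne_zero) hfix)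

end Fourier

section Quasirandom

universe u

/-- Gowers' quasirandomness: every nontrivial finite-dimensional complex representation of `G` has
dimension at least `d`. Representations on spaces in the universe of `G` suffice, as the regular
representation lives there. -/
def IsQuasirandom (d : ℕ) (G : Type u) [Group G] : Prop :=
  ∀ (W : Type u) [AddCommGroup W] [Module ℂ W] [FiniteDimensional ℂ W] (ρ : Representation ℂ G W),
    ¬ρ.IsTrivial → d ≤ Module.finrank ℂ W

variable (F : Type*) [Field F]

/-- The one-parameter subgroup of upper unitriangular matrices. -/
def unipotent : Multiplicative F →* SL(2, F) where
  toFun t := Matrix.SpecialLinearGroup.transvection zero_ne_one t.toAdd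
  map_one' := Matrix.SpecialLinearGroup.transvection_coeff_zero _
  map_mul' _ _ := Matrix.SpecialLinearGroup.transvection_add _ _ _

variable {F}

lemma coe_unipotent (t : Multiplicative F) : (unipotent F t).1 = !![1, t.toAdd; 0, 1] := by
  change (1 + Matrix.single 0 1 t.toAdd : Matrix (Fin 2) (Fin 2) F) = _
  ext i j
  fin_cases i <;> fin_cases j <;> simp

lemma eq_top_of_unipotent_le {N : Subgroup SL(2, F)} [hN : N.Normal]
    (h : (unipotent F).range ≤ N) : N = ⊤ := by
  obtain ⟨weyl, hweyl⟩ : ∃ w : SL(2, F), w.1 = !![0, 1; -1, 0] := ⟨⟨_, by simp⟩, rfl⟩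
  have lower (c : F) : Matrix.SpecialLinearGroup.transvection one_ne_zero c =
      weyl * unipotent F (.ofAdd (-c)) * weyl⁻¹ := by
    rw [eq_mul_inv_iff_mul_eq]
    apply Subtype.ext
    rw [Matrix.SpecialLinearGroup.coe_mul, Matrix.SpecialLinearGroup.coe_mul, coe_unipotent, hweyl]
    ext i j
    fin_cases i <;> fin_cases j <;>
      simp [Matrix.SpecialLinearGroup.transvection, Matrix.transvection, Matrix.mul_apply]
  refine (Subgroup.eq_top_iff' N).2 fun g ↦
    Matrix.SL2.transvection_induction (· ∈ N) (fun i j hij c ↦ ?_) (fun _ _ ↦ N.mul_mem) g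
  fin_cases i <;> fin_cases j
  · exact absurd rfl hij
  · exact h ⟨.ofAdd c, rfl⟩
  · exact lower c ▸ hN.conj_mem _ (h ⟨_, rfl⟩) weyl
  · exact absurd rfl hij

lemma exists_unipotent_apply_ne {W : Type*} [AddCommGroup W] [Module ℂ W]
    {ρ : Representation ℂ SL(2, F) W} (hρ : ¬ρ.IsTrivial) :
    ∃ t f, ρ (unipotent F t) f ≠ f := by
  by_contra! hfix
  refine hρ ⟨fun g ↦ ?_⟩
  have hker : ρ.ker = ⊤ := eq_top_of_unipotent_le fun _ ⟨t, ht⟩ ↦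
    MonoidHom.mem_ker.2 <| ht ▸ LinearMap.ext (hfix t)
  exact MonoidHom.mem_ker.1 (hker ▸ Subgroup.mem_top g)

lemma exists_unipotent_mul_eq_mul_unipotent (b : Fˣ) :
    ∃ d : SL(2, F), ∀ t : F,
      unipotent F (.ofAdd t) * d = d * unipotent F (.ofAdd (↑(b * b) * t)) := by
  obtain ⟨d, hd⟩ : ∃ d : SL(2, F), d.1 = !![(b⁻¹ : F), 0; 0, (b : F)] := ⟨⟨_, by simp⟩, rfl⟩
  refine ⟨d, fun t ↦ Subtype.ext ?_⟩
  rw [Matrix.SpecialLinearGroup.coe_mul, Matrix.SpecialLinearGroup.coe_mul, coe_unipotent,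
    coe_unipotent, hd]
  ext i j
  fin_cases i <;> fin_cases j <;> simp [Matrix.mul_apply]
  field_simp

variable [Finite F]

lemma card_sub_one_le_two_mul_card_isSquare :
    Nat.card F - 1 ≤ 2 * Nat.card {c : Fˣ // IsSquare c} := by
  classical
  have := Fintype.ofFinite F
  let square (b : Fˣ) : {c : Fˣ // IsSquare c} := ⟨b * b, b, rfl⟩
  have hfiber (c) : #{b | square b = c} ≤ 2 := by
    obtain ⟨_, b, rfl⟩ := c
    refine (Finset.card_le_card (t := {b, -b}) fun x hx ↦ ?_).trans Finset.card_le_two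
    have hx : (x * x : F) = b * b := by
      exact_mod_cast congrArg Subtype.val (Finset.mem_filter.1 hx).2
    simpa [Units.ext_iff] using mul_self_eq_mul_self_iff.1 hx
  calc Nat.card F - 1 = #(Finset.univ : Finset Fˣ) := by
        rw [Finset.card_univ, Fintype.card_units, Nat.card_eq_fintype_card]
    _ ≤ 2 * #(Finset.univ.image square) :=
        Finset.card_le_mul_card_image _ _ fun c _ ↦ hfiber c
    _ ≤ 2 * Nat.card {c : Fˣ // IsSquare c} := by
        rw [Nat.card_eq_fintype_card]
        exact Nat.mul_le_mul_left 2 (Finset.card_le_univ _)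

lemma isQuasirandom_specialLinearGroup_two : IsQuasirandom (Nat.card F / 2) SL(2, F) := by
  have := Fintype.ofFinite F
  intro W _ _ _ ρ hρ
  obtain ⟨t, f, hf⟩ := exists_unipotent_apply_ne hρ
  set τ : Representation ℂ (Multiplicative F) W := ρ.comp (unipotent F)
  obtain ⟨ψ, hψ, hv⟩ := exists_weightProj_ne_zero τ (t := t.toAdd) hf
  choose d hd using exists_unipotent_mul_eq_mul_unipotent (F := F)
  have hweight (c : {c : Fˣ // IsSquare c}) :
      ∃ w ≠ 0, ∀ s, τ (.ofAdd s) w = ψ.mulShift (c : Fˣ) s • w := by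
    obtain ⟨_, b, rfl⟩ := c
    refine ⟨ρ (d b) (weightProj τ ψ f), ?_, fun s ↦ ?_⟩
    · exact fun h ↦ hv ((ρ.apply_bijective (d b)).1 (h.trans (map_zero _).symm))
    · calc τ (.ofAdd s) (ρ (d b) (weightProj τ ψ f))
          = ρ (unipotent F (.ofAdd s) * d b) (weightProj τ ψ f) := by rw [map_mul]; rfl
        _ = ρ (d b) (τ (.ofAdd (↑(b * b) * s)) (weightProj τ ψ f)) := by rw [hd, map_mul]; rfl
        _ = ψ.mulShift ↑(b * b) s • ρ (d b) (weightProj τ ψ f) := by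
          rw [apply_weightProj, map_smul, AddChar.mulShift_apply]
  choose w hw₀ hw using hweight
  have hinj : Function.Injective fun c : {c : Fˣ // IsSquare c} ↦ ψ.mulShift ((c : Fˣ) : F) :=
    (AddChar.to_mulShift_inj_of_isPrimitive (.of_ne_one hψ)).comp
      (Units.val_injective.comp Subtype.val_injective)
  have hli := linearIndependent_of_weight τ hinj hw hw₀
  have hdim : Nat.card {c : Fˣ // IsSquare c} ≤ Module.finrank ℂ W := by
    classical
    rw [Nat.card_eq_fintype_card]
    exact hli.fintype_card_le_finrank
  have := card_sub_one_le_two_mul_card_isSquare (F := F)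
  omega

end Quasirandom

section Spectral

open scoped InnerProductSpace

variable {V : Type*} [NormedAddCommGroup V] [InnerProductSpace ℂ V] [FiniteDimensional ℂ V]
variable {n : ℕ} {S : V →ₗ[ℂ] V}

lemma re_inner_apply_self_eq_sum (hS : S.IsSymmetric) (hn : Module.finrank ℂ V = n) (f : V) :
    (⟪S f, f⟫_ℂ).re = ∑ i, hS.eigenvalues hn i * ‖⟪hS.eigenvectorBasis hn i, f⟫_ℂ‖ ^ 2 := by
  rw [← (hS.eigenvectorBasis hn).sum_inner_mul_inner, Complex.re_sum]
  refine Finset.sum_congr rfl fun i _ ↦ ?_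
  rw [hS, hS.apply_eigenvectorBasis, inner_smul_right, mul_assoc, ← inner_conj_symm f,
    Complex.conj_mul']
  simp [← Complex.ofReal_pow]

lemma mul_eigenvalue_le_re_trace (hS : S.IsPositive) (hn : Module.finrank ℂ V = n) {d : ℕ}
    (hd : ∀ μ : ℂ, μ ≠ 0 → Module.End.HasEigenvalue S μ →
      d ≤ Module.finrank ℂ (Module.End.eigenspace S μ)) (i : Fin n) :
    d * hS.isSymmetric.eigenvalues hn i ≤ (S.trace ℂ V).re := by
  set eig := hS.isSymmetric.eigenvalues hn
  have hnonneg (j) : 0 ≤ eig j := hS.nonneg_eigenvalues hn j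
  have htrace : (S.trace ℂ V).re = ∑ j, eig j := hS.isSymmetric.re_trace_eq_sum_eigenvalues hn
  rcases (hnonneg i).eq_or_lt' with h₀ | hpos
  · rw [h₀, mul_zero, htrace]
    exact Finset.sum_nonneg fun j _ ↦ hnonneg j
  have hmult : d ≤ #{j | (eig j : ℂ) = eig i} :=
    (hd _ (Complex.ofReal_ne_zero.2 hpos.ne') (hS.isSymmetric.hasEigenvalue_eigenvalues hn i)).trans
      (hS.isSymmetric.card_filter_eigenvalues_eq hn _).ge
  calc (d : ℝ) * eig i ≤ #{j | (eig j : ℂ) = eig i} * eig i := by gcongr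
    _ = ∑ j with (eig j : ℂ) = eig i, eig j := by
      rw [← nsmul_eq_mul, ← Finset.sum_const]
      exact Finset.sum_congr rfl fun j hj ↦
        (Complex.ofReal_injective (Finset.mem_filter.1 hj).2).symm
    _ ≤ ∑ j, eig j := Finset.sum_le_sum_of_subset_of_nonneg (Finset.filter_subset _ _)
      fun j _ _ ↦ hnonneg j
    _ = (S.trace ℂ V).re := htrace.symm

lemma mul_norm_apply_sq_le {W : Type*} [NormedAddCommGroup W] [InnerProductSpace ℂ W]
    [FiniteDimensional ℂ W] (T : V →ₗ[ℂ] W) {d : ℕ}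
    (hd : ∀ μ : ℂ, μ ≠ 0 → Module.End.HasEigenvalue (T.adjoint ∘ₗ T) μ →
      d ≤ Module.finrank ℂ (Module.End.eigenspace (T.adjoint ∘ₗ T) μ))
    {ι : Type*} [Fintype ι] (b : OrthonormalBasis ι ℂ V) (f : V) :
    d * ‖T f‖ ^ 2 ≤ (∑ i, ‖T (b i)‖ ^ 2) * ‖f‖ ^ 2 := by
  set S := T.adjoint ∘ₗ T with hST
  have hS : S.IsPositive := T.isPositive_adjoint_comp_self
  have htrace : (S.trace ℂ V).re = ∑ i, ‖T (b i)‖ ^ 2 := by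
    rw [LinearMap.trace_eq_sum_inner S b, Complex.re_sum]
    refine Finset.sum_congr rfl fun i _ ↦ ?_
    rw [hST, LinearMap.comp_apply, LinearMap.adjoint_inner_right]
    exact inner_self_eq_norm_sq (𝕜 := ℂ) _
  have hnorm : ‖T f‖ ^ 2 = (⟪S f, f⟫_ℂ).re := by
    rw [hST, LinearMap.comp_apply, LinearMap.adjoint_inner_left]
    exact (inner_self_eq_norm_sq (𝕜 := ℂ) _).symm
  rw [hnorm, re_inner_apply_self_eq_sum hS.isSymmetric rfl, ← htrace,
    ← (hS.isSymmetric.eigenvectorBasis rfl).sum_sq_norm_inner_right f, Finset.mul_sum,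
    Finset.mul_sum]
  refine Finset.sum_le_sum fun i _ ↦ ?_
  rw [← mul_assoc]
  exact mul_le_mul_of_nonneg_right (mul_eigenvalue_le_re_trace hS rfl hd i) (sq_nonneg _)

lemma adjoint_comp_self_commute {T : V →ₗ[ℂ] V} {U : V ≃ₗᵢ[ℂ] V}
    (h : ∀ f, T (U f) = U (T f)) (f : V) : (T.adjoint ∘ₗ T) (U f) = U ((T.adjoint ∘ₗ T) f) := by
  refine ext_inner_right ℂ fun w ↦ ?_
  obtain ⟨w, rfl⟩ := U.surjective w
  simp only [LinearMap.comp_apply, LinearMap.adjoint_inner_left, LinearIsometryEquiv.inner_map_map,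
    h]

end Spectral

section BalancedIndicator

variable {G : Type*} [Fintype G] [DecidableEq G]

/-- The function `|G| • 1_A - |A|`, the indicator of `A` made orthogonal to the constants and scaled
to have integral values. -/
def balancedIndicator (A : Finset G) (g : G) : ℂ :=
  Fintype.card G * (if g ∈ A then 1 else 0) - #A

lemma sum_balancedIndicator (A : Finset G) : ∑ g, balancedIndicator A g = 0 := by
  simp [balancedIndicator, Finset.sum_sub_distrib, mul_comm]

lemma sum_norm_balancedIndicator_sq_le (A : Finset G) :
    ∑ g, ‖balancedIndicator A g‖ ^ 2 ≤ Fintype.card G ^ 2 * #A := by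
  have hterm (g : G) : ‖balancedIndicator A g‖ ^ 2 =
      (Fintype.card G ^ 2 - 2 * Fintype.card G * #A : ℝ) * (if g ∈ A then 1 else 0) + #A ^ 2 := by
    have hcast : balancedIndicator A g =
        ((Fintype.card G * (if g ∈ A then 1 else 0) - #A : ℝ) : ℂ) := by
      rw [balancedIndicator]; split_ifs <;> simp
    rw [hcast, Complex.norm_real, Real.norm_eq_abs, sq_abs]
    split_ifs <;> ring
  have hsum : ∑ g, ‖balancedIndicator A g‖ ^ 2 =
      Fintype.card G ^ 2 * #A - Fintype.card G * (#A : ℝ) ^ 2 := by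
    simp only [hterm, Finset.sum_add_distrib, ← Finset.mul_sum, Finset.sum_ite_mem,
      Finset.univ_inter, Finset.sum_const, Finset.card_univ, nsmul_eq_mul, mul_one]
    ring
  rw [hsum, sub_le_self_iff]
  positivity

end BalancedIndicator

section Mixing

universe u

variable {G : Type u} [Group G] {d : ℕ}

lemma IsQuasirandom.mul_norm_apply_sq_le (hG : IsQuasirandom d G) {V : Type u}
    [NormedAddCommGroup V] [InnerProductSpace ℂ V] [FiniteDimensional ℂ V]
    (ρ : G →* V ≃ₗᵢ[ℂ] V) {T : V →ₗ[ℂ] V} (hcomm : ∀ g f, T (ρ g f) = ρ g (T f))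
    (hinv : ∀ f, (∀ g, ρ g f = f) → T f = 0) {ι : Type*} [Fintype ι] (b : OrthonormalBasis ι ℂ V)
    (f : V) : d * ‖T f‖ ^ 2 ≤ (∑ i, ‖T (b i)‖ ^ 2) * ‖f‖ ^ 2 := by
  refine Helfgott.mul_norm_apply_sq_le T (fun μ hμ heig ↦ ?_) b f
  set E := Module.End.eigenspace (T.adjoint ∘ₗ T) μ
  let ρ' : Representation ℂ G V :=
    { toFun g := (ρ g).toLinearEquiv.toLinearMap
      map_one' := by rw [map_one]; rfl
      map_mul' g h := by rw [map_mul]; rfl }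
  have hE (g : G) : E ≤ E.comap (ρ' g) := fun f hf ↦ Module.End.mem_eigenspace_iff.2 <| by
    calc (T.adjoint ∘ₗ T) (ρ g f) = ρ g (μ • f) := by
          rw [adjoint_comp_self_commute (hcomm g), Module.End.mem_eigenspace_iff.1 hf]
      _ = μ • ρ g f := map_smul _ _ _
  refine hG E (ρ'.subrepresentation E hE) fun htriv ↦ ?_
  obtain ⟨f, hf, hf₀⟩ := heig.exists_hasEigenvector
  have hfix (g : G) : ρ g f = f :=
    congrArg Subtype.val ((ρ'.subrepresentation E hE).isTrivial_apply g ⟨f, hf⟩)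
  have hμf : μ • f = 0 := by
    rw [← Module.End.mem_eigenspace_iff.1 hf, LinearMap.comp_apply, hinv f hfix, map_zero]
  exact (smul_ne_zero hμ hf₀) hμf

variable [Fintype G]

/-- The right regular representation on `ℓ²(G)`. -/
noncomputable def rightRegular (G : Type*) [Group G] [Fintype G] :
    G →* EuclideanSpace ℂ G ≃ₗᵢ[ℂ] EuclideanSpace ℂ G where
  toFun g := LinearIsometryEquiv.piLpCongrLeft 2 ℂ ℂ (Equiv.mulRight g⁻¹)
  map_one' := by
    ext f x
    exact congrArg f (show x * (1⁻¹)⁻¹ = x by simp)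
  map_mul' g h := by
    ext f x
    exact congrArg f (by simp [Equiv.Perm.mul_def, mul_assoc])

lemma rightRegular_apply (g : G) (f : EuclideanSpace ℂ G) (x : G) :
    rightRegular G g f x = f (x * g) := by
  simp [rightRegular, LinearIsometryEquiv.piLpCongrLeft_apply, Equiv.piCongrLeft']

/-- Convolution `f ↦ c * f` on `ℓ²(G)`, i.e. `(c * f) x = ∑ y, c (x * y⁻¹) * f y`. -/
noncomputable def convolution [DecidableEq G] (c : G → ℂ) :
    EuclideanSpace ℂ G →ₗ[ℂ] EuclideanSpace ℂ G :=
  Matrix.toLpLin 2 2 (Matrix.of fun x y ↦ c (x * y⁻¹))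

variable [DecidableEq G]

lemma convolution_apply (c : G → ℂ) (f : EuclideanSpace ℂ G) (x : G) :
    convolution c f x = ∑ y, c (x * y⁻¹) * f y := by
  simp [convolution, Matrix.toLpLin_apply, Matrix.mulVec, dotProduct]

lemma convolution_rightRegular (c : G → ℂ) (g : G) (f : EuclideanSpace ℂ G) :
    convolution c (rightRegular G g f) = rightRegular G g (convolution c f) := by
  ext x
  simp only [convolution_apply, rightRegular_apply]
  exact Fintype.sum_equiv (Equiv.mulRight g) _ _ fun y ↦ by simp [mul_assoc]

lemma convolution_eq_zero_of_invariant {c : G → ℂ} (hc : ∑ g, c g = 0) {f : EuclideanSpace ℂ G}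
    (hf : ∀ g, rightRegular G g f = f) : convolution c f = 0 := by
  have hconst (x : G) : f x = f 1 := by
    rw [← one_mul x, ← rightRegular_apply, hf]
  ext x
  have hsum : ∑ y, c (x * y⁻¹) = 0 := hc ▸
    Fintype.sum_equiv ((Equiv.inv G).trans (Equiv.mulLeft x)) _ _ fun _ ↦ rfl
  simp only [convolution_apply, hconst, ← Finset.sum_mul, hsum, zero_mul]
  rfl

lemma norm_convolution_basisFun_sq (c : G → ℂ) (y : G) :
    ‖convolution c (EuclideanSpace.basisFun G ℂ y)‖ ^ 2 = ∑ g, ‖c g‖ ^ 2 := by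
  rw [EuclideanSpace.norm_sq_eq]
  refine Fintype.sum_equiv (Equiv.mulRight y⁻¹) _ _ fun x ↦ ?_
  simp [convolution_apply]

lemma IsQuasirandom.mul_norm_convolution_sq_le (hG : IsQuasirandom d G) {c : G → ℂ}
    (hc : ∑ g, c g = 0) (f : EuclideanSpace ℂ G) :
    d * ‖convolution c f‖ ^ 2 ≤ Fintype.card G * (∑ g, ‖c g‖ ^ 2) * ‖f‖ ^ 2 := by
  have h := hG.mul_norm_apply_sq_le (rightRegular G) (convolution_rightRegular c)
    (fun _ ↦ convolution_eq_zero_of_invariant hc) (EuclideanSpace.basisFun G ℂ) f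
  simpa only [norm_convolution_basisFun_sq, Finset.sum_const, Finset.card_univ, nsmul_eq_mul]
    using h

lemma convolution_balancedIndicator_apply {A B : Finset G} {x : G} (hx : x ∉ A * B) :
    convolution (balancedIndicator A) (WithLp.toLp 2 fun y ↦ if y ∈ B then 1 else 0) x =
      -(#A * #B) := by
  have hmem (y : G) (hy : y ∈ B) : x * y⁻¹ ∉ A := fun hA ↦
    hx (by simpa using Finset.mul_mem_mul hA hy)
  calc convolution (balancedIndicator A) (WithLp.toLp 2 fun y ↦ if y ∈ B then 1 else 0) x
      = ∑ y ∈ B, balancedIndicator A (x * y⁻¹) := by simp [convolution_apply]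
    _ = ∑ _ ∈ B, -(#A : ℂ) := Finset.sum_congr rfl fun _ hy ↦ by
      simp [balancedIndicator, hmem _ hy]
    _ = -(#A * #B) := by simp [mul_comm]

lemma IsQuasirandom.mul_card_compl_mul_le (hG : IsQuasirandom d G) (A B : Finset G) :
    d * #(A * B)ᶜ * (#A * #B) ≤ Fintype.card G ^ 3 := by
  rcases Nat.eq_zero_or_pos (#A * #B) with h₀ | hpos
  · simp [h₀]
  set f : EuclideanSpace ℂ G := WithLp.toLp 2 fun y ↦ if y ∈ B then 1 else 0
  have hf : ‖f‖ ^ 2 = #B := by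
    simp [f, EuclideanSpace.norm_sq_eq, apply_ite (‖·‖)]
  have hlower : #(A * B)ᶜ * (#A * #B : ℝ) ^ 2 ≤ ‖convolution (balancedIndicator A) f‖ ^ 2 := by
    rw [EuclideanSpace.norm_sq_eq, ← nsmul_eq_mul, ← Finset.sum_const]
    refine (Finset.sum_congr rfl fun x hx ↦ ?_).trans_le
      (Finset.sum_le_sum_of_subset_of_nonneg (Finset.subset_univ _) fun _ _ _ ↦ sq_nonneg _)
    rw [convolution_balancedIndicator_apply (Finset.mem_compl.1 hx), norm_neg]
    simp
  have hmain : d * (#(A * B)ᶜ * (#A * #B : ℝ) ^ 2) ≤ Fintype.card G ^ 3 * (#A * #B) :=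
    calc d * (#(A * B)ᶜ * (#A * #B : ℝ) ^ 2)
        ≤ d * ‖convolution (balancedIndicator A) f‖ ^ 2 := by gcongr
      _ ≤ Fintype.card G * (∑ g, ‖balancedIndicator A g‖ ^ 2) * ‖f‖ ^ 2 :=
        hG.mul_norm_convolution_sq_le (sum_balancedIndicator A) f
      _ ≤ Fintype.card G * (Fintype.card G ^ 2 * #A) * #B := by
        rw [hf]
        gcongr
        exact sum_norm_balancedIndicator_sq_le A
      _ = Fintype.card G ^ 3 * (#A * #B) := by ring
  refine Nat.le_of_mul_le_mul_right (c := #A * #B) ?_ hpos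
  rify
  linarith

lemma card_le_two_mul_card_mul_self {F : Type*} [Field F] [Fintype F] [DecidableEq F]
    {A : Finset SL(2, F)}
    (hA : 4 * Fintype.card SL(2, F) ^ 2 ≤ (Fintype.card F - 1) * #A ^ 2) :
    Fintype.card SL(2, F) ≤ 2 * #(A * A) := by
  have hmix := isQuasirandom_specialLinearGroup_two (F := F).mul_card_compl_mul_le A A
  set n := Fintype.card SL(2, F)
  have hd : Fintype.card F - 1 ≤ 2 * (Nat.card F / 2) := by
    rw [Nat.card_eq_fintype_card]; omega
  have hcompl : 2 * #(A * A)ᶜ ≤ n := by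
    refine Nat.le_of_mul_le_mul_left (c := 2 * n ^ 2) ?_ (by positivity)
    calc 2 * n ^ 2 * (2 * #(A * A)ᶜ) = 4 * n ^ 2 * #(A * A)ᶜ := by ring
      _ ≤ 2 * (Nat.card F / 2) * #A ^ 2 * #(A * A)ᶜ :=
        Nat.mul_le_mul_right _ (hA.trans (by gcongr))
      _ = 2 * (Nat.card F / 2 * #(A * A)ᶜ * (#A * #A)) := by ring
      _ ≤ 2 * n ^ 3 := by gcongr
      _ = 2 * n ^ 2 * n := by ring
  have := Finset.card_add_card_compl (A * A)
  omega

end Mixing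

section Symmetrization

variable {G : Type*} [Group G] [DecidableEq G] {A : Finset G}

lemma inv_insert_one_union_inv (A : Finset G) :
    (insert 1 (A ∪ A⁻¹))⁻¹ = insert 1 (A ∪ A⁻¹) := by
  ext x
  simp [or_comm]

lemma card_insert_one_union_inv_le (hA : A.Nonempty) : #(insert 1 (A ∪ A⁻¹)) ≤ 4 * #A := by
  have hinsert := Finset.card_insert_le 1 (A ∪ A⁻¹)
  have hunion := Finset.card_union_le A A⁻¹
  rw [Finset.card_inv] at hunion
  have := hA.card_pos
  omega

lemma card_insert_one_union_inv_pow_le (hA : A.Nonempty) {K : ℝ} (hK : #(A ^ 3) ≤ K * #A) {m : ℕ}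
    (hm : 3 ≤ m) :
    #((insert 1 (A ∪ A⁻¹)) ^ m) ≤ (m + 1) * (2 ^ m * K ^ (3 * (m - 2)) * #A) :=
  calc (#((insert 1 (A ∪ A⁻¹)) ^ m) : ℝ) ≤ (m + 1) * #((A ∪ A⁻¹) ^ m) := by
        exact_mod_cast card_insert_one_pow_le (hA.mono Finset.subset_union_left) m
    _ ≤ (m + 1) * (2 ^ m * K ^ (3 * (m - 2)) * #A) := by
        gcongr
        exact card_pow_union_inv_le hK hm

end Symmetrization

section Growth

variable {K : ℝ}

lemma two_pow_mul_pow_le (hK : 1 ≤ K) {a b m : ℕ} (ha : a ≤ 2 * m) (hb : b ≤ m) :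
    2 ^ a * K ^ b ≤ (4 * K) ^ m :=
  calc 2 ^ a * K ^ b ≤ 2 ^ (2 * m) * K ^ m := by gcongr; norm_num
    _ = (4 * K) ^ m := by rw [pow_mul, mul_pow]; norm_num

variable {F : Type*} [Field F] [Fintype F] [DecidableEq F] {A : Finset SL(2, F)}

lemma card_le_two_pow_mul_pow_or_card_le (hF : 4 ≤ Fintype.card F) (hA : A.Nonempty)
    (hgen : Subgroup.closure (A : Set SL(2, F)) = ⊤) (hK₁ : 1 ≤ K) (hK : #(A ^ 3) ≤ K * #A) :
    (#A : ℝ) ≤ 2 ^ 152 * K ^ 192 ∨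
      (Fintype.card SL(2, F) : ℝ) ≤ 2 ^ 105 * K ^ 144 * #A := by
  obtain ⟨S, hS⟩ : ∃ S, S = insert 1 (A ∪ A⁻¹) := ⟨_, rfl⟩
  have hAS : A ⊆ S := hS ▸ Finset.subset_union_left.trans (Finset.subset_insert _ _)
  have hSgen : Subgroup.closure (S : Set SL(2, F)) = ⊤ :=
    top_le_iff.1 (hgen ▸ Subgroup.closure_mono (Finset.coe_subset.2 hAS))
  have hcard : (#A : ℝ) ≤ #S := by exact_mod_cast Finset.card_le_card hAS
  have hS₄ : (#S : ℝ) ≤ 4 * #A := by exact_mod_cast hS ▸ card_insert_one_union_inv_le hA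
  have hpow : (#(S ^ 10) : ℝ) ≤ 2 ^ 14 * K ^ 24 * #S := by
    have hten : (#(S ^ 10) : ℝ) ≤ 11 * (2 ^ 10 * K ^ 24 * #A) := by
      convert card_insert_one_union_inv_pow_le hA hK (m := 10) (by norm_num) using 2
      · rw [hS]
      · norm_num
    calc (#(S ^ 10) : ℝ) ≤ 11 * (2 ^ 10 * K ^ 24 * #A) := hten
      _ ≤ 2 ^ 4 * (2 ^ 10 * K ^ 24 * #S) := by gcongr; norm_num
      _ = 2 ^ 14 * K ^ 24 * #S := by ring
  have hL : 1 ≤ 2 ^ 14 * K ^ 24 := one_le_mul_of_one_le_of_one_le (by norm_num) (one_le_pow₀ hK₁)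
  refine (card_le_or_card_le hF (hS ▸ Finset.mem_insert_self _ _)
    (hS ▸ inv_insert_one_union_inv A) hSgen hL hpow).imp (fun hsmall ↦ ?_) fun hlarge ↦ ?_
  · calc (#A : ℝ) ≤ 2 ^ 40 * (2 ^ 14 * K ^ 24) ^ 8 := hcard.trans hsmall
      _ = 2 ^ 152 * K ^ 192 := by ring
  · calc (Fintype.card SL(2, F) : ℝ) ≤ 2 ^ 19 * (2 ^ 14 * K ^ 24) ^ 6 * #S := hlarge
      _ ≤ 2 ^ 19 * (2 ^ 14 * K ^ 24) ^ 6 * (4 * #A) := by gcongr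
      _ = 2 ^ 105 * K ^ 144 * #A := by ring

lemma card_field_le_of_lt (hA : A.Nonempty)
    (hcard : (Fintype.card SL(2, F) : ℝ) ≤ 2 ^ 105 * K ^ 144 * #A)
    (hlt : (Fintype.card F - 1) * #A ^ 2 < 4 * Fintype.card SL(2, F) ^ 2) :
    (Fintype.card F : ℝ) ≤ 2 ^ 213 * K ^ 288 := by
  have hA₀ : (0 : ℝ) < #A := by exact_mod_cast hA.card_pos
  have hq : (Fintype.card F : ℝ) ≤ 2 * (Fintype.card F - 1 : ℕ) := by
    have : 1 < Fintype.card F := Fintype.one_lt_card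
    exact_mod_cast (by omega : Fintype.card F ≤ 2 * (Fintype.card F - 1))
  refine le_of_mul_le_mul_right ?_ (pow_pos hA₀ 2)
  calc (Fintype.card F : ℝ) * #A ^ 2 ≤ 2 * (Fintype.card F - 1 : ℕ) * #A ^ 2 := by gcongr
    _ ≤ 2 * (4 * (Fintype.card SL(2, F) : ℝ) ^ 2) := by
      rw [mul_assoc]
      exact_mod_cast Nat.mul_le_mul_left 2 hlt.le
    _ ≤ 2 * (4 * (2 ^ 105 * K ^ 144 * #A) ^ 2) := by gcongr
    _ = 2 ^ 213 * K ^ 288 * #A ^ 2 := by ring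

/-- The exponent `1152 = 4 * 288` comes from `#A ≤ |F| ^ 4` and `|F| ≤ 2 ^ 213 * K ^ 288`. -/
lemma card_le_pow_or_card_le_two_mul_card_pow_three (hA : A.Nonempty)
    (hgen : Subgroup.closure (A : Set SL(2, F)) = ⊤) (hK₁ : 1 ≤ K) (hK : #(A ^ 3) ≤ K * #A) :
    (#A : ℝ) ≤ (4 * K) ^ 1152 ∨ Fintype.card SL(2, F) ≤ 2 * #(A ^ 3) := by
  have hA₄ : (#A : ℝ) ≤ Fintype.card F ^ 4 := by
    exact_mod_cast (Finset.card_le_univ A).trans (card_le_card_pow_four F)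
  rcases lt_or_ge (Fintype.card F) 4 with hF | hF
  · have hF' : (Fintype.card F : ℝ) ≤ 2 ^ 2 := by norm_num; exact_mod_cast hF.le
    left
    calc (#A : ℝ) ≤ (2 ^ 2) ^ 4 := hA₄.trans (by gcongr)
      _ = 2 ^ 8 * K ^ 0 := by norm_num
      _ ≤ (4 * K) ^ 1152 := two_pow_mul_pow_le hK₁ (by norm_num) (by norm_num)
  rcases le_or_gt (4 * Fintype.card SL(2, F) ^ 2) ((Fintype.card F - 1) * #A ^ 2) with hlarge | hlt
  · right
    calc Fintype.card SL(2, F) ≤ 2 * #(A ^ 2) := sq A ▸ card_le_two_mul_card_mul_self hlarge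
      _ ≤ 2 * #(A ^ 3) := Nat.mul_le_mul_left 2 (hA.card_pow_mono (by norm_num))
  left
  rcases card_le_two_pow_mul_pow_or_card_le hF hA hgen hK₁ hK with hsmall | hcard
  · exact hsmall.trans (two_pow_mul_pow_le hK₁ (by norm_num) (by norm_num))
  · calc (#A : ℝ) ≤ Fintype.card F ^ 4 := hA₄
      _ ≤ (2 ^ 213 * K ^ 288) ^ 4 := by gcongr; exact card_field_le_of_lt hA hcard hlt
      _ = 2 ^ 852 * K ^ 1152 := by rw [mul_pow, ← pow_mul, ← pow_mul]
      _ ≤ (4 * K) ^ 1152 := two_pow_mul_pow_le hK₁ (by norm_num) le_rfl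

lemma rpow_one_add_inv_le {N : ℝ} {m : ℕ} (hN : 0 < N) (hm : m ≠ 0) (hK : 0 ≤ K)
    (h : N ≤ K ^ m) : N ^ (1 + (m : ℝ)⁻¹) ≤ K * N := by
  rw [Real.rpow_add hN, Real.rpow_one, mul_comm]
  gcongr
  exact (Real.rpow_inv_le_iff_of_pos hN.le hK (by positivity)).2 (by rwa [Real.rpow_natCast])

lemma min_card_rpow_le (hgen : Subgroup.closure (A : Set SL(2, F)) = ⊤) :
    min (Fintype.card SL(2, F) : ℝ) ((#A : ℝ) ^ (1 + ((1152 : ℕ) : ℝ)⁻¹)) ≤ 4 * #(A ^ 3) := by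
  rcases A.eq_empty_or_nonempty with rfl | hA
  · refine (min_le_right _ _).trans ?_
    rw [Finset.card_empty, Nat.cast_zero, Real.zero_rpow (by positivity)]
    positivity
  have hN : (0 : ℝ) < #A := by exact_mod_cast hA.card_pos
  obtain ⟨K, hK⟩ : ∃ K : ℝ, #(A ^ 3) = K * #A := ⟨_, (div_mul_cancel₀ _ hN.ne').symm⟩
  have hK₁ : 1 ≤ K := by
    refine le_of_mul_le_mul_right ?_ hN
    rw [← hK, one_mul]
    exact_mod_cast Finset.card_le_card_pow (s := A) three_ne_zero
  rcases card_le_pow_or_card_le_two_mul_card_pow_three hA hgen hK₁ hK.le with h | h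
  · calc _ ≤ (#A : ℝ) ^ (1 + ((1152 : ℕ) : ℝ)⁻¹) := min_le_right _ _
      _ ≤ 4 * K * #A := rpow_one_add_inv_le hN (by norm_num) (by positivity) h
      _ = 4 * #(A ^ 3) := by rw [hK, mul_assoc]
  · calc _ ≤ (Fintype.card SL(2, F) : ℝ) := min_le_left _ _
      _ ≤ 4 * #(A ^ 3) := by exact_mod_cast (by omega : Fintype.card SL(2, F) ≤ 4 * #(A ^ 3))

end Growth

end Helfgott

universe u in
theorem stmt5_general :
    ∃ δ c : ℝ, 0 < δ ∧ 0 < c ∧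
      ∀ (F : Type u) [Field F] [Finite F] (A : Finset SL(2, F)),
        Subgroup.closure (A : Set SL(2, F)) = ⊤ →
        c * min (Nat.card SL(2, F) : ℝ) ((A.card : ℝ) ^ ((1 : ℝ) + δ)) ≤
          (Nat.card ((A : Set SL(2, F)) * (A : Set SL(2, F)) * (A : Set SL(2, F)) :
            Set SL(2, F)) : ℝ) := by
  refine ⟨((1152 : ℕ) : ℝ)⁻¹, 1 / 4, by positivity, by norm_num, fun F _ _ A hgen ↦ ?_⟩
  classical
  have := Fintype.ofFinite F
  have hcube : Nat.card ((A : Set SL(2, F)) * (A : Set SL(2, F)) * (A : Set SL(2, F)) :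
      Set SL(2, F)) = #(A ^ 3) := by
    rw [← Finset.coe_mul, ← Finset.coe_mul, pow_succ, sq, Nat.card_coe_set_eq,
      Set.ncard_coe_finset]
  rw [hcube, Nat.card_eq_fintype_card]
  linarith [Helfgott.min_card_rpow_le hgen]

theorem stmt5 :
    ∃ δ c : ℝ, 0 < δ ∧ 0 < c ∧
      ∀ p : ℕ, p.Prime →
        ∀ A : Finset (Matrix.SpecialLinearGroup (Fin 2) (ZMod p)),
          Subgroup.closure (A : Set (Matrix.SpecialLinearGroup (Fin 2) (ZMod p))) = ⊤ →
          c * min (Nat.card (Matrix.SpecialLinearGroup (Fin 2) (ZMod p)) : ℝ)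
              ((A.card : ℝ) ^ ((1 : ℝ) + δ)) ≤
            (Nat.card ((A : Set (Matrix.SpecialLinearGroup (Fin 2) (ZMod p))) *
              (A : Set (Matrix.SpecialLinearGroup (Fin 2) (ZMod p))) *
              (A : Set (Matrix.SpecialLinearGroup (Fin 2) (ZMod p))) :
                Set (Matrix.SpecialLinearGroup (Fin 2) (ZMod p))) : ℝ) := by
  obtain ⟨δ, c, hδ, hc, h⟩ := stmt5_general
  exact ⟨δ, c, hδ, hc, fun p hp A hA ↦ have := Fact.mk hp; h (ZMod p) A hA⟩
end

section
/- Fix an integer k ≥ 1. The number of integers 2 ≤ n ≤ X with Ω(n) = k is asymptotic, as X → ∞, to (1/(k−1)!) · X (log log X)^{k−1} / (log X). -/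
/-!
The prime number theorem comes from the Wiener–Ikehara method: the residue-free part of `-ζ'/ζ` is
continuous on the line `re s = 1`, so testing it against the tent function, whose Fourier transform
is the Fejér kernel, shows that the averages of `ψ(e^u) e^{-u}` against concentrated Fejér kernels
tend to `1`; monotonicity of `ψ` then removes the averaging.

Write `N_k` for the counting function of `{n : Ω n = k}` and `L_k` for the sum of the reciprocals.
Since `Ω` is additive, the identity `log = ζ * Λ` splits by degree in `Ω`.  Summing its part of
degree `k + 1` up to `x` gives `∑ log n = ∑ θ(x / m)` over `Ω n = k + 1` and `Ω m = k`, up to higher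
prime powers, which involve only the smaller sums `L_j` with `j < k`.  The prime number theorem
turns this into `N_{k+1}(x) log x ∼ x L_k(x)`, and partial summation returns the asymptotics of
`L_{k+1}`, which closes the induction `L_k ∼ (log log x) ^ k / k!`.
-/

section

open Filter Topology MeasureTheory Complex FourierTransform Set
open scoped Convolution

section FejerKernel

/-- The indicator function of `[-1/2, 1/2]`. -/
noncomputable def unitBox : ℝ → ℂ := (Icc (-(1 / 2)) (1 / 2)).indicator 1

/-- The tent function `max 0 (1 - |t|)`, encoded as the self-convolution of `unitBox`.  Its Fourier
transform is the Fejér kernel `sinc (π y) ^ 2`. -/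
noncomputable def tent : ℝ → ℂ := unitBox ⋆[ContinuousLinearMap.mul ℂ ℂ] unitBox

lemma integrable_unitBox : Integrable unitBox :=
  (integrable_indicator_iff measurableSet_Icc).mpr
    (integrableOn_const measure_Icc_lt_top.ne enorm_ne_top)

lemma hasCompactSupport_unitBox : HasCompactSupport unitBox :=
  .intro isCompact_Icc fun _ ht => indicator_of_notMem ht _

lemma integrable_tent : Integrable tent :=
  integrable_unitBox.integrable_convolution _ integrable_unitBox

lemma hasCompactSupport_tent : HasCompactSupport tent :=
  hasCompactSupport_unitBox.convolution _ hasCompactSupport_unitBox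

lemma fourier_unitBox (y : ℝ) : 𝓕 unitBox y = Real.sinc (Real.pi * y) := by
  have hsmul (t : ℝ) : Real.fourierChar (-(t * y)) • unitBox t =
      (Icc (-(1 / 2) : ℝ) (1 / 2)).indicator (fun t => cexp (↑(2 * Real.pi * y * t) * I)) (-t) := by
    have hmem : -t ∈ Icc (-(1 / 2) : ℝ) (1 / 2) ↔ t ∈ Icc (-(1 / 2) : ℝ) (1 / 2) := by
      rw [mem_Icc, mem_Icc, neg_le_neg_iff, neg_le, and_comm]
    by_cases ht : t ∈ Icc (-(1 / 2) : ℝ) (1 / 2)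
    · simp only [unitBox, indicator_of_mem ht, indicator_of_mem (hmem.mpr ht), Circle.smul_def,
        Real.fourierChar_apply, Pi.one_apply, smul_eq_mul, mul_one]
      ring_nf
    · rw [unitBox, indicator_of_notMem ht, indicator_of_notMem (mt hmem.mp ht), smul_zero]
  have hint : ∫ t in (-(1 / 2) : ℝ)..(1 / 2), cexp (↑(2 * Real.pi * y * t) * I) =
      Real.sinc (Real.pi * y) := by
    rcases eq_or_ne y 0 with rfl | hy
    · norm_num
    rw [intervalIntegral.integral_comp_mul_left (fun t : ℝ => cexp (t * I)) (by positivity)]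
    rw [show 2 * Real.pi * y * -(1 / 2) = -(Real.pi * y) by ring,
      show 2 * Real.pi * y * (1 / 2) = Real.pi * y by ring, integral_exp_mul_I_eq_sinc,
      Complex.real_smul]
    have hyc : (y : ℂ) ≠ 0 := ofReal_ne_zero.mpr hy
    push_cast
    field
  rw [Real.fourier_real_eq]
  simp only [hsmul]
  rw [integral_neg_eq_self (fun t => indicator _ _ t) volume, integral_indicator measurableSet_Icc,
    integral_Icc_eq_integral_Ioc, ← intervalIntegral.integral_of_le (by norm_num), hint]

lemma fourier_tent (y : ℝ) : 𝓕 tent y = ((Real.sinc (Real.pi * y) ^ 2 : ℝ) : ℂ) := by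
  rw [tent, Real.fourier_mul_convolution_eq integrable_unitBox integrable_unitBox, fourier_unitBox]
  push_cast
  ring

lemma sinc_sq_le (x : ℝ) : Real.sinc x ^ 2 ≤ 2 * (1 + x ^ 2)⁻¹ := by
  have h_one : Real.sinc x ^ 2 ≤ 1 := (sq_le_one_iff_abs_le_one _).mpr (Real.abs_sinc_le_one x)
  have h_sin : Real.sinc x ^ 2 * x ^ 2 ≤ 1 := by
    rcases eq_or_ne x 0 with rfl | hx
    · simp
    · rw [Real.sinc_of_ne_zero hx, div_pow, div_mul_cancel₀ _ (pow_ne_zero 2 hx)]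
      exact Real.sin_sq_le_one x
  rw [← div_eq_mul_inv, le_div_iff₀ (by positivity)]
  linarith

lemma integrable_sinc_sq : Integrable fun x : ℝ => Real.sinc x ^ 2 :=
  (integrable_inv_one_add_sq.const_mul 2).mono'
    (Real.continuous_sinc.pow 2).aestronglyMeasurable
    (.of_forall fun x => by simpa using sinc_sq_le x)

lemma integral_sinc_sq_pos : 0 < ∫ x : ℝ, Real.sinc x ^ 2 :=
  integral_pos_of_integrable_nonneg_nonzero (x := 0) (Real.continuous_sinc.pow 2)
    integrable_sinc_sq (fun _ => sq_nonneg _) (by simp)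
end FejerKernel

section Smoothing

lemma integral_fourier_mul_eq_integral_mul_fourier {f g : ℝ → ℂ} (hf : Integrable f)
    (hg : Integrable g) : ∫ t, 𝓕 f t * g t = ∫ u, f u * 𝓕 g u := by
  simpa using! VectorFourier.integral_fourierIntegral_smul_eq_flip (L := innerₗ ℝ)
    Real.continuous_fourierChar continuous_inner hf hg

lemma integral_damped_mul_fourier {w : ℝ → ℂ} (hw : Integrable w) {f : ℝ → ℂ} {F : ℂ → ℂ}
    (hF : ∀ s : ℂ, 0 < s.re → ∫ u in Ioi (0 : ℝ), f u * cexp (-s * u) = F s)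
    {ε : ℝ} (hε : 0 < ε) (hfε : IntegrableOn (fun u : ℝ => f u * cexp (-ε * u)) (Ioi 0)) (x : ℝ) :
    ∫ u in Ioi (0 : ℝ), f u * cexp (-ε * u) * 𝓕 w (u - x) =
      ∫ t : ℝ, Real.fourierChar (t * x) • (w t * F (ε + 2 * Real.pi * t * I)) := by
  set g : ℝ → ℂ := (Ioi (0 : ℝ)).indicator fun u => f u * cexp (-ε * u) with hg
  have hgF (t : ℝ) : 𝓕 g t = F (ε + 2 * Real.pi * t * I) := by
    rw [← hF _ (by simpa using hε), Real.fourier_real_eq, ← integral_indicator measurableSet_Ioi]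
    refine integral_congr_ae (.of_forall fun u => ?_)
    by_cases hu : u ∈ Ioi (0 : ℝ)
    · simp only [hg, indicator_of_mem hu, Circle.smul_def, Real.fourierChar_apply, smul_eq_mul]
      rw [mul_left_comm, ← Complex.exp_add]
      push_cast
      ring_nf
    · simp [hg, indicator_of_notMem hu]
  have hshift (u : ℝ) : 𝓕 (fun t => Real.fourierChar (t * x) • w t) u = 𝓕 w (u - x) := by
    simp only [Real.fourier_real_eq, smul_smul, ← AddChar.map_add_eq_mul, mul_sub, neg_sub]
    congr! 4
    ring
  have hwx : Integrable fun t => Real.fourierChar (t * x) • w t := by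
    simpa [mul_comm] using (Real.fourierIntegral_convergent_iff (-x)).mpr hw
  calc ∫ u in Ioi (0 : ℝ), f u * cexp (-ε * u) * 𝓕 w (u - x)
      = ∫ u, g u * 𝓕 (fun t => Real.fourierChar (t * x) • w t) u := by
        rw [← integral_indicator measurableSet_Ioi]
        simp only [hshift, hg, indicator_mul_left]
    _ = ∫ t, 𝓕 g t * Real.fourierChar (t * x) • w t :=
        (integral_fourier_mul_eq_integral_mul_fourier
          (hfε.integrable_indicator measurableSet_Ioi) hwx).symm
    _ = _ := by
        simp only [hgF, mul_smul_comm, mul_comm]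

lemma tendsto_integral_damped_mul {f k : ℝ → ℂ} (hfm : Measurable f) {C : ℝ}
    (hfC : ∀ u, ‖f u‖ ≤ C) (hk : Integrable k) :
    Tendsto (fun ε : ℝ => ∫ u in Ioi (0 : ℝ), f u * cexp (-ε * u) * k u) (𝓝[>] 0)
      (𝓝 (∫ u in Ioi (0 : ℝ), f u * k u)) := by
  refine tendsto_integral_filter_of_dominated_convergence (fun u => C * ‖k u‖) ?_ ?_
    (hk.norm.const_mul C).integrableOn (.of_forall fun u => ?_)
  · exact .of_forall fun ε => (Measurable.aestronglyMeasurable (by fun_prop)).mul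
      hk.aestronglyMeasurable.restrict
  · filter_upwards [self_mem_nhdsWithin] with ε (hε : 0 < ε)
    refine (ae_restrict_iff' measurableSet_Ioi).mpr (.of_forall fun u (hu : 0 < u) => ?_)
    have hexp : ‖cexp (-ε * u)‖ ≤ 1 := by
      rw [Complex.norm_exp, Real.exp_le_one_iff]
      simpa using (mul_pos hε hu).le
    rw [norm_mul, norm_mul]
    gcongr
    exact mul_le_of_le_one_right (norm_nonneg _) hexp |>.trans (hfC u)
  · have : Tendsto (fun ε : ℝ => f u * cexp (-ε * u) * k u) (𝓝 0)
        (𝓝 (f u * cexp (-(0 : ℝ) * u) * k u)) := Continuous.tendsto (by fun_prop) 0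
    simpa using this.mono_left nhdsWithin_le_nhds

lemma tendsto_integral_mul_boundary {w : ℝ → ℂ} (hw : Integrable w) (hws : HasCompactSupport w)
    {F : ℂ → ℂ} (hF : ContinuousOn F {s | 0 ≤ s.re}) (x : ℝ) :
    Tendsto (fun ε : ℝ => ∫ t : ℝ, Real.fourierChar (t * x) • (w t * F (ε + 2 * Real.pi * t * I)))
      (𝓝[>] 0) (𝓝 (∫ t : ℝ, Real.fourierChar (t * x) • (w t * F (2 * Real.pi * t * I)))) := by
  have hFc {ε : ℝ} (hε : 0 ≤ ε) : Continuous fun t : ℝ => F (ε + 2 * Real.pi * t * I) :=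
    hF.comp_continuous (by fun_prop) fun t => by simpa using hε
  obtain ⟨M, hM⟩ := ((isCompact_Icc (a := (0 : ℝ)) (b := 1)).prod hws).exists_bound_of_continuousOn
    (f := fun z : ℝ × ℝ => F (z.1 + 2 * Real.pi * z.2 * I))
    (hF.comp (by fun_prop) fun z hz => by simpa using hz.1.1)
  refine tendsto_integral_filter_of_dominated_convergence (fun t => ‖w t‖ * M) ?_ ?_
    (hw.norm.mul_const M) (.of_forall fun t => ?_)
  · filter_upwards [self_mem_nhdsWithin] with ε (hε : 0 < ε)
    have hexp : Continuous fun t : ℝ => Real.fourierChar (t * x) := by fun_prop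
    exact hexp.aestronglyMeasurable.smul
      (hw.aestronglyMeasurable.mul (hFc hε.le).aestronglyMeasurable)
  · filter_upwards [Ioo_mem_nhdsGT one_pos] with ε hε
    refine .of_forall fun t => ?_
    rw [Circle.norm_smul, norm_mul]
    by_cases ht : t ∈ tsupport w
    · gcongr
      exact hM (ε, t) ⟨⟨hε.1.le, hε.2.le⟩, ht⟩
    · simp [image_eq_zero_of_notMem_tsupport ht]
  · have hline : Tendsto (fun ε : ℝ => (ε + 2 * Real.pi * t * I : ℂ)) (𝓝[>] 0)
        (𝓝[{s | 0 ≤ s.re}] (2 * Real.pi * t * I)) := by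
      refine tendsto_nhdsWithin_iff.mpr ⟨?_, ?_⟩
      · have : Tendsto (fun ε : ℝ => (ε + 2 * Real.pi * t * I : ℂ)) (𝓝 0)
            (𝓝 ((0 : ℝ) + 2 * Real.pi * t * I)) := Continuous.tendsto (by fun_prop) 0
        simpa using this.mono_left nhdsWithin_le_nhds
      · filter_upwards [self_mem_nhdsWithin] with ε (hε : 0 < ε)
        simpa using hε.le
    exact (((hF _ (by simp)).tendsto.comp hline).const_mul _).const_smul _

lemma tendsto_setIntegral_Ioi_mul_fourier_sub {w : ℝ → ℂ} (hw : Integrable w)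
    (hws : HasCompactSupport w) (hFw : Integrable (𝓕 w)) {f : ℝ → ℂ} (hfm : Measurable f) {C : ℝ}
    (hfC : ∀ u, ‖f u‖ ≤ C) {F : ℂ → ℂ} (hF : ContinuousOn F {s | 0 ≤ s.re})
    (hfF : ∀ s : ℂ, 0 < s.re → ∫ u in Ioi (0 : ℝ), f u * cexp (-s * u) = F s) :
    Tendsto (fun x : ℝ => ∫ u in Ioi (0 : ℝ), f u * 𝓕 w (u - x)) atTop (𝓝 0) := by
  have hdamped {ε : ℝ} (hε : 0 < ε) : IntegrableOn (fun u : ℝ => f u * cexp (-ε * u)) (Ioi 0) :=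
    (integrableOn_exp_mul_complex_Ioi (by simpa using hε) 0).bdd_mul hfm.aestronglyMeasurable
      (.of_forall hfC)
  have heq (x : ℝ) : ∫ u in Ioi (0 : ℝ), f u * 𝓕 w (u - x) =
      ∫ t : ℝ, Real.fourierChar (t * x) • (w t * F (2 * Real.pi * t * I)) := by
    refine tendsto_nhds_unique (tendsto_integral_damped_mul hfm hfC (hFw.comp_sub_right x))
      ((tendsto_integral_mul_boundary hw hws hF x).congr' ?_)
    filter_upwards [self_mem_nhdsWithin] with ε (hε : 0 < ε)
    exact (integral_damped_mul_fourier hw hfF hε (hdamped hε) x).symm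
  simp only [heq]
  have hRL := (Real.tendsto_integral_exp_smul_cocompact
    fun t : ℝ => w t * F (2 * Real.pi * t * I)).comp
      (tendsto_neg_atTop_atBot.mono_right atBot_le_cocompact)
  simpa [Function.comp_def] using hRL

lemma tendsto_setIntegral_Iic_mul_comp_sub {f k : ℝ → ℂ} {C : ℝ} (hfC : ∀ u, ‖f u‖ ≤ C)
    (hk : Integrable k) :
    Tendsto (fun x : ℝ => ∫ u in Iic (0 : ℝ), f u * k (u - x)) atTop (𝓝 0) := by
  have htail : Tendsto (fun x : ℝ => C * ∫ y in Iic (-x), ‖k y‖) atTop (𝓝 0) := by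
    simpa using
      (tendsto_integral_Iic_zero (f := fun y => ‖k y‖) tendsto_neg_atTop_atBot).const_mul C
  refine squeeze_zero_norm (fun x => ?_) htail
  calc ‖∫ u in Iic (0 : ℝ), f u * k (u - x)‖
      ≤ ∫ u in Iic (0 : ℝ), C * ‖k (u - x)‖ := by
        refine norm_integral_le_of_norm_le ((hk.comp_sub_right x).norm.const_mul C).integrableOn
          (.of_forall fun u => ?_)
        rw [norm_mul]
        gcongr
        exact hfC u
    _ = C * ∫ y in Iic (-x), ‖k y‖ := by
        have h := (measurePreserving_sub_right volume x).setIntegral_preimage_emb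
          (MeasurableEquiv.subRight x).measurableEmbedding (fun y => ‖k y‖) (Iic (-x))
        rw [preimage_sub_const_Iic, neg_add_cancel] at h
        rw [integral_const_mul, h]

lemma tendsto_integral_comp_add_mul_fourier {w : ℝ → ℂ} (hw : Integrable w)
    (hws : HasCompactSupport w) (hFw : Integrable (𝓕 w)) {f : ℝ → ℂ} (hfm : Measurable f) {C : ℝ}
    (hfC : ∀ u, ‖f u‖ ≤ C) {F : ℂ → ℂ} (hF : ContinuousOn F {s | 0 ≤ s.re})
    (hfF : ∀ s : ℂ, 0 < s.re → ∫ u in Ioi (0 : ℝ), f u * cexp (-s * u) = F s) :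
    Tendsto (fun x : ℝ => ∫ y, f (x + y) * 𝓕 w y) atTop (𝓝 0) := by
  have hint (x : ℝ) : Integrable fun u => f u * 𝓕 w (u - x) :=
    (hFw.comp_sub_right x).bdd_mul hfm.aestronglyMeasurable (.of_forall hfC)
  have heq (x : ℝ) : ∫ y, f (x + y) * 𝓕 w y = (∫ u in Iic (0 : ℝ), f u * 𝓕 w (u - x)) +
      ∫ u in Ioi (0 : ℝ), f u * 𝓕 w (u - x) := by
    rw [intervalIntegral.integral_Iic_add_Ioi (hint x).integrableOn (hint x).integrableOn,
      ← integral_add_left_eq_self (fun u => f u * 𝓕 w (u - x)) x]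
    simp only [add_sub_cancel_left]
  simpa [heq] using (tendsto_setIntegral_Iic_mul_comp_sub hfC hFw).add
    (tendsto_setIntegral_Ioi_mul_fourier_sub hw hws hFw hfm hfC hF hfF)

end Smoothing

section Tauberian

lemma tendsto_integral_comp_add_mul_mul_fourier {w : ℝ → ℂ} (hw : Integrable w)
    (hws : HasCompactSupport w) (hFw : Integrable (𝓕 w)) {f : ℝ → ℂ} (hfm : Measurable f) {C : ℝ}
    (hfC : ∀ u, ‖f u‖ ≤ C) {F : ℂ → ℂ} (hF : ContinuousOn F {s | 0 ≤ s.re})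
    (hfF : ∀ s : ℂ, 0 < s.re → ∫ u in Ioi (0 : ℝ), f u * cexp (-s * u) = F s)
    {δ : ℝ} (hδ : 0 < δ) :
    Tendsto (fun x : ℝ => ∫ y, f (x + δ * y) * 𝓕 w y) atTop (𝓝 0) := by
  have hFδ : ContinuousOn (fun s => (δ : ℂ)⁻¹ * F (s / δ)) {s | 0 ≤ s.re} :=
    continuousOn_const.mul (hF.comp (by fun_prop) fun s (hs : 0 ≤ s.re) => by
      simpa using div_nonneg hs hδ.le)
  have hfFδ (s : ℂ) (hs : 0 < s.re) :
      ∫ u in Ioi (0 : ℝ), f (δ * u) * cexp (-s * u) = (δ : ℂ)⁻¹ * F (s / δ) := by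
    have hδ' : (δ : ℂ) ≠ 0 := ofReal_ne_zero.mpr hδ.ne'
    have h := integral_comp_mul_left_Ioi (fun u : ℝ => f u * cexp (-(s / δ) * u)) 0 hδ
    rw [mul_zero, hfF _ (by simpa using div_pos hs hδ), Complex.real_smul, ofReal_inv] at h
    rw [← h]
    refine integral_congr_ae (.of_forall fun u => ?_)
    push_cast
    field_simp
  have h := (tendsto_integral_comp_add_mul_fourier hw hws hFw (hfm.comp (measurable_const_mul δ))
    (fun u => hfC (δ * u)) hFδ hfFδ).comp (tendsto_id.atTop_div_const hδ)
  refine h.congr fun x => ?_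
  simp only [Function.comp_apply, id, mul_add, mul_div_cancel₀ x hδ.ne']

variable {a : ℝ → ℝ} {C : ℝ} (ha0 : ∀ u, 0 ≤ a u) (haC : ∀ u, a u ≤ C)
  (ha : Monotone fun u => a u * Real.exp u)

include ha in
lemma measurable_of_monotone_mul_exp : Measurable a := by
  have : a = fun u => a u * Real.exp u * Real.exp (-u) := by
    ext u
    rw [mul_assoc, ← Real.exp_add, add_neg_cancel, Real.exp_zero, mul_one]
  rw [this]
  exact ha.measurable.mul (Real.measurable_exp.comp measurable_neg)

include ha in
lemma le_mul_exp_of_monotone_mul_exp {u v : ℝ} (huv : u ≤ v) : a u ≤ a v * Real.exp (v - u) := by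
  rw [Real.exp_sub, ← mul_div_assoc, le_div_iff₀ (Real.exp_pos u)]
  exact ha huv

variable {K : ℝ → ℝ} (hK0 : ∀ y, 0 ≤ K y) (hKi : Integrable K)

include ha0 haC ha hKi in
lemma integrable_comp_mul_kernel (x δ : ℝ) : Integrable fun y => a (x + δ * y) * K y := by
  have := measurable_of_monotone_mul_exp ha
  refine hKi.bdd_mul (c := C) (Measurable.aestronglyMeasurable (by fun_prop))
    (.of_forall fun y => ?_)
  rw [Real.norm_of_nonneg (ha0 _)]
  exact haC _

lemma abs_sq_mul_le {h y : ℝ} (hh : 0 < h) (hy : y ∈ Icc (-h⁻¹) h⁻¹) : |h ^ 2 * y| ≤ h := by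
  rw [abs_mul, abs_of_pos (pow_pos hh 2)]
  calc h ^ 2 * |y| ≤ h ^ 2 * h⁻¹ := by gcongr; exact abs_le.mpr hy
    _ = h := by field

include ha0 haC ha hK0 hKi in
lemma mul_exp_mul_setIntegral_le_integral_comp {h : ℝ} (hh : 0 < h) (x : ℝ) :
    a (x - h) * Real.exp (-(2 * h)) * ∫ y in Icc (-h⁻¹) h⁻¹, K y ≤
      ∫ y, a (x + h ^ 2 * y) * K y := by
  have hint := integrable_comp_mul_kernel ha0 haC ha hKi x (h ^ 2)
  rw [← integral_const_mul]
  refine le_trans ?_ (setIntegral_le_integral (s := Icc (-h⁻¹) h⁻¹) hint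
    (.of_forall fun y => mul_nonneg (ha0 _) (hK0 y)))
  refine setIntegral_mono_on (hKi.integrableOn.const_mul _) hint.integrableOn measurableSet_Icc
    fun y hy => mul_le_mul_of_nonneg_right ?_ (hK0 y)
  obtain ⟨hy₁, hy₂⟩ := abs_le.mp (abs_sq_mul_le hh hy)
  rw [Real.exp_neg, ← div_eq_mul_inv, div_le_iff₀ (Real.exp_pos _)]
  refine (le_mul_exp_of_monotone_mul_exp ha (u := x - h) (v := x + h ^ 2 * y)
    (by linarith)).trans ?_
  gcongr
  · exact ha0 _
  · linarith

include ha0 haC ha hK0 hKi in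
lemma integral_comp_le_mul_exp_mul_integral_add {h : ℝ} (hh : 0 < h) (x : ℝ) :
    ∫ y, a (x + h ^ 2 * y) * K y ≤
      a (x + h) * Real.exp (2 * h) * (∫ y, K y) + C * ∫ y in (Icc (-h⁻¹) h⁻¹)ᶜ, K y := by
  have hint := integrable_comp_mul_kernel ha0 haC ha hKi x (h ^ 2)
  rw [← integral_add_compl measurableSet_Icc hint (s := Icc (-h⁻¹) h⁻¹), ← integral_const_mul,
    ← integral_const_mul]
  refine add_le_add ?_ ?_
  · refine le_trans ?_ (setIntegral_le_integral (s := Icc (-h⁻¹) h⁻¹) (hKi.const_mul _)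
      (.of_forall fun y => mul_nonneg (mul_nonneg (ha0 _) (Real.exp_pos _).le) (hK0 y)))
    refine setIntegral_mono_on hint.integrableOn (hKi.integrableOn.const_mul _) measurableSet_Icc
      fun y hy => mul_le_mul_of_nonneg_right ?_ (hK0 y)
    obtain ⟨hy₁, hy₂⟩ := abs_le.mp (abs_sq_mul_le hh hy)
    refine (le_mul_exp_of_monotone_mul_exp ha (u := x + h ^ 2 * y) (v := x + h)
      (by linarith)).trans ?_
    gcongr
    · exact ha0 _
    · linarith
  · exact setIntegral_mono_on hint.integrableOn (hKi.integrableOn.const_mul _)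
      measurableSet_Icc.compl fun y _ => mul_le_mul_of_nonneg_right (haC _) (hK0 y)

include hKi in
lemma tendsto_setIntegral_Icc_inv :
    Tendsto (fun h : ℝ => ∫ y in Icc (-h⁻¹) h⁻¹, K y) (𝓝[>] 0) (𝓝 (∫ y, K y)) :=
  ((aecover_Icc tendsto_neg_atTop_atBot tendsto_id).integral_tendsto_of_countably_generated
    hKi).comp tendsto_inv_nhdsGT_zero

include hKi in
lemma tendsto_setIntegral_compl_Icc_inv :
    Tendsto (fun h : ℝ => ∫ y in (Icc (-h⁻¹) h⁻¹)ᶜ, K y) (𝓝[>] 0) (𝓝 0) := by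
  have h := (tendsto_setIntegral_Icc_inv hKi).const_sub (∫ y, K y)
  rw [sub_self] at h
  exact h.congr fun h => (setIntegral_compl measurableSet_Icc hKi).symm

variable (hKpos : 0 < ∫ y, K y) {c : ℝ}
  (hlim : ∀ δ > 0, Tendsto (fun x => ∫ y, a (x + δ * y) * K y) atTop (𝓝 (c * ∫ y, K y)))

include ha0 haC ha hK0 hKi hKpos hlim in
lemma eventually_lt_of_tendsto_integral_comp_mul {b : ℝ} (hb : c < b) :
    ∀ᶠ x in atTop, a x < b := by
  have hscale : Tendsto (fun h : ℝ => b * Real.exp (-(2 * h)) * ∫ y in Icc (-h⁻¹) h⁻¹, K y)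
      (𝓝[>] 0) (𝓝 (b * ∫ y, K y)) := by
    have hexp : Tendsto (fun h : ℝ => b * Real.exp (-(2 * h))) (𝓝 0)
      (𝓝 (b * Real.exp (-(2 * 0)))) := Continuous.tendsto (by fun_prop) 0
    simpa using (hexp.mono_left nhdsWithin_le_nhds).mul (tendsto_setIntegral_Icc_inv hKi)
  have hlt : c * ∫ y, K y < b * ∫ y, K y := mul_lt_mul_of_pos_right hb hKpos
  obtain ⟨h, ⟨hh, hmass⟩, hpos : 0 < h⟩ := (((hscale.eventually_const_lt hlt).and
    ((tendsto_setIntegral_Icc_inv hKi).eventually_const_lt hKpos)).and self_mem_nhdsWithin).exists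
  have hshift : Tendsto (fun x : ℝ => x + h) atTop atTop :=
    tendsto_atTop_add_const_right _ _ tendsto_id
  filter_upwards [hshift.eventually ((hlim (h ^ 2) (pow_pos hpos 2)).eventually_lt_const hh)]
    with x hx
  have hle := (mul_exp_mul_setIntegral_le_integral_comp ha0 haC ha hK0 hKi hpos (x + h)).trans_lt hx
  rw [add_sub_cancel_right, mul_assoc, mul_assoc] at hle
  exact lt_of_mul_lt_mul_right hle (mul_pos (Real.exp_pos _) hmass).le

include ha0 haC ha hK0 hKi hKpos hlim in
lemma eventually_gt_of_tendsto_integral_comp_mul {b : ℝ} (hb : b < c) :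
    ∀ᶠ x in atTop, b < a x := by
  have hscale : Tendsto (fun h : ℝ => b * Real.exp (2 * h) * (∫ y, K y) +
      C * ∫ y in (Icc (-h⁻¹) h⁻¹)ᶜ, K y) (𝓝[>] 0) (𝓝 (b * ∫ y, K y)) := by
    have hexp : Tendsto (fun h : ℝ => b * Real.exp (2 * h) * ∫ y, K y) (𝓝 0)
      (𝓝 (b * Real.exp (2 * 0) * ∫ y, K y)) := Continuous.tendsto (by fun_prop) 0
    simpa using (hexp.mono_left nhdsWithin_le_nhds).add
      ((tendsto_setIntegral_compl_Icc_inv hKi).const_mul C)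
  have hlt : b * ∫ y, K y < c * ∫ y, K y := mul_lt_mul_of_pos_right hb hKpos
  obtain ⟨h, hh, hpos : 0 < h⟩ :=
    ((hscale.eventually_lt_const hlt).and self_mem_nhdsWithin).exists
  have hshift : Tendsto (fun x : ℝ => x - h) atTop atTop :=
    tendsto_atTop_add_const_right _ _ tendsto_id
  filter_upwards [hshift.eventually ((hlim (h ^ 2) (pow_pos hpos 2)).eventually_const_lt hh)]
    with x hx
  have hle := hx.trans_le
    (integral_comp_le_mul_exp_mul_integral_add ha0 haC ha hK0 hKi hpos (x - h))
  rw [sub_add_cancel, add_lt_add_iff_right, mul_assoc, mul_assoc] at hle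
  exact lt_of_mul_lt_mul_right hle (mul_pos (Real.exp_pos _) hKpos).le

include ha0 haC ha in
theorem tendsto_of_laplace_continuousOn {c : ℝ} {F : ℂ → ℂ} (hF : ContinuousOn F {s | 0 ≤ s.re})
    (haF : ∀ s : ℂ, 0 < s.re → ∫ u in Ioi (0 : ℝ), ((a u - c : ℝ) : ℂ) * cexp (-s * u) = F s) :
    Tendsto a atTop (𝓝 c) := by
  set K : ℝ → ℝ := fun y => Real.sinc (Real.pi * y) ^ 2
  have hKi : Integrable K := integrable_sinc_sq.comp_mul_left' Real.pi_ne_zero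
  have hKpos : 0 < ∫ y, K y := by
    rw [Measure.integral_comp_mul_left (fun x => Real.sinc x ^ 2)]
    exact mul_pos (abs_pos.mpr (inv_ne_zero Real.pi_ne_zero)) integral_sinc_sq_pos
  have htent : 𝓕 tent = fun y => (K y : ℂ) := funext fourier_tent
  have hm := measurable_of_monotone_mul_exp ha
  have hbound (u : ℝ) : ‖((a u - c : ℝ) : ℂ)‖ ≤ C + |c| := by
    rw [norm_real, Real.norm_eq_abs]
    exact (abs_sub _ _).trans (by rw [abs_of_nonneg (ha0 u)]; gcongr; exact haC u)
  have hlim : ∀ δ > 0, Tendsto (fun x => ∫ y, a (x + δ * y) * K y) atTop (𝓝 (c * ∫ y, K y)) := by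
    intro δ hδ
    have h := tendsto_integral_comp_add_mul_mul_fourier integrable_tent hasCompactSupport_tent
      (by rw [htent]; exact hKi.ofReal) (by fun_prop) hbound hF haF hδ
    rw [← tendsto_sub_nhds_zero_iff]
    refine ((continuous_re.tendsto 0).comp h).congr fun x => ?_
    rw [← integral_const_mul, ← integral_sub (integrable_comp_mul_kernel ha0 haC ha hKi x δ)
      (hKi.const_mul c), Function.comp_apply, ← ofReal_re (∫ y, _ - _), ← integral_complex_ofReal]
    simp only [htent, ← sub_mul, ofReal_mul]
  have hK0 (y : ℝ) : 0 ≤ K y := sq_nonneg _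
  rw [tendsto_order]
  exact ⟨fun b => eventually_gt_of_tendsto_integral_comp_mul ha0 haC ha hK0 hKi hKpos hlim,
    fun b => eventually_lt_of_tendsto_integral_comp_mul ha0 haC ha hK0 hKi hKpos hlim⟩

end Tauberian

section WienerIkehara

lemma integral_summatory_exp_mul_exp {f : ℕ → ℝ} (hf : ∀ n, 0 ≤ f n)
    (hO : (fun n => ∑ k ∈ Finset.Icc 1 n, f k) =O[atTop] fun n => (n : ℝ) ^ (1 : ℝ)) {s : ℂ}
    (hs : 0 < s.re) :
    ∫ u in Ioi (0 : ℝ), ((∑ k ∈ Finset.Icc 1 ⌊Real.exp u⌋₊, f k) / Real.exp u : ℝ) *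
      cexp (-s * u) = LSeries (fun n => f n) (1 + s) / (1 + s) := by
  have hs1 : (1 : ℝ) < (1 + s).re := by simpa using hs
  have h0 : 1 + s ≠ 0 := ne_of_apply_ne re (by simp; linarith)
  have hexp := integral_comp_exp_Ioi
    (fun t : ℝ => (∑ k ∈ Finset.Icc 1 ⌊t⌋₊, (f k : ℂ)) * t ^ (-((1 + s) + 1))) 0
  rw [LSeries_eq_mul_integral_of_nonneg f zero_le_one hs1 hO hf, mul_div_cancel_left₀ _ h0,
    ← Real.exp_zero, ← hexp]
  refine setIntegral_congr_fun measurableSet_Ioi fun u _ => ?_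
  rw [cpow_def_of_ne_zero (ofReal_ne_zero.mpr (Real.exp_pos u).ne'),
    ← ofReal_log (Real.exp_pos u).le, Real.log_exp, Complex.real_smul]
  push_cast
  rw [div_eq_mul_inv, ← Complex.exp_neg, mul_assoc, mul_left_comm (cexp u), ← Complex.exp_add,
    ← Complex.exp_add]
  ring_nf

lemma integral_sub_const_mul_exp_neg_mul {a : ℝ → ℝ} {C : ℝ} (hm : Measurable a)
    (haC : ∀ u, |a u| ≤ C) (c : ℝ) {s : ℂ} (hs : 0 < s.re) :
    ∫ u in Ioi (0 : ℝ), ((a u - c : ℝ) : ℂ) * cexp (-s * u) =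
      (∫ u in Ioi (0 : ℝ), (a u : ℂ) * cexp (-s * u)) - c / s := by
  have hs' : (-s).re < 0 := by simpa using hs
  have hexp := integrableOn_exp_mul_complex_Ioi hs' 0
  have hint : IntegrableOn (fun u => (a u : ℂ) * cexp (-s * u)) (Ioi 0) :=
    hexp.bdd_mul (c := C) (Measurable.aestronglyMeasurable (by fun_prop))
      (.of_forall fun u => by simpa using haC u)
  simp only [ofReal_sub, sub_mul]
  rw [integral_sub hint (hexp.const_mul _), integral_const_mul,
    integral_exp_mul_complex_Ioi hs']
  simp [div_eq_mul_inv]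

lemma isBigO_summatory {f : ℕ → ℝ} (hf : ∀ n, 0 ≤ f n) {C : ℝ}
    (hC : ∀ x : ℝ, 0 ≤ x → ∑ k ∈ Finset.Icc 1 ⌊x⌋₊, f k ≤ C * x) :
    (fun n => ∑ k ∈ Finset.Icc 1 n, f k) =O[atTop] fun n => (n : ℝ) ^ (1 : ℝ) := by
  refine .of_bound C (.of_forall fun n => ?_)
  have h := hC n n.cast_nonneg
  rw [Nat.floor_natCast] at h
  simpa [abs_of_nonneg (Finset.sum_nonneg fun k _ => hf k)] using h

theorem tendsto_summatory_div_of_LSeries_continuousOn {f : ℕ → ℝ} (hf : ∀ n, 0 ≤ f n) {C : ℝ}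
    (hC : ∀ x : ℝ, 0 ≤ x → ∑ k ∈ Finset.Icc 1 ⌊x⌋₊, f k ≤ C * x) {c : ℝ} {G : ℂ → ℂ}
    (hG : ContinuousOn G {s | 1 ≤ s.re})
    (hfG : ∀ s : ℂ, 1 < s.re → LSeries (fun n => f n) s = G s + c / (s - 1)) :
    Tendsto (fun x : ℝ => (∑ k ∈ Finset.Icc 1 ⌊x⌋₊, f k) / x) atTop (𝓝 c) := by
  set S : ℝ → ℝ := fun x => ∑ k ∈ Finset.Icc 1 ⌊x⌋₊, f k
  set a : ℝ → ℝ := fun u => S (Real.exp u) / Real.exp u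
  have hS0 (x : ℝ) : 0 ≤ S x := Finset.sum_nonneg fun n _ => hf n
  have ha0 (u : ℝ) : 0 ≤ a u := div_nonneg (hS0 _) (Real.exp_pos u).le
  have haC (u : ℝ) : a u ≤ C := (div_le_iff₀ (Real.exp_pos u)).mpr (hC _ (Real.exp_pos u).le)
  have hS : Monotone S := fun x y hxy => Finset.sum_le_sum_of_subset_of_nonneg
    (Finset.Icc_subset_Icc_right (Nat.floor_mono hxy)) fun n _ _ => hf n
  have ha : Monotone fun u => a u * Real.exp u := by
    simp only [a, div_mul_cancel₀ _ (Real.exp_pos _).ne']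
    exact hS.comp Real.exp_monotone
  have h0 {s : ℂ} (hs : 0 ≤ s.re) : 1 + s ≠ 0 := ne_of_apply_ne re (by simp; linarith)
  have hF : ContinuousOn (fun s => (G (1 + s) - c) / (1 + s)) {s | 0 ≤ s.re} :=
    ((hG.comp (by fun_prop) fun s hs => by simpa using hs).sub continuousOn_const).div
      (by fun_prop) fun s hs => h0 hs
  have hlaplace (s : ℂ) (hs : 0 < s.re) :
      ∫ u in Ioi (0 : ℝ), ((a u - c : ℝ) : ℂ) * cexp (-s * u) = (G (1 + s) - c) / (1 + s) := by
    have hs0 : s ≠ 0 := ne_of_apply_ne re hs.ne'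
    have h1s := h0 hs.le
    rw [integral_sub_const_mul_exp_neg_mul (measurable_of_monotone_mul_exp ha)
      (fun u => by simpa [abs_of_nonneg (ha0 u)] using haC u) c hs,
      integral_summatory_exp_mul_exp hf (isBigO_summatory hf hC) hs, hfG _ (by simpa using hs),
      add_sub_cancel_left]
    field
  refine ((tendsto_of_laplace_continuousOn ha0 haC ha hF hlaplace).comp
    Real.tendsto_log_atTop).congr' ?_
  filter_upwards [eventually_gt_atTop 0] with x hx
  simp only [Function.comp_apply, a, S, Real.exp_log hx]

end WienerIkehara

section PrimeNumberTheorem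

open ArithmeticFunction

theorem tendsto_psi_div_self : Tendsto (fun x => Chebyshev.psi x / x) atTop (𝓝 1) := by
  have hres : (fun n => ((vonMangoldt.residueClass (1 : ZMod 1) n : ℝ) : ℂ)) =
      fun n => (vonMangoldt n : ℂ) := by
    ext n
    simp [vonMangoldt.residueClass, Subsingleton.elim (n : ZMod 1) 1]
  refine tendsto_summatory_div_of_LSeries_continuousOn (f := vonMangoldt) (C := Real.log 4 + 4)
    (c := 1) (G := vonMangoldt.LFunctionResidueClassAux (1 : ZMod 1)) (fun _ => vonMangoldt_nonneg)
    (fun x hx => Chebyshev.psi_le_const_mul_self hx)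
    (vonMangoldt.continuousOn_LFunctionResidueClassAux 1) fun s hs => ?_
  rw [vonMangoldt.eqOn_LFunctionResidueClassAux isUnit_one hs, hres]
  simp

theorem tendsto_theta_div_self : Tendsto (fun x => Chebyshev.theta x / x) atTop (𝓝 1) := by
  have hsqrt : Real.sqrt =o[atTop] fun x : ℝ => x := by
    refine (Asymptotics.isLittleO_iff_tendsto fun x hx => by rw [hx, Real.sqrt_zero]).mpr ?_
    simp only [Real.sqrt_div_self']
    exact tendsto_const_nhds.div_atTop Real.tendsto_sqrt_atTop
  have h := tendsto_psi_div_self.sub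
    (Chebyshev.isBigO_psi_sub_theta_sqrt.trans_isLittleO hsqrt).tendsto_div_nhds_zero
  rw [sub_zero] at h
  refine h.congr fun x => ?_
  rw [Pi.sub_apply, ← sub_div, sub_sub_cancel]

theorem tendsto_primeCounting_mul_log_div_self :
    Tendsto (fun x : ℝ => Nat.primeCounting ⌊x⌋₊ * Real.log x / x) atTop (𝓝 1) := by
  have hlog : (fun x : ℝ => x / Real.log x ^ 2) =o[atTop] fun x => x / Real.log x := by
    have h : (fun x => (Real.log x)⁻¹) =o[atTop] fun _ => (1 : ℝ) :=
      (Asymptotics.isLittleO_one_iff ℝ).mpr Real.tendsto_log_atTop.inv_tendsto_atTop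
    refine ((Asymptotics.isBigO_refl (fun x : ℝ => x / Real.log x) _).mul_isLittleO h).congr
      (fun x => ?_) fun x => mul_one _
    rw [← div_eq_mul_inv, div_div, sq]
  have h := (Chebyshev.primeCounting_sub_theta_div_log_isBigO.trans_isLittleO
    hlog).tendsto_div_nhds_zero.add tendsto_theta_div_self
  rw [zero_add] at h
  refine h.congr' ?_
  filter_upwards [eventually_gt_atTop 1] with x hx
  have := Real.log_pos hx
  field

lemma exists_abs_theta_sub_le {ε : ℝ} (hε : 0 < ε) :
    ∃ C, ∀ y, 0 ≤ y → |Chebyshev.theta y - y| ≤ ε * y + C := by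
  obtain ⟨T, hT⟩ := eventually_atTop.mp (Metric.tendsto_nhds.mp tendsto_theta_div_self ε hε)
  refine ⟨Chebyshev.theta T + |T|, fun y hy => ?_⟩
  have hεy : 0 ≤ ε * y := by positivity
  rcases le_total T y with hTy | hyT
  · rcases hy.eq_or_lt with rfl | hy_pos
    · simp [Chebyshev.theta_nonneg, add_nonneg]
    have hdist := (hT y hTy).le
    rw [Real.dist_eq, div_sub_one hy_pos.ne', abs_div, abs_of_pos hy_pos, div_le_iff₀ hy_pos]
      at hdist
    linarith [Chebyshev.theta_nonneg T, abs_nonneg T]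
  · rw [abs_sub_le_iff]
    constructor <;>
      linarith [Chebyshev.theta_mono hyT, Chebyshev.theta_nonneg y, Chebyshev.theta_nonneg T,
        le_abs_self T, abs_nonneg T]

end PrimeNumberTheorem

end

section

open Filter Topology MeasureTheory Asymptotics ArithmeticFunction
open Finset.HasAntidiagonal (antidiagonal mem_antidiagonal)
open scoped ArithmeticFunction.Omega ArithmeticFunction.zeta

section Integration

lemma isEquivalent_integral_of_hasDerivAt {g h H : ℝ → ℝ} {a : ℝ}
    (hg : ∀ x, a ≤ x → IntervalIntegrable g volume a x)
    (hH : ∀ᶠ x in atTop, HasDerivAt H (h x) x) (hh : ∀ᶠ x in atTop, 0 ≤ h x)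
    (hH_top : Tendsto H atTop atTop) (hgh : g ~[atTop] h) :
    (fun x => ∫ t in a..x, g t) ~[atTop] H := by
  refine isLittleO_iff.mpr fun ε hε => ?_
  obtain ⟨T, hT⟩ := eventually_atTop.mp
    ((eventually_ge_atTop a).and (hH.and (hh.and (isLittleO_iff.mp hgh (half_pos hε)))))
  have haT : a ≤ T := (hT T le_rfl).1
  filter_upwards [eventually_ge_atTop T, hH_top.eventually_ge_atTop 0,
    hH_top.eventually_ge_atTop ((‖(∫ t in a..T, g t) - H T‖ - ε / 2 * H T) / (ε / 2))]
    with x hTx hHx hDx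
  have hderiv (t : ℝ) (ht : t ∈ Set.uIcc T x) : HasDerivAt H (h t) t :=
    (hT t (Set.uIcc_of_le hTx ▸ ht).1).2.1
  have hh_int : IntervalIntegrable h volume T x :=
    intervalIntegral.intervalIntegrable_deriv_of_nonneg
      (fun t ht => (hderiv t ht).continuousAt.continuousWithinAt)
      (fun t ht => hderiv t (Set.Ioo_subset_Icc_self ht))
      fun t ht => (hT t (min_eq_left hTx ▸ ht.1.le)).2.2.1
  have hg_int : IntervalIntegrable g volume T x := (hg T haT).symm.trans (hg x (haT.trans hTx))
  have hFTC : ∫ t in T..x, h t = H x - H T :=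
    intervalIntegral.integral_eq_sub_of_hasDerivAt hderiv hh_int
  have hsplit : (∫ t in a..x, g t) - H x =
      ((∫ t in a..T, g t) - H T) + ∫ t in T..x, (g t - h t) := by
    rw [intervalIntegral.integral_sub hg_int hh_int, hFTC,
      ← intervalIntegral.integral_add_adjacent_intervals (hg T haT) hg_int]
    ring
  have htail : ‖∫ t in T..x, (g t - h t)‖ ≤ ε / 2 * (H x - H T) := by
    rw [← hFTC, ← intervalIntegral.integral_const_mul]
    refine intervalIntegral.norm_integral_le_of_norm_le hTx (.of_forall fun t ht => ?_)
      (hh_int.const_mul _)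
    obtain ⟨-, -, hnonneg, hle⟩ := hT t ht.1.le
    rwa [Real.norm_of_nonneg hnonneg] at hle
  have hhead : ‖(∫ t in a..T, g t) - H T‖ - ε / 2 * H T ≤ ε / 2 * H x :=
    (div_le_iff₀' (half_pos hε)).mp hDx
  rw [Pi.sub_apply, hsplit, Real.norm_of_nonneg hHx]
  linarith [norm_add_le ((∫ t in a..T, g t) - H T) (∫ t in T..x, (g t - h t))]

lemma sum_div_eq_add_integral {c : ℕ → ℝ} (hc : c 0 = 0) {x : ℝ} (hx : 1 ≤ x) :
    ∑ n ∈ Finset.Ioc 0 ⌊x⌋₊, c n / n = (∑ n ∈ Finset.Ioc 0 ⌊x⌋₊, c n) / x +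
      ∫ t in (1 : ℝ)..x, (∑ n ∈ Finset.Ioc 0 ⌊t⌋₊, c n) / t ^ 2 := by
  have hIcc (f : ℕ → ℝ) (hf : f 0 = 0) (N : ℕ) :
      ∑ n ∈ Finset.Icc 0 N, f n = ∑ n ∈ Finset.Ioc 0 N, f n := by
    rw [Finset.Icc_eq_cons_Ioc N.zero_le, Finset.sum_cons, hf, zero_add]
  have hne (t : ℝ) (ht : t ∈ Set.Icc 1 x) : t ≠ 0 := (zero_lt_one.trans_le ht.1).ne'
  have habel := sum_mul_eq_sub_integral_mul₀ (f := fun t : ℝ => t⁻¹) c hc x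
    (fun t ht => differentiableAt_inv (hne t ht)) (by
      rw [deriv_inv']
      exact ContinuousOn.integrableOn_Icc
        ((continuousOn_id.pow 2).inv₀ fun t ht => pow_ne_zero 2 (hne t ht)).neg)
  simp only [hIcc c hc, hIcc (fun n => (n : ℝ)⁻¹ * c n) (by simp only [hc, mul_zero]), deriv_inv',
    neg_mul, integral_neg, sub_neg_eq_add] at habel
  simpa only [div_eq_inv_mul, intervalIntegral.integral_of_le hx] using habel

lemma one_le_div_of_mem_Ioc_floor {x : ℝ} {n : ℕ} (hn : n ∈ Finset.Ioc 0 ⌊x⌋₊) : 1 ≤ x / n := by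
  obtain ⟨hn_pos, hn_le⟩ := Finset.mem_Ioc.mp hn
  exact (one_le_div (Nat.cast_pos.mpr hn_pos)).mpr ((Nat.le_floor_iff' hn_pos.ne').mp hn_le)

lemma sum_log_div_le {x : ℝ} (hx : 0 ≤ x) {S : Finset ℕ} (hS : S ⊆ Finset.Ioc 0 ⌊x⌋₊) :
    ∑ n ∈ S, Real.log (x / n) ≤ x := by
  have hfact : ∏ n ∈ Finset.Ioc 0 ⌊x⌋₊, (n : ℝ) = (⌊x⌋₊.factorial : ℝ) := by
    rw [← Finset.prod_Ico_id_eq_factorial, Nat.cast_prod]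
    rfl
  calc ∑ n ∈ S, Real.log (x / n)
      ≤ ∑ n ∈ Finset.Ioc 0 ⌊x⌋₊, Real.log (x / n) :=
        Finset.sum_le_sum_of_subset_of_nonneg hS fun n hn _ =>
          Real.log_nonneg (one_le_div_of_mem_Ioc_floor hn)
    _ = Real.log (x ^ ⌊x⌋₊ / ⌊x⌋₊.factorial) := by
        rw [← Real.log_prod fun n hn => (zero_lt_one.trans_le (one_le_div_of_mem_Ioc_floor hn)).ne',
          Finset.prod_div_distrib, hfact, Finset.prod_const, Nat.card_Ioc, Nat.sub_zero]
    _ ≤ x := by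
        rcases hx.eq_or_lt with rfl | hx
        · simp
        rw [Real.log_le_iff_le_exp (by positivity)]
        exact Real.pow_div_factorial_le_exp x hx.le _

end Integration

section AlmostPrimes

/-- The part of an arithmetic function supported on the integers with exactly `k` prime factors,
counted with multiplicity.  As `Ω` is completely additive, Dirichlet convolution is graded by `k`;
the value at `0` is `0` in every degree. -/
def omegaPart {R : Type*} [Zero R] (f : ArithmeticFunction R) (k : ℕ) : ArithmeticFunction R where
  toFun n := if Ω n = k then f n else 0
  map_zero' := by rw [f.map_zero, ite_self]

/-- The positive integers up to `x` with exactly `k` prime factors, counted with multiplicity. -/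
noncomputable def almostPrimesLE (k : ℕ) (x : ℝ) : Finset ℕ :=
  (Finset.Ioc 0 ⌊x⌋₊).filter fun n => Ω n = k

/-- The sum of the reciprocals of the positive integers up to `x` with exactly `k` prime factors. -/
noncomputable def almostPrimeHarmonicSum (k : ℕ) (x : ℝ) : ℝ :=
  ∑ n ∈ almostPrimesLE k x, (n : ℝ)⁻¹

lemma omegaPart_mul_apply {R : Type*} [Semiring R] (f g : ArithmeticFunction R) (k n : ℕ) :
    omegaPart (f * g) k n =
      ∑ ij ∈ antidiagonal k, (omegaPart f ij.1 * omegaPart g ij.2) n := by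
  have hdeg (de : ℕ × ℕ) (hde : de ∈ n.divisorsAntidiagonal) :
      ∑ ij ∈ antidiagonal k, omegaPart f ij.1 de.1 * omegaPart g ij.2 de.2 =
        if Ω n = k then f de.1 * g de.2 else 0 := by
    obtain ⟨rfl, hn⟩ := Nat.mem_divisorsAntidiagonal.mp hde
    rw [cardFactors_mul (left_ne_zero_of_mul hn) (right_ne_zero_of_mul hn)]
    simp only [omegaPart, coe_mk, ite_zero_mul_ite_zero, ← Prod.mk_inj, Prod.mk.eta,
      Finset.sum_ite_eq, mem_antidiagonal]
  simp only [mul_apply]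
  rw [Finset.sum_comm, Finset.sum_congr rfl hdeg, Finset.sum_ite_irrel, Finset.sum_const_zero]
  rfl

lemma sum_omegaPart {R : Type*} [AddCommMonoid R] (f : ArithmeticFunction R) (k : ℕ) (x : ℝ) :
    ∑ n ∈ Finset.Ioc 0 ⌊x⌋₊, omegaPart f k n = ∑ n ∈ almostPrimesLE k x, f n :=
  (Finset.sum_filter _ _).symm

lemma sum_almostPrimesLE_mul {R : Type*} [Semiring R] (f g : ArithmeticFunction R) (k : ℕ)
    (x : ℝ) :
    ∑ n ∈ almostPrimesLE k x, (f * g) n = ∑ ij ∈ antidiagonal k,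
      ∑ m ∈ almostPrimesLE ij.1 x, f m * ∑ d ∈ almostPrimesLE ij.2 (x / m), g d := by
  simp only [← sum_omegaPart, omegaPart_mul_apply]
  rw [Finset.sum_comm]
  refine Finset.sum_congr rfl fun ij _ => ?_
  simp only [sum_Ioc_mul_eq_sum_sum, Nat.floor_div_natCast]
  rw [almostPrimesLE, Finset.sum_filter]
  refine Finset.sum_congr rfl fun m _ => ?_
  simp only [omegaPart, coe_mk, ite_zero_mul]

lemma mem_almostPrimesLE {k n : ℕ} {x : ℝ} :
    n ∈ almostPrimesLE k x ↔ (0 < n ∧ n ≤ ⌊x⌋₊) ∧ Ω n = k := by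
  rw [almostPrimesLE, Finset.mem_filter, Finset.mem_Ioc]

lemma card_almostPrimesLE_le (k : ℕ) {x : ℝ} (hx : 0 ≤ x) : (almostPrimesLE k x).card ≤ x := by
  calc ((almostPrimesLE k x).card : ℝ) ≤ (Finset.Ioc 0 ⌊x⌋₊).card :=
        Nat.cast_le.mpr (Finset.card_filter_le _ _)
    _ ≤ x := by simpa only [Nat.card_Ioc, Nat.sub_zero] using Nat.floor_le hx

lemma almostPrimeHarmonicSum_nonneg (k : ℕ) (x : ℝ) : 0 ≤ almostPrimeHarmonicSum k x :=
  Finset.sum_nonneg fun _ _ => by positivity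

lemma almostPrimesLE_zero {x : ℝ} (hx : 1 ≤ x) : almostPrimesLE 0 x = {1} := by
  ext n
  rw [mem_almostPrimesLE, cardFactors_eq_zero_iff_eq_zero_or_one, Finset.mem_singleton]
  have := (Nat.one_le_floor_iff x).mpr hx
  lia

lemma almostPrimesLE_one (x : ℝ) : almostPrimesLE 1 x = Nat.primesLE ⌊x⌋₊ := by
  ext n
  rw [mem_almostPrimesLE, cardFactors_eq_one_iff_prime, Nat.mem_primesLE]
  exact and_congr_left fun hn => and_iff_right hn.pos

lemma sum_vonMangoldt_almostPrimesLE_zero (x : ℝ) : ∑ n ∈ almostPrimesLE 0 x, Λ n = 0 :=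
  Finset.sum_eq_zero fun n hn => by
    rcases cardFactors_eq_zero_iff_eq_zero_or_one.mp (mem_almostPrimesLE.mp hn).2 with rfl | rfl
    · exact ArithmeticFunction.map_zero
    · exact vonMangoldt_apply_one

lemma sum_vonMangoldt_almostPrimesLE_one (x : ℝ) :
    ∑ n ∈ almostPrimesLE 1 x, Λ n = Chebyshev.theta x := by
  rw [almostPrimesLE_one, Chebyshev.theta_eq_sum_primesLE]
  exact Finset.sum_congr rfl fun p hp => vonMangoldt_apply_prime (Nat.prime_of_mem_primesLE hp)

lemma sum_vonMangoldt_almostPrimesLE_le (k : ℕ) {x : ℝ} (hx : 0 ≤ x) :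
    ∑ n ∈ almostPrimesLE k x, Λ n ≤ (Real.log 4 + 4) * x :=
  (Finset.sum_le_sum_of_subset_of_nonneg (Finset.filter_subset _ _)
    fun _ _ _ => vonMangoldt_nonneg).trans (Chebyshev.psi_le_const_mul_self hx)

lemma card_almostPrimesLE_one (x : ℝ) : (almostPrimesLE 1 x).card = Nat.primeCounting ⌊x⌋₊ := by
  rw [almostPrimesLE_one, Nat.primesLE_card_eq_primeCounting]

lemma sum_log_almostPrimesLE_sub_sum_theta_mem_Icc (k : ℕ) {x : ℝ} (hx : 0 ≤ x) :
    ∑ n ∈ almostPrimesLE (k + 1) x, Real.log n -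
        ∑ m ∈ almostPrimesLE k x, Chebyshev.theta (x / m) ∈
      Set.Icc 0 ((Real.log 4 + 4) * x * ∑ j ∈ Finset.range k, almostPrimeHarmonicSum j x) := by
  have hgrade : ∑ n ∈ almostPrimesLE (k + 1) x, Real.log n =
      (∑ j ∈ Finset.range k, ∑ m ∈ almostPrimesLE j x,
        ∑ d ∈ almostPrimesLE (k + 1 - j) (x / m), Λ d) +
      ∑ m ∈ almostPrimesLE k x, Chebyshev.theta (x / m) := by
    have hone (j : ℕ) (F : ℕ → ℝ) :
        ∑ m ∈ almostPrimesLE j x, ((ζ : ArithmeticFunction ℝ) m) * F m =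
          ∑ m ∈ almostPrimesLE j x, F m := by
      refine Finset.sum_congr rfl fun m hm => ?_
      rw [natCoe_apply, zeta_apply_ne (mem_almostPrimesLE.mp hm).1.1.ne', Nat.cast_one, one_mul]
    have h := sum_almostPrimesLE_mul (ζ : ArithmeticFunction ℝ) Λ (k + 1) x
    simp only [zeta_mul_vonMangoldt, hone, log_apply] at h
    rw [h, Finset.Nat.sum_antidiagonal_eq_sum_range_succ_mk, Finset.sum_range_succ,
      Finset.sum_range_succ]
    simp only [Nat.sub_self, sum_vonMangoldt_almostPrimesLE_zero, Finset.sum_const_zero, add_zero,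
      Nat.add_sub_cancel_left, sum_vonMangoldt_almostPrimesLE_one]
  rw [hgrade, add_sub_cancel_right, Finset.mul_sum]
  refine ⟨Finset.sum_nonneg fun j _ => Finset.sum_nonneg fun m _ =>
    Finset.sum_nonneg fun _ _ => vonMangoldt_nonneg, Finset.sum_le_sum fun j _ => ?_⟩
  rw [almostPrimeHarmonicSum, Finset.mul_sum]
  refine Finset.sum_le_sum fun m _ => ?_
  rw [mul_assoc, ← div_eq_mul_inv]
  exact sum_vonMangoldt_almostPrimesLE_le _ (by positivity)

end AlmostPrimes

section LogLog

/-- The main term `(log log x) ^ k / k!` of the sum of the reciprocals of the integers up to `x`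
with exactly `k` prime factors. -/
noncomputable def logLogTerm (k : ℕ) (x : ℝ) : ℝ := Real.log (Real.log x) ^ k / k.factorial

lemma logLogTerm_zero (x : ℝ) : logLogTerm 0 x = 1 := by
  rw [logLogTerm, pow_zero, Nat.factorial_zero, Nat.cast_one, div_one]

lemma tendsto_log_log_atTop : Tendsto (fun x => Real.log (Real.log x)) atTop atTop :=
  Real.tendsto_log_atTop.comp Real.tendsto_log_atTop

lemma tendsto_logLogTerm_atTop {k : ℕ} (hk : k ≠ 0) : Tendsto (logLogTerm k) atTop atTop :=
  ((tendsto_pow_atTop hk).comp tendsto_log_log_atTop).atTop_div_const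
    (Nat.cast_pos.mpr k.factorial_pos)

lemma eventually_logLogTerm_pos (k : ℕ) : ∀ᶠ x in atTop, 0 < logLogTerm k x := by
  filter_upwards [tendsto_log_log_atTop.eventually_gt_atTop 0] with x hx
  rw [logLogTerm]
  positivity

lemma logLogTerm_isLittleO {j k : ℕ} (hjk : j < k) : logLogTerm j =o[atTop] logLogTerm k := by
  have hpow := (isLittleO_pow_pow_atTop_of_lt (𝕜 := ℝ) hjk).comp_tendsto tendsto_log_log_atTop
  exact ((hpow.const_mul_left (j.factorial : ℝ)⁻¹).const_mul_right
    (inv_ne_zero (Nat.cast_ne_zero.mpr k.factorial_ne_zero))).congr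
    (fun _ => (div_eq_inv_mul _ _).symm) fun _ => (div_eq_inv_mul _ _).symm

lemma hasDerivAt_logLogTerm (k : ℕ) {x : ℝ} (hx : 1 < x) :
    HasDerivAt (logLogTerm (k + 1)) (logLogTerm k x / (x * Real.log x)) x := by
  have hlog := Real.log_pos hx
  refine ((((Real.hasDerivAt_log (by positivity)).log hlog.ne').pow (k + 1)).div_const
    ((k + 1).factorial : ℝ)).congr_deriv ?_
  rw [logLogTerm, Nat.factorial_succ, Nat.add_sub_cancel]
  push_cast
  field

end LogLog

section Landau

lemma card_mul_log_sub_sum_log_isBigO (k : ℕ) :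
    (fun x => (almostPrimesLE k x).card * Real.log x - ∑ n ∈ almostPrimesLE k x, Real.log n)
      =O[atTop] fun x => x := by
  refine .of_bound' ?_
  filter_upwards [eventually_gt_atTop 0] with x hx
  have hsum : (almostPrimesLE k x).card * Real.log x - ∑ n ∈ almostPrimesLE k x, Real.log n =
      ∑ n ∈ almostPrimesLE k x, Real.log (x / n) := by
    rw [← nsmul_eq_mul, ← Finset.sum_const, ← Finset.sum_sub_distrib]
    refine Finset.sum_congr rfl fun n hn => (Real.log_div hx.ne' ?_).symm
    exact Nat.cast_ne_zero.mpr (mem_almostPrimesLE.mp hn).1.1.ne'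
  rw [hsum, Real.norm_of_nonneg, Real.norm_of_nonneg hx.le]
  · exact sum_log_div_le hx.le (Finset.filter_subset _ _)
  · refine Finset.sum_nonneg fun n hn => Real.log_nonneg ?_
    exact one_le_div_of_mem_Ioc_floor (Finset.mem_filter.mp hn).1

lemma sum_log_sub_sum_theta_isBigO (k : ℕ) :
    (fun x => ∑ n ∈ almostPrimesLE (k + 1) x, Real.log n -
      ∑ m ∈ almostPrimesLE k x, Chebyshev.theta (x / m))
      =O[atTop] fun x => x * ∑ j ∈ Finset.range k, almostPrimeHarmonicSum j x := by
  refine .of_bound (Real.log 4 + 4) ?_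
  filter_upwards [eventually_ge_atTop 0] with x hx
  have hmem := sum_log_almostPrimesLE_sub_sum_theta_mem_Icc k hx
  rw [Real.norm_of_nonneg hmem.1, Real.norm_of_nonneg, ← mul_assoc]
  · exact hmem.2
  · exact mul_nonneg hx (Finset.sum_nonneg fun j _ => almostPrimeHarmonicSum_nonneg j x)

lemma sum_theta_sub_isLittleO {k : ℕ} (hk : Tendsto (almostPrimeHarmonicSum k) atTop atTop) :
    (fun x => ∑ m ∈ almostPrimesLE k x, Chebyshev.theta (x / m) - x * almostPrimeHarmonicSum k x)
      =o[atTop] fun x => x * almostPrimeHarmonicSum k x := by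
  refine isLittleO_iff.mpr fun ε hε => ?_
  obtain ⟨C, hC⟩ := exists_abs_theta_sub_le (half_pos hε)
  have hC_nonneg : 0 ≤ C := by simpa using hC 0 le_rfl
  filter_upwards [eventually_ge_atTop 0, hk.eventually_ge_atTop (C / (ε / 2))] with x hx hCx
  have hCx : C ≤ ε / 2 * almostPrimeHarmonicSum k x := (div_le_iff₀' (half_pos hε)).mp hCx
  have hxL : x * almostPrimeHarmonicSum k x = ∑ m ∈ almostPrimesLE k x, x / m := by
    simp only [almostPrimeHarmonicSum, Finset.mul_sum, div_eq_mul_inv]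
  rw [Real.norm_of_nonneg (mul_nonneg hx (almostPrimeHarmonicSum_nonneg k x))]
  calc ‖∑ m ∈ almostPrimesLE k x, Chebyshev.theta (x / m) - x * almostPrimeHarmonicSum k x‖
      ≤ ∑ m ∈ almostPrimesLE k x, (ε / 2 * (x / m) + C) := by
        rw [hxL, ← Finset.sum_sub_distrib]
        exact norm_sum_le_of_le _ fun m _ => hC _ (by positivity)
    _ = ε / 2 * (x * almostPrimeHarmonicSum k x) + (almostPrimesLE k x).card * C := by
        rw [Finset.sum_add_distrib, ← Finset.mul_sum, hxL, Finset.sum_const, nsmul_eq_mul]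
    _ ≤ ε / 2 * (x * almostPrimeHarmonicSum k x) +
          x * (ε / 2 * almostPrimeHarmonicSum k x) := by
        gcongr
        exact card_almostPrimesLE_le k hx
    _ = ε * (x * almostPrimeHarmonicSum k x) := by ring

lemma card_mul_log_isEquivalent_of_ne_zero {k : ℕ} (hk : k ≠ 0)
    (hL : ∀ j ≤ k, almostPrimeHarmonicSum j ~[atTop] logLogTerm j) :
    (fun x => (almostPrimesLE (k + 1) x).card * Real.log x)
      ~[atTop] fun x => x * logLogTerm k x := by
  have hx : (fun x : ℝ => x) =O[atTop] fun x => x := isBigO_refl _ _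
  have hone : (fun _ => (1 : ℝ)) =o[atTop] logLogTerm k :=
    (logLogTerm_isLittleO hk.bot_lt).congr_left logLogTerm_zero
  have hlower : (fun x => ∑ j ∈ Finset.range k, almostPrimeHarmonicSum j x)
      =o[atTop] logLogTerm k :=
    (IsLittleO.sum fun j hj => (hL j (Finset.mem_range.mp hj).le).isBigO.trans_isLittleO
      (logLogTerm_isLittleO (Finset.mem_range.mp hj))).congr_left fun x => Finset.sum_apply _ _ _
  have hmain : (fun x => x * almostPrimeHarmonicSum k x) ~[atTop] fun x => x * logLogTerm k x :=
    IsEquivalent.refl.mul (hL k le_rfl)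
  have hsum_log : (fun x => (almostPrimesLE (k + 1) x).card * Real.log x -
      ∑ n ∈ almostPrimesLE (k + 1) x, Real.log n) =o[atTop] fun x => x * logLogTerm k x :=
    (card_mul_log_sub_sum_log_isBigO (k + 1)).trans_isLittleO
      ((hx.mul_isLittleO hone).congr_left fun x => mul_one x)
  have hsum_theta := (sum_log_sub_sum_theta_isBigO k).trans_isLittleO (hx.mul_isLittleO hlower)
  have htheta := (sum_theta_sub_isLittleO ((hL k le_rfl).symm.tendsto_atTop
    (tendsto_logLogTerm_atTop hk))).trans_isBigO hmain.isBigO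
  refine (hmain.add_isLittleO ((hsum_log.add hsum_theta).add htheta)).congr_left
    (.of_forall fun x => ?_)
  simp only [Pi.add_apply]
  ring

theorem card_mul_log_isEquivalent {k : ℕ}
    (hL : ∀ j ≤ k, almostPrimeHarmonicSum j ~[atTop] logLogTerm j) :
    (fun x => (almostPrimesLE (k + 1) x).card * Real.log x)
      ~[atTop] fun x => x * logLogTerm k x := by
  rcases eq_or_ne k 0 with rfl | hk
  · simp only [zero_add, card_almostPrimesLE_one, logLogTerm_zero, mul_one]
    exact (isEquivalent_iff_tendsto_one (eventually_ne_atTop 0)).mpr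
      tendsto_primeCounting_mul_log_div_self
  · exact card_mul_log_isEquivalent_of_ne_zero hk hL

lemma almostPrimeHarmonicSum_succ_eq (k : ℕ) {x : ℝ} (hx : 1 ≤ x) :
    almostPrimeHarmonicSum (k + 1) x = (almostPrimesLE (k + 1) x).card / x +
      ∫ t in (1 : ℝ)..x, (almostPrimesLE (k + 1) t).card / t ^ 2 := by
  have habel := sum_div_eq_add_integral (c := fun n => if Ω n = k + 1 then 1 else 0) (by simp) hx
  simpa only [almostPrimeHarmonicSum, almostPrimesLE, Finset.sum_filter, ite_div, zero_div,
    one_div, Finset.sum_boole] using habel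

lemma intervalIntegrable_card_almostPrimesLE_div_sq (k : ℕ) {x : ℝ} (hx : 1 ≤ x) :
    IntervalIntegrable (fun t => (almostPrimesLE k t).card / t ^ 2) volume 1 x := by
  have hmono : Monotone fun t => ((almostPrimesLE k t).card : ℝ) := fun s t hst =>
    Nat.cast_le.mpr (Finset.card_le_card (Finset.filter_subset_filter _
      (Finset.Ioc_subset_Ioc_right (Nat.floor_le_floor hst))))
  simp only [div_eq_mul_inv]
  refine hmono.intervalIntegrable.mul_continuousOn ((continuousOn_id.pow 2).inv₀ fun t ht => ?_)
  rw [Set.uIcc_of_le hx] at ht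
  exact pow_ne_zero 2 (zero_lt_one.trans_le ht.1).ne'

theorem almostPrimeHarmonicSum_succ_isEquivalent {k : ℕ}
    (hN : (fun x => (almostPrimesLE (k + 1) x).card * Real.log x)
      ~[atTop] fun x => x * logLogTerm k x) :
    almostPrimeHarmonicSum (k + 1) ~[atTop] logLogTerm (k + 1) := by
  have hdensity : (fun t => (almostPrimesLE (k + 1) t).card / t ^ 2)
      ~[atTop] fun t => logLogTerm k t / (t * Real.log t) := by
    refine IsEquivalent.congr_right (IsEquivalent.congr_left
      (hN.div (IsEquivalent.refl (u := fun t => t ^ 2 * Real.log t))) ?_) ?_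
    all_goals
      filter_upwards [eventually_gt_atTop 1] with t ht
      have := Real.log_pos ht
      simp only [Pi.div_apply]
      field
  have hintegral := isEquivalent_integral_of_hasDerivAt
    (fun x hx => intervalIntegrable_card_almostPrimesLE_div_sq (k + 1) hx)
    ((eventually_gt_atTop 1).mono fun x hx => hasDerivAt_logLogTerm k hx)
    (by
      filter_upwards [eventually_logLogTerm_pos k, eventually_gt_atTop 1] with x hk hx
      have := Real.log_pos hx
      positivity)
    (tendsto_logLogTerm_atTop k.succ_ne_zero) hdensity
  have hboundary : (fun x => (almostPrimesLE (k + 1) x).card / x) =o[atTop] logLogTerm (k + 1) := by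
    have hbdd : (fun x => (almostPrimesLE (k + 1) x).card / x) =O[atTop] fun _ => (1 : ℝ) := by
      refine .of_bound' ?_
      filter_upwards [eventually_gt_atTop 0] with x hx
      rw [Real.norm_of_nonneg (by positivity), norm_one, div_le_one hx]
      exact card_almostPrimesLE_le _ hx.le
    exact hbdd.trans_isLittleO
      ((logLogTerm_isLittleO k.succ_pos).congr_left logLogTerm_zero)
  refine (hintegral.add_isLittleO hboundary).congr_left ?_
  filter_upwards [eventually_ge_atTop 1] with x hx
  rw [almostPrimeHarmonicSum_succ_eq k hx, Pi.add_apply, add_comm]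

theorem almostPrimeHarmonicSum_isEquivalent (k : ℕ) :
    almostPrimeHarmonicSum k ~[atTop] logLogTerm k := by
  induction k using Nat.strong_induction_on with
  | _ k ih =>
    cases k with
    | zero =>
      refine IsEquivalent.refl.congr_left ?_
      filter_upwards [eventually_ge_atTop 1] with x hx
      rw [logLogTerm_zero, almostPrimeHarmonicSum, almostPrimesLE_zero hx, Finset.sum_singleton,
        Nat.cast_one, inv_one]
    | succ k =>
      exact almostPrimeHarmonicSum_succ_isEquivalent
        (card_mul_log_isEquivalent fun j hj => ih j (Nat.lt_succ_of_le hj))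

theorem tendsto_card_almostPrimesLE_div (k : ℕ) :
    Tendsto (fun x => (almostPrimesLE (k + 1) x).card / (x * logLogTerm k x / Real.log x))
      atTop (𝓝 1) := by
  have hequiv := card_mul_log_isEquivalent fun j (_ : j ≤ k) =>
    almostPrimeHarmonicSum_isEquivalent j
  have hne : ∀ᶠ x in atTop, x * logLogTerm k x ≠ 0 := by
    filter_upwards [eventually_gt_atTop 0, eventually_logLogTerm_pos k] with x hx hk
    positivity
  refine ((isEquivalent_iff_tendsto_one hne).mp hequiv).congr fun x => ?_
  rw [Pi.div_apply, div_div_eq_mul_div]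

lemma filter_Icc_two_eq_almostPrimesLE {k : ℕ} (hk : k ≠ 0) (x : ℝ) :
    (Finset.Icc 2 ⌊x⌋₊).filter (fun n => Ω n = k) = almostPrimesLE k x := by
  ext n
  rw [mem_almostPrimesLE, Finset.mem_filter, Finset.mem_Icc]
  have hn : n = 1 → Ω n = 0 := fun h => h ▸ cardFactors_one
  lia

end Landau

end

theorem stmt10 (k : ℕ) (hk : 1 ≤ k) :
    Filter.Tendsto
      (fun X : ℝ =>
        (((Finset.Icc 2 ⌊X⌋₊).filter
            (fun n => ArithmeticFunction.cardFactors n = k)).card : ℝ) /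
          ((1 / (Nat.factorial (k - 1) : ℝ)) * X *
            Real.log (Real.log X) ^ (k - 1) / Real.log X))
      Filter.atTop (nhds 1) := by
  obtain ⟨k, rfl⟩ := Nat.exists_eq_succ_of_ne_zero (Nat.one_le_iff_ne_zero.mp hk)
  refine (tendsto_card_almostPrimesLE_div k).congr fun x => ?_
  rw [filter_Icc_two_eq_almostPrimesLE k.succ_ne_zero, logLogTerm, Nat.succ_sub_one]
  ring
end
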